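/- arXiv:1204.5154 — 5 statements merged into one kernel-verified Lean document; each statement's English description precedes it below -/
import Mathlib

section
/- Let (U_N)_{N≥1} satisfy Hypothesis (Γ) for a function Γ with inf_{n≥1} Γ(n)^{1/n} > 0 (where Γ(n) denotes the value of Γ at the single-entry tuple (n)). Let (γ,σ) be a Lévy pair with σ compactly supported, σ ≠ 0, and with all cumulants nonnegative: c_1 = γ + ∫ t dσ(t) ≥ 0 and c_n = ∫ t^{n−2}(1+t²) dσ(t) ≥ 0 for all n ≥ 2. For each N let M_N be an N×N random Hermitian matrix whose law satisfies E[exp(i·Tr(A·M_N))] = exp( N · E[ Ψ_{γ,σ}( (U_N)* A U_N / N ) ] ) for every Hermitian A. Then the weak limit Λ of the mean spectral distributions of M_N has unbounded support. -/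
/-!
Suppose that the limit `Λ` is carried by `[-ρ, ρ]`. Two facts about the diagonal entries of `M_N`
contradict each other.

*The diagonal is asymptotically confined.* In an eigenbasis, `(M i i)` is an average of the
eigenvalues with weights `|V i k|²`, and these weights form a doubly stochastic matrix. By convexity
of `x ↦ max (|x| - (ρ + 1)) 0`, the total excess of the diagonal over `ρ + 1` is at most that of
the spectrum (`sum_diag_excess_le`). The mean spectral distributions converge to `Λ`, which does
not charge the complement of `[-ρ, ρ]`, and `E[Tr M²] / N` stays bounded (`entry_bound`), so that
the excess of the spectrum is uniformly integrable and its normalized mean tends to `0`. Hence some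
diagonal entry `D_N` of each matrix satisfies `E[max (|D_N| - (ρ + 1)) 0] → 0` (`exists_confined`).
The bound on `E[Tr M²] / N` comes from the characteristic functions of the linear forms of each
entry (`entry_law`), a second moment being read off the behaviour at `0` of a characteristic
function (`second_moment_of_law`), together with the limits and bounds in Hypothesis (Γ).

*The diagonal is asymptotically infinitely divisible.* The characteristic function of a diagonal
entry is `exp (N E[Ψ(s |U_i|² / N)])`. Expanding `Ψ` with the Taylor remainder of
`levyExponent_rem` and using `E[|U_i|^(2k)] / N^(k-1) → Γ(k)`, it converges to
`exp (∑ c_k Γ(k) (is)^k / k!)` (`tendsto_exponent`). For `k ≥ 2` the bounds `|c_k| ≤ c_2 R^(k-2)` and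
`Γ(k) ≤ C^k` make this exponent an entire function of `is`.

If `D_N` were asymptotically confined to a bounded interval, the limiting Laplace transform would
have exponential type (`exp_type_of_bounded`). But all `c_k Γ(k)` are nonnegative and
`c_2 Γ(2) > 0`, since `σ ≠ 0`, so that it grows at least like `exp (c_2 Γ(2) x² / 2)` along the
positive axis (`not_confined`).
-/

open MeasureTheory ProbabilityTheory Matrix Filter Topology
open scoped ENNReal

noncomputable section

instance matrixMeasurableSpace {m n α : Type*} [MeasurableSpace α] :
    MeasurableSpace (Matrix m n α) :=
  inferInstanceAs (MeasurableSpace (m → n → α))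

/-- The integrand of the Lévy–Khintchine formula. -/
def levyKernel (t ξ : ℝ) : ℂ :=
  if t = 0 then -(ξ : ℂ) ^ 2 / 2
  else (Complex.exp (Complex.I * t * ξ) - 1 - Complex.I * t * ξ / (1 + (t : ℂ) ^ 2)) *
      ((1 + (t : ℂ) ^ 2) / (t : ℂ) ^ 2)

/-- The Lévy exponent `Ψ_{γ,σ}` of the Lévy pair `(γ, σ)`. -/
def levyExponent (γ : ℝ) (σ : Measure ℝ) (ξ : ℝ) : ℂ :=
  Complex.I * γ * ξ + ∫ t, levyKernel t ξ ∂σ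

/-- The `i`-th entry (`0`-indexed) of the vector `U N ω`, extended by `0`. -/
def entry {Ω : Type*} (U : (N : ℕ) → Ω → Fin N → ℂ) (N : ℕ) (ω : Ω) (i : ℕ) : ℂ :=
  if h : i < N then U N ω ⟨i, h⟩ else 0

/-- Hypothesis (Γ): the entries of `U N` are exchangeable with all moments finite,
the joint moments are `O(N^{p-d})`, and the normalized absolute moments converge to `Γ`,
which is moreover bounded by `C^{n₁+⋯+n_k}`. -/
structure HypGamma {Ω : Type*} [MeasurableSpace Ω] (P : Measure Ω)
    (U : (N : ℕ) → Ω → Fin N → ℂ)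
    (Γ : (k : ℕ) → (Fin k → ℕ) → ℝ) : Prop where
  meas : ∀ N, Measurable (U N)
  exchangeable : ∀ N (e : Equiv.Perm (Fin N)),
    Measure.map (fun ω => fun i => U N ω (e i)) P = Measure.map (U N) P
  moments : ∀ N (i : Fin N) (k : ℕ), Integrable (fun ω => ‖U N ω i‖ ^ k) P
  momBound : ∀ p : ℕ, 1 ≤ p → ∀ idx₁ idx₂ : Fin p → ℕ, ∃ C : ℝ, ∀ᶠ N in atTop,
    ‖∫ ω, (∏ j : Fin p, entry U N ω (idx₁ j)) *
        ∏ j : Fin p, (starRingEnd ℂ) (entry U N ω (idx₂ j)) ∂P‖ ≤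
      C * (N : ℝ) ^ ((p : ℤ) - ((Finset.univ.image idx₁ ∪ Finset.univ.image idx₂).card : ℤ))
  gammaLim : ∀ k : ℕ, 1 ≤ k → ∀ n : Fin k → ℕ, (∀ j, 1 ≤ n j) →
    Tendsto (fun N => ∫ ω, ∏ j : Fin k,
        (‖entry U N ω j‖ ^ (2 * n j) / (N : ℝ) ^ (n j - 1)) ∂P) atTop (𝓝 (Γ k n))
  gammaSymm : ∀ k (n : Fin k → ℕ) (e : Equiv.Perm (Fin k)), Γ k (n ∘ e) = Γ k n
  gammaBound : ∃ C : ℝ, ∀ k : ℕ, 1 ≤ k → ∀ n : Fin k → ℕ, (∀ j, 1 ≤ n j) →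
    Γ k n ≤ C ^ (∑ j, n j)

/-- The empirical spectral distribution of a Hermitian matrix. -/
def ESD {N : ℕ} {M : Matrix (Fin N) (Fin N) ℂ} (hM : M.IsHermitian) : Measure ℝ :=
  (N : ℝ≥0∞)⁻¹ • ∑ i : Fin N, Measure.dirac (hM.eigenvalues i)

/-- Weak convergence of a sequence of measures on `ℝ`, tested against bounded
continuous functions. -/
def TendstoWeakly (μs : ℕ → Measure ℝ) (μ : Measure ℝ) : Prop :=
  ∀ f : BoundedContinuousFunction ℝ ℝ,
    Tendsto (fun n => ∫ x, f x ∂(μs n)) atTop (𝓝 (∫ x, f x ∂μ))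

/-- The law of `M N` is `P_{U_N}^{(μ)}` where `μ` has Lévy pair `(γ, σ)`: the Fourier
transform of `M N` is `A ↦ exp(N E[Ψ_{γ,σ}(U_N* A U_N / N)])`. -/
def HasMatrixLaw {Ω : Type*} [MeasurableSpace Ω] (P : Measure Ω) (γ : ℝ) (σ : Measure ℝ)
    (U : (N : ℕ) → Ω → Fin N → ℂ)
    (M : (N : ℕ) → Ω → Matrix (Fin N) (Fin N) ℂ) : Prop :=
  ∀ N, 1 ≤ N → ∀ A : Matrix (Fin N) (Fin N) ℂ, A.IsHermitian →
    ∫ ω, Complex.exp (Complex.I * (A * M N ω).trace) ∂P =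
      Complex.exp ((N : ℂ) *
        ∫ ω, levyExponent γ σ ((star (U N ω) ⬝ᵥ A.mulVec (U N ω)).re / N) ∂P)

/-! ### Taylor expansion of the Lévy exponent -/

/-- Taylor's formula on a half-line, by induction on the order: differentiating the remainder of
order `m + 1` gives that of order `m` up to a unimodular factor. The sign `ε` covers both
half-lines. -/
lemma exp_rem_aux (ε : ℝ) (hε : |ε| = 1) (m : ℕ) : ∀ x : ℝ, 0 ≤ x →
    ‖Complex.exp (Complex.I * (ε * x : ℝ)) -
      ∑ k ∈ Finset.range m, (Complex.I * (ε * x : ℝ)) ^ k / (k.factorial : ℂ)‖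
        ≤ x ^ m / m.factorial := by
  induction m with
  | zero =>
    intro x hx
    simp only [Finset.range_zero, Finset.sum_empty, sub_zero, pow_zero, Nat.factorial_zero,
      Nat.cast_one, div_one]
    rw [mul_comm, Complex.norm_exp_ofReal_mul_I]
  | succ m ih =>
    intro x hx
    have hd : ∀ k : ℕ, ∀ y : ℝ, HasDerivAt
        (fun y : ℝ => (Complex.I * (ε * y : ℝ)) ^ (k + 1) / ((k + 1).factorial : ℂ))
        ((Complex.I * ε) * ((Complex.I * (ε * y : ℝ)) ^ k / (k.factorial : ℂ))) y := by
      intro k y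
      have h0 : HasDerivAt (fun y : ℝ => Complex.I * (ε * y : ℝ)) (Complex.I * ε) y := by
        have := ((Complex.ofRealCLM.hasDerivAt (x := y)).const_mul (Complex.I * ε))
        simp only [Complex.ofRealCLM_apply, Complex.ofReal_one, mul_one] at this
        refine this.congr_of_eventuallyEq (Eventually.of_forall fun z => ?_)
        simp only [Complex.ofReal_mul]
        ring
      have h1 := (h0.pow (k + 1)).div_const ((k + 1).factorial : ℂ)
      refine h1.congr_deriv ?_
      have : ((k : ℂ) + 1) ≠ 0 := by exact_mod_cast Nat.succ_ne_zero k
      have h2 : (k.factorial : ℂ) ≠ 0 := by exact_mod_cast Nat.factorial_ne_zero k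
      rw [Nat.factorial_succ]
      push_cast
      field_simp
    have hexp : ∀ y : ℝ, HasDerivAt (fun y : ℝ => Complex.exp (Complex.I * (ε * y : ℝ)))
        ((Complex.I * ε) * Complex.exp (Complex.I * (ε * y : ℝ))) y := by
      intro y
      have h0 : HasDerivAt (fun y : ℝ => Complex.I * (ε * y : ℝ)) (Complex.I * ε) y := by
        have := ((Complex.ofRealCLM.hasDerivAt (x := y)).const_mul (Complex.I * ε))
        simp only [Complex.ofRealCLM_apply, Complex.ofReal_one, mul_one] at this
        refine this.congr_of_eventuallyEq (Eventually.of_forall fun z => ?_)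
        simp only [Complex.ofReal_mul]
        ring
      exact h0.cexp.congr_deriv (by ring)
    have hf : ∀ y : ℝ, HasDerivAt (fun y : ℝ => Complex.exp (Complex.I * (ε * y : ℝ)) -
        ∑ k ∈ Finset.range (m + 1), (Complex.I * (ε * y : ℝ)) ^ k / (k.factorial : ℂ))
        ((Complex.I * ε) * (Complex.exp (Complex.I * (ε * y : ℝ)) -
        ∑ k ∈ Finset.range m, (Complex.I * (ε * y : ℝ)) ^ k / (k.factorial : ℂ))) y := by
      intro y
      simp_rw [Finset.sum_range_succ']
      have h1 := HasDerivAt.fun_sum (u := Finset.range m) (fun k _ => hd k y)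
      have h2 := (hexp y).sub (h1.add_const
        ((Complex.I * (ε * (0 : ℝ) : ℝ)) ^ 0 / ((0 : ℕ).factorial : ℂ)))
      refine (h2.congr_deriv ?_).congr_of_eventuallyEq (Eventually.of_forall fun z => ?_)
      · rw [mul_sub, Finset.mul_sum]
      · simp
    have hB : ∀ y : ℝ, HasDerivAt (fun y : ℝ => y ^ (m + 1) / ((m + 1).factorial : ℝ))
        (y ^ m / m.factorial) y := by
      intro y
      refine ((hasDerivAt_pow (m + 1) y).div_const _).congr_deriv ?_
      rw [Nat.factorial_succ]
      have h2 : (m.factorial : ℝ) ≠ 0 := by exact_mod_cast Nat.factorial_ne_zero m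
      push_cast
      field_simp
    -- mean value inequality, with `y ^ (m + 1) / (m + 1)!` as the dominating function
    refine image_norm_le_of_norm_deriv_right_le_deriv_boundary (a := 0) (b := x)
      (fun y _ => (hf y).continuousAt.continuousWithinAt)
      (fun y _ => (hf y).hasDerivWithinAt) ?_ hB ?_ ⟨hx, le_rfl⟩
    · simp [Finset.sum_range_succ']
    · intro y hy
      rw [norm_mul, norm_mul, Complex.norm_I, Complex.norm_real, Real.norm_eq_abs, hε,
        one_mul, one_mul]
      exact ih y hy.1

/-- Taylor's formula for the imaginary exponential, with the sharp remainder: the polynomial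
growth of the remainder is what allows integration against laws having only moments. -/
lemma exp_rem (m : ℕ) (x : ℝ) :
    ‖Complex.exp (Complex.I * x) -
      ∑ k ∈ Finset.range m, (Complex.I * x) ^ k / (k.factorial : ℂ)‖
        ≤ |x| ^ m / m.factorial := by
  rcases le_total 0 x with h | h
  · have := exp_rem_aux 1 (by simp) m x h
    rw [abs_of_nonneg h]
    simpa using this
  · have := exp_rem_aux (-1) (by simp) m (-x) (by linarith)
    rw [abs_of_nonpos h]
    simpa using this

/-- The Taylor expansion in `ξ` of the Lévy kernel, with its remainder. -/
lemma levyKernel_rem (m : ℕ) (t ξ : ℝ) :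
    ‖levyKernel t ξ - (Complex.I * ξ * t + ∑ k ∈ Finset.range m,
      (Complex.I * ξ) ^ (k + 2) / ((k + 2).factorial : ℂ) * ((t ^ k * (1 + t ^ 2) : ℝ) : ℂ))‖
      ≤ |ξ| ^ (m + 2) / (m + 2).factorial * (|t| ^ m * (1 + t ^ 2)) := by
  by_cases ht : t = 0
  · subst ht
    simp only [levyKernel, if_true]
    cases m with
    | zero =>
      simp
    | succ m =>
      rw [Finset.sum_range_succ']
      simp [mul_pow]
  · have htc : (t : ℂ) ≠ 0 := by exact_mod_cast ht
    have h1 : (1 + (t : ℂ) ^ 2) ≠ 0 := by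
      have : (1 + t ^ 2 : ℝ) ≠ 0 := by positivity
      exact_mod_cast this
    have key := exp_rem (m + 2) (t * ξ)
    have e : levyKernel t ξ - (Complex.I * ξ * t + ∑ k ∈ Finset.range m,
      (Complex.I * ξ) ^ (k + 2) / ((k + 2).factorial : ℂ) * ((t ^ k * (1 + t ^ 2) : ℝ) : ℂ))
        = (Complex.exp (Complex.I * (t * ξ : ℝ)) -
      ∑ k ∈ Finset.range (m + 2), (Complex.I * (t * ξ : ℝ)) ^ k / (k.factorial : ℂ)) *
        (((1 + t ^ 2) / t ^ 2 : ℝ) : ℂ) := by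
      rw [levyKernel, if_neg ht, Finset.sum_range_succ', Finset.sum_range_succ']
      have e2 : ∑ k ∈ Finset.range m,
          (Complex.I * (t * ξ : ℝ)) ^ (k + 1 + 1) / ((k + 1 + 1).factorial : ℂ)
          = (t ^ 2 / (1 + t ^ 2)) * ∑ k ∈ Finset.range m,
      (Complex.I * ξ) ^ (k + 2) / ((k + 2).factorial : ℂ) *
        ((t ^ k * (1 + t ^ 2) : ℝ) : ℂ) := by
        rw [Finset.mul_sum]
        refine Finset.sum_congr rfl fun k _ => ?_
        push_cast
        field_simp
        ring
      rw [e2]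
      generalize (∑ k ∈ Finset.range m, (Complex.I * ξ) ^ (k + 2) / ((k + 2).factorial : ℂ) *
        ((t ^ k * (1 + t ^ 2) : ℝ) : ℂ)) = S
      push_cast
      simp only [pow_one, Nat.factorial_one, Nat.factorial_zero, pow_zero,
        Nat.cast_one, div_one, mul_assoc]
      field_simp
      ring
    rw [e, norm_mul, Complex.norm_real, Real.norm_eq_abs,
      abs_of_nonneg (show (0:ℝ) ≤ (1 + t ^ 2) / t ^ 2 by positivity)]
    refine (mul_le_mul_of_nonneg_right key (by positivity)).trans (le_of_eq ?_)
    rw [abs_mul, mul_pow, pow_add |t| m 2, sq_abs]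
    field_simp

lemma measurable_levyKernel : Measurable (Function.uncurry fun ξ t : ℝ => levyKernel t ξ) := by
  unfold levyKernel Function.uncurry
  refine Measurable.ite (measurable_snd (measurableSet_singleton 0)) ?_ ?_
  · fun_prop
  · fun_prop

/-- Continuous functions are integrable against a finite compactly supported measure. -/
lemma integrable_of_compact {E : Type*} [NormedAddCommGroup E] {σ : Measure ℝ}
    [IsFiniteMeasure σ] {R : ℝ} (hR : σ (Set.Icc (-R) R)ᶜ = 0) {f : ℝ → E}
    (hf : Continuous f) : Integrable f σ := by
  have h := (hf.continuousOn (s := Set.Icc (-R) R)).integrableOn_compact (μ := σ) isCompact_Icc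
  have : σ.restrict (Set.Icc (-R) R) = σ :=
    Measure.restrict_eq_self_of_ae_mem (by rw [ae_iff]; exact hR)
  rwa [IntegrableOn, this] at h

/-- The moments of `(1 + t²) dσ(t)`; thus `kappa σ n` is the cumulant `c_{n+2}`. -/
def kappa (σ : Measure ℝ) (n : ℕ) : ℝ := ∫ t, t ^ n * (1 + t ^ 2) ∂σ

lemma kappa_abs_le {σ : Measure ℝ} [IsFiniteMeasure σ] {R : ℝ}
    (hR : σ (Set.Icc (-R) R)ᶜ = 0) (n : ℕ) :
    ∫ t, |t| ^ n * (1 + t ^ 2) ∂σ ≤ R ^ n * kappa σ 0 := by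
  rw [kappa, ← integral_const_mul]
  refine integral_mono_ae (integrable_of_compact hR (by fun_prop))
    (integrable_of_compact hR (by fun_prop)) ?_
  have : ∀ᵐ t ∂σ, t ∈ Set.Icc (-R) R := by rw [ae_iff]; exact hR
  filter_upwards [this] with t ht
  have : |t| ≤ R := abs_le.2 ht
  simp only [pow_zero, one_mul]
  gcongr

lemma abs_kappa_le {σ : Measure ℝ} [IsFiniteMeasure σ] {R : ℝ}
    (hR : σ (Set.Icc (-R) R)ᶜ = 0) (n : ℕ) : |kappa σ n| ≤ R ^ n * kappa σ 0 := by
  refine (abs_integral_le_integral_abs).trans (le_trans (le_of_eq ?_) (kappa_abs_le hR n))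
  congr 1
  ext t
  rw [abs_mul, abs_pow, abs_of_nonneg (show (0:ℝ) ≤ 1 + t ^ 2 by positivity)]

lemma kappa_zero_pos {σ : Measure ℝ} [IsFiniteMeasure σ] {R : ℝ}
    (hR : σ (Set.Icc (-R) R)ᶜ = 0) (hσ : σ ≠ 0) : 0 < kappa σ 0 := by
  have h1 : 0 < σ.real Set.univ := by
    rw [measureReal_def]
    refine ENNReal.toReal_pos (by simpa using hσ) (measure_ne_top _ _)
  refine h1.trans_le ?_
  have : ∫ _, (1 : ℝ) ∂σ ≤ kappa σ 0 := by
    refine integral_mono (integrable_const _) (integrable_of_compact hR (by fun_prop)) ?_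
    intro t
    simp only [pow_zero, one_mul]
    nlinarith [sq_nonneg t]
  simpa using this

lemma integrable_levyKernel {σ : Measure ℝ} [IsFiniteMeasure σ] {R : ℝ}
    (hR : σ (Set.Icc (-R) R)ᶜ = 0) (ξ : ℝ) : Integrable (fun t => levyKernel t ξ) σ := by
  have h1 : Integrable (fun t : ℝ => levyKernel t ξ - Complex.I * ξ * t) σ := by
    refine Integrable.mono' (g := fun t => |ξ| ^ 2 / 2 * (1 + t ^ 2))
      (integrable_of_compact hR (by fun_prop)) ?_ (Eventually.of_forall fun t => ?_)
    · exact ((measurable_levyKernel.comp (measurable_const.prodMk measurable_id)).sub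
        (by fun_prop)).aestronglyMeasurable
    · simpa [Nat.factorial] using levyKernel_rem 0 t ξ
  have h2 : Integrable (fun t : ℝ => Complex.I * ξ * t) σ :=
    integrable_of_compact hR (by fun_prop)
  refine (h1.add h2).congr (Eventually.of_forall fun t => ?_)
  simp

/-- The Taylor expansion of the Lévy exponent: its coefficients are the cumulants. -/
lemma levyExponent_rem {σ : Measure ℝ} [IsFiniteMeasure σ] {R : ℝ}
    (hR : σ (Set.Icc (-R) R)ᶜ = 0) (γ : ℝ) (m : ℕ) (ξ : ℝ) :
    ‖levyExponent γ σ ξ - (((γ + ∫ t, t ∂σ : ℝ) : ℂ) * (Complex.I * ξ) +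
      ∑ k ∈ Finset.range m, (kappa σ k : ℂ) * (Complex.I * ξ) ^ (k + 2) /
        ((k + 2).factorial : ℂ))‖
      ≤ |ξ| ^ (m + 2) / (m + 2).factorial * (R ^ m * kappa σ 0) := by
  have e : levyExponent γ σ ξ - (((γ + ∫ t, t ∂σ : ℝ) : ℂ) * (Complex.I * ξ) +
      ∑ k ∈ Finset.range m, (kappa σ k : ℂ) * (Complex.I * ξ) ^ (k + 2) /
        ((k + 2).factorial : ℂ)) = ∫ t, (levyKernel t ξ - (Complex.I * ξ * t +
        ∑ k ∈ Finset.range m, (Complex.I * ξ) ^ (k + 2) / ((k + 2).factorial : ℂ) *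
          ((t ^ k * (1 + t ^ 2) : ℝ) : ℂ))) ∂σ := by
    have hi : ∀ k ∈ Finset.range m, Integrable (fun t : ℝ =>
        (Complex.I * ξ) ^ (k + 2) / ((k + 2).factorial : ℂ) *
          ((t ^ k * (1 + t ^ 2) : ℝ) : ℂ)) σ := fun k _ =>
      integrable_of_compact hR (by fun_prop)
    have hi1 : Integrable (fun t : ℝ => Complex.I * ξ * (t : ℂ)) σ :=
      integrable_of_compact hR (by fun_prop)
    rw [integral_sub (integrable_levyKernel hR ξ)
        (Integrable.fun_add hi1 (integrable_finsetSum _ hi)),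
      integral_add hi1 (integrable_finsetSum _ hi), integral_finsetSum _ hi]
    simp_rw [integral_const_mul, integral_complex_ofReal]
    rw [levyExponent]
    have : ∀ k, (∫ t : ℝ, t ^ k * (1 + t ^ 2) ∂σ) = kappa σ k := fun k => rfl
    simp_rw [this]
    have e3 : ∑ k ∈ Finset.range m, (kappa σ k : ℂ) * (Complex.I * ξ) ^ (k + 2) /
        ((k + 2).factorial : ℂ) = ∑ k ∈ Finset.range m,
        (Complex.I * ξ) ^ (k + 2) / ((k + 2).factorial : ℂ) * (kappa σ k : ℂ) :=
      Finset.sum_congr rfl fun k _ => by ring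
    have e4 : ∫ a : ℝ, (a : ℂ) ∂σ = ((∫ a, a ∂σ : ℝ) : ℂ) := integral_complex_ofReal
    rw [e3, e4]
    push_cast
    ring
  rw [e]
  refine (norm_integral_le_of_norm_le (g := fun t => |ξ| ^ (m + 2) / (m + 2).factorial *
    (|t| ^ m * (1 + t ^ 2))) (integrable_of_compact hR (by fun_prop))
    (Eventually.of_forall fun t => levyKernel_rem m t ξ)).trans ?_
  rw [integral_const_mul]
  exact mul_le_mul_of_nonneg_left (kappa_abs_le hR m) (by positivity)

lemma measurable_levyExponent (γ : ℝ) (σ : Measure ℝ) [IsFiniteMeasure σ] :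
    Measurable (levyExponent γ σ) := by
  unfold levyExponent
  refine Measurable.add (by fun_prop) ?_
  exact (measurable_levyKernel.stronglyMeasurable.integral_prod_right
    (f := fun ξ t => levyKernel t ξ)).measurable

/-! ### Entire functions and bounded random variables -/

lemma entire_of_bound (a : ℕ → ℂ) (A B : ℝ)
    (h : ∀ k, ‖a k‖ ≤ A * (B ^ k / k.factorial)) :
    Differentiable ℂ (fun z : ℂ => ∑' k, a k * z ^ k) := by
  intro z
  have hs : Summable fun k : ℕ => A * ((B * (‖z‖ + 1)) ^ k / k.factorial) :=
    (Real.summable_pow_div_factorial _).mul_left A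
  have := Complex.differentiableOn_tsum_of_summable_norm (F := fun k (z : ℂ) => a k * z ^ k)
    (U := Metric.ball 0 (‖z‖ + 1)) hs (fun k => by fun_prop) Metric.isOpen_ball ?_
  · exact (this z (by simp)).differentiableAt (Metric.isOpen_ball.mem_nhds (by simp))
  · intro k w hw
    have hw' : ‖w‖ ≤ ‖z‖ + 1 := by
      rw [mem_ball_zero_iff] at hw
      exact hw.le
    have h0 : 0 ≤ A * (B ^ k / k.factorial) := (norm_nonneg _).trans (h k)
    rw [norm_mul, norm_pow]
    calc ‖a k‖ * ‖w‖ ^ k ≤ (A * (B ^ k / k.factorial)) * (‖z‖ + 1) ^ k := by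
          gcongr
          exact h k
      _ = A * ((B * (‖z‖ + 1)) ^ k / k.factorial) := by rw [mul_pow]; ring

/-- If the characteristic functions of random variables bounded by `R` converge to `exp (G (is))`
with `G` entire, then `exp (G x)` has exponential type at most `R`. Limits of moments are taken
along an ultrafilter, which provides a limiting Laplace transform without extracting a weakly
convergent subsequence; the identity theorem then carries the equality from the imaginary axis
to the real one. -/
lemma exp_type_of_bounded {Ω : Type*} [MeasurableSpace Ω] (P : Measure Ω) [IsProbabilityMeasure P]
    (D : ℕ → Ω → ℝ) (hD : ∀ N, Measurable (D N)) (R : ℝ)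
    (hDR : ∀ N ω, |D N ω| ≤ R) (g : ℕ → ℂ) (A B : ℝ)
    (hg : ∀ k, ‖g k‖ ≤ A * (B ^ k / k.factorial))
    (hlim : ∀ s : ℝ, Tendsto (fun N => ∫ ω, Complex.exp (Complex.I * (s * D N ω : ℝ)) ∂P) atTop
      (𝓝 (Complex.exp (∑' k, g k * (Complex.I * s) ^ k)))) (x : ℝ) (hx : 0 ≤ x) :
    ‖Complex.exp (∑' k, g k * (x : ℂ) ^ k)‖ ≤ Real.exp (R * x) := by
  have hint : ∀ N k, Integrable (fun ω => D N ω ^ k) P := fun N k =>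
    Integrable.of_bound ((hD N).pow_const k).aestronglyMeasurable (R ^ k)
      (Eventually.of_forall fun ω => by
        rw [norm_pow]; exact pow_le_pow_left₀ (norm_nonneg _) (hDR N ω) k)
  have hmom : ∀ N k, |∫ ω, D N ω ^ k ∂P| ≤ R ^ k := by
    intro N k
    have := norm_integral_le_of_norm_le_const (μ := P) (f := fun ω => D N ω ^ k) (C := R ^ k)
      (Eventually.of_forall fun ω => by
        rw [norm_pow]; exact pow_le_pow_left₀ (norm_nonneg _) (hDR N ω) k)
    simpa using this
  have hm : ∀ k, ∃ m : ℝ, |m| ≤ R ^ k ∧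
      Tendsto (fun N => ∫ ω, D N ω ^ k ∂P) (hyperfilter ℕ : Filter ℕ) (𝓝 m) := by
    intro k
    obtain ⟨m, hm, hl⟩ := (isCompact_Icc (a := -R ^ k) (b := R ^ k)).ultrafilter_le_nhds
      ((hyperfilter ℕ).map fun N => ∫ ω, D N ω ^ k ∂P) (by
        rw [le_principal_iff, Ultrafilter.mem_coe, Ultrafilter.mem_map]
        exact Filter.univ_mem' fun N => abs_le.1 (hmom N k))
    exact ⟨m, abs_le.2 hm, hl⟩
  choose m hmR hml using hm
  -- `F` is the Laplace transform of the limiting moments `m k`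
  have ha : ∀ k, ‖((m k / k.factorial : ℝ) : ℂ)‖ ≤ 1 * (R ^ k / k.factorial) := by
    intro k
    rw [Complex.norm_real, Real.norm_eq_abs, abs_div, one_mul, Nat.abs_cast]
    gcongr
    exact hmR k
  set F : ℂ → ℂ := fun z => ∑' k, ((m k / k.factorial : ℝ) : ℂ) * z ^ k with hF
  have hFd : Differentiable ℂ F := entire_of_bound _ 1 R ha
  have hGd : Differentiable ℂ (fun z : ℂ => Complex.exp (∑' k, g k * z ^ k)) :=
    (entire_of_bound g A B hg).cexp
  have hser : ∀ N (s : ℝ), ∫ ω, Complex.exp (Complex.I * (s * D N ω : ℝ)) ∂P =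
      ∑' k, (((∫ ω, D N ω ^ k ∂P) / k.factorial : ℝ) : ℂ) * (Complex.I * s) ^ k := by
    intro N s
    have h := hasSum_integral_of_dominated_convergence (μ := P)
      (F := fun k ω => (Complex.I * (s * D N ω : ℝ)) ^ k / (k.factorial : ℂ))
      (f := fun ω => Complex.exp (Complex.I * (s * D N ω : ℝ)))
      (fun k _ => (|s| * R) ^ k / k.factorial) (fun k => ?_) (fun k => ?_) ?_ ?_ ?_
    · rw [← h.tsum_eq]
      refine tsum_congr fun k => ?_
      have : ∀ ω, (Complex.I * (s * D N ω : ℝ)) ^ k / (k.factorial : ℂ) =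
          ((Complex.I * s) ^ k / (k.factorial : ℂ)) * ((D N ω ^ k : ℝ) : ℂ) := by
        intro ω
        push_cast
        ring
      simp_rw [this]
      rw [integral_const_mul, integral_complex_ofReal]
      push_cast
      ring
    · have := hD N
      exact Measurable.aestronglyMeasurable (by fun_prop)
    · refine Eventually.of_forall fun ω => ?_
      rw [norm_div, norm_pow, norm_mul, Complex.norm_I, one_mul, Complex.norm_real,
        Real.norm_eq_abs, abs_mul, Complex.norm_natCast]
      gcongr
      exact hDR N ω
    · exact Eventually.of_forall fun ω => Real.summable_pow_div_factorial _
    · exact integrable_const _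
    · refine Eventually.of_forall fun ω => ?_
      have := NormedSpace.expSeries_div_hasSum_exp (Complex.I * (s * D N ω : ℝ))
      rwa [← Complex.exp_eq_exp_ℂ] at this
  have hax : ∀ s : ℝ, F (Complex.I * s) = Complex.exp (∑' k, g k * (Complex.I * s) ^ k) := by
    intro s
    have h1 := (hlim s).mono_left Nat.hyperfilter_le_atTop
    simp_rw [hser] at h1
    refine tendsto_nhds_unique ?_ h1
    refine tendsto_tsum_of_dominated_convergence (bound := fun k => (R * |s|) ^ k / k.factorial)
      (Real.summable_pow_div_factorial _) (fun k => ?_) (Eventually.of_forall fun N k => ?_)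
    · refine Tendsto.mul_const _ ?_
      exact (Complex.continuous_ofReal.tendsto _).comp ((hml k).div_const _)
    · rw [norm_mul, norm_pow, norm_mul, Complex.norm_I, one_mul, Complex.norm_real,
        Complex.norm_real, Real.norm_eq_abs, Real.norm_eq_abs, abs_div, Nat.abs_cast, mul_pow,
        div_mul_eq_mul_div]
      gcongr
      exact hmom N k
  -- identity theorem: the imaginary axis accumulates at `0`
  have hEq : F = fun z : ℂ => Complex.exp (∑' k, g k * z ^ k) := by
    refine AnalyticOnNhd.eq_of_frequently_eq (z₀ := 0)
      (fun z _ => hFd.analyticAt z) (fun z _ => hGd.analyticAt z) ?_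
    have ht : Tendsto (fun n : ℕ => Complex.I * ((1 / ((n : ℝ) + 1) : ℝ) : ℂ)) atTop (𝓝[≠] 0) := by
      refine tendsto_nhdsWithin_iff.2 ⟨?_, Eventually.of_forall fun n => ?_⟩
      · have := ((Complex.continuous_ofReal.tendsto 0).comp
          (tendsto_one_div_add_atTop_nhds_zero_nat (𝕜 := ℝ))).const_mul Complex.I
        simpa using this
      · have : ((1 / ((n : ℝ) + 1) : ℝ) : ℂ) ≠ 0 := by
          have : (1 / ((n : ℝ) + 1) : ℝ) ≠ 0 := by positivity
          exact_mod_cast this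
        simpa using this
    exact ht.frequently (Frequently.of_forall fun n => hax _)
  have := congrFun hEq x
  rw [← this]
  -- `|m k| ≤ R ^ k` bounds the series of `F x` by that of `exp (R x)`
  have hb : HasSum (fun k : ℕ => (R * x) ^ k / k.factorial) (Real.exp (R * x)) := by
    have := NormedSpace.expSeries_div_hasSum_exp (R * x)
    rwa [← Real.exp_eq_exp_ℝ] at this
  refine tsum_of_norm_bounded hb fun k => ?_
  rw [norm_mul, norm_pow, Complex.norm_real, Complex.norm_real, Real.norm_eq_abs,
    Real.norm_eq_abs, abs_div, Nat.abs_cast, mul_pow, div_mul_eq_mul_div, abs_of_nonneg hx]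
  gcongr
  exact hmR k

lemma norm_exp_I_sub_exp_I_le (a b : ℝ) :
    ‖Complex.exp (Complex.I * a) - Complex.exp (Complex.I * b)‖ ≤ |a - b| := by
  have : Complex.exp (Complex.I * a) - Complex.exp (Complex.I * b) =
      Complex.exp (Complex.I * b) * (Complex.exp (Complex.I * (a - b : ℝ)) - 1) := by
    rw [mul_sub, ← Complex.exp_add]
    push_cast
    ring_nf
  rw [this, norm_mul, mul_comm Complex.I, Complex.norm_exp_ofReal_mul_I, one_mul]
  exact Real.norm_exp_I_mul_ofReal_sub_one_le

/-- Random variables whose characteristic functions converge to `exp (∑ qₖ (is)ᵏ)`, with `qₖ ≥ 0`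
and `q₂ > 0`, cannot be asymptotically confined to a bounded interval: the limiting Laplace
transform would grow at least like `exp (q₂ x²)`, but at most like `exp (R x)`. -/
lemma not_confined {Ω : Type*} [MeasurableSpace Ω] (P : Measure Ω) [IsProbabilityMeasure P]
    (D : ℕ → Ω → ℝ) (hD : ∀ N, Measurable (D N)) (R : ℝ) (hR : 0 ≤ R)
    (hDi : ∀ N, Integrable (fun ω => max (|D N ω| - R) 0) P)
    (hD0 : Tendsto (fun N => ∫ ω, max (|D N ω| - R) 0 ∂P) atTop (𝓝 0))
    (q : ℕ → ℝ) (hq0 : ∀ k, 0 ≤ q k) (hq2 : 0 < q 2) (A B : ℝ)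
    (hq : ∀ k, q k ≤ A * (B ^ k / k.factorial))
    (hlim : ∀ s : ℝ, Tendsto (fun N => ∫ ω, Complex.exp (Complex.I * (s * D N ω : ℝ)) ∂P) atTop
      (𝓝 (Complex.exp (∑' k, (q k : ℂ) * (Complex.I * s) ^ k)))) : False := by
  -- truncation to `[-R, R]` does not change the limiting characteristic function
  set D' : ℕ → Ω → ℝ := fun N ω => max (-R) (min R (D N ω)) with hD'
  have hD'm : ∀ N, Measurable (D' N) := fun N =>
    measurable_const.max (measurable_const.min (hD N))
  have hclose : ∀ N ω, |D N ω - D' N ω| ≤ max (|D N ω| - R) 0 := by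
    intro N ω
    simp only [hD']
    rcases le_total R (D N ω) with h | h
    · rw [min_eq_left h, max_eq_right (by linarith), abs_of_nonneg (by linarith),
        abs_of_nonneg (by linarith)]
      exact le_max_left _ _
    · rw [min_eq_right h]
      rcases le_total (-R) (D N ω) with h' | h'
      · rw [max_eq_right h']
        simp
      · rw [max_eq_left h', abs_of_nonpos (by linarith), abs_of_nonpos (by linarith)]
        exact le_max_of_le_left (by linarith)
  have hlim' : ∀ s : ℝ, Tendsto (fun N => ∫ ω, Complex.exp (Complex.I * (s * D' N ω : ℝ)) ∂P) atTop
      (𝓝 (Complex.exp (∑' k, (q k : ℂ) * (Complex.I * s) ^ k))) := by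
    intro s
    have hbi : ∀ f : Ω → ℝ, Measurable f →
        Integrable (fun ω => Complex.exp (Complex.I * (s * f ω : ℝ))) P := fun f hf =>
      Integrable.of_bound (by fun_prop) 1 (Eventually.of_forall fun ω => by
        rw [mul_comm, Complex.norm_exp_ofReal_mul_I])
    have hdiff : Tendsto (fun N => ∫ ω, Complex.exp (Complex.I * (s * D' N ω : ℝ)) ∂P -
        ∫ ω, Complex.exp (Complex.I * (s * D N ω : ℝ)) ∂P) atTop (𝓝 0) := by
      refine squeeze_zero_norm (a := fun N => |s| * ∫ ω, max (|D N ω| - R) 0 ∂P) (fun N => ?_)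
        (by simpa using hD0.const_mul |s|)
      rw [← integral_sub (hbi _ (hD'm N)) (hbi _ (hD N)), ← integral_const_mul]
      refine norm_integral_le_of_norm_le ((hDi N).const_mul _) (Eventually.of_forall fun ω => ?_)
      refine (norm_exp_I_sub_exp_I_le _ _).trans ?_
      rw [← mul_sub, abs_mul, abs_sub_comm]
      exact mul_le_mul_of_nonneg_left (hclose N ω) (abs_nonneg s)
    simpa using hdiff.add (hlim s)
  have hDR : ∀ N ω, |D' N ω| ≤ R := fun N ω =>
    abs_le.2 ⟨le_max_left _ _, max_le (by linarith) (min_le_left _ _)⟩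
  have hgrow := exp_type_of_bounded P D' hD'm R hDR (fun k => (q k : ℂ)) A B
    (fun k => by rw [Complex.norm_real, Real.norm_eq_abs, abs_of_nonneg (hq0 k)]; exact hq k) hlim'
  -- keep only the quadratic term of the limiting exponent, all others being nonnegative
  have hlow : ∀ x : ℝ, 0 ≤ x → q 2 * x ^ 2 ≤ R * x := by
    intro x hx
    have h1 := hgrow x hx
    have hsum : Summable fun k => q k * x ^ k := by
      refine Summable.of_nonneg_of_le (fun k => by have := hq0 k; positivity) (fun k => ?_)
        ((Real.summable_pow_div_factorial (B * x)).mul_left A)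
      calc q k * x ^ k ≤ (A * (B ^ k / k.factorial)) * x ^ k :=
            mul_le_mul_of_nonneg_right (hq k) (by positivity)
        _ = A * ((B * x) ^ k / k.factorial) := by rw [mul_pow]; ring
    have e : (∑' k, (q k : ℂ) * (x : ℂ) ^ k) = ((∑' k, q k * x ^ k : ℝ) : ℂ) := by
      rw [Complex.ofReal_tsum]
      push_cast
      rfl
    rw [e, Complex.norm_exp_ofReal, Real.exp_le_exp] at h1
    exact (hsum.le_tsum 2 (fun k _ => by have := hq0 k; positivity)).trans h1
  have hx := hlow ((R + 1) / q 2) (by positivity)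
  have e : q 2 * ((R + 1) / q 2) ^ 2 = (R + 1) * ((R + 1) / q 2) := by field_simp
  rw [e] at hx
  have : 0 < (R + 1) / q 2 := by positivity
  nlinarith

/-! ### Second moments from characteristic functions -/

lemma one_sub_re_exp_le (a : ℝ) (r : ℂ) (hr : ‖r‖ ≤ 1) :
    1 - (Complex.exp (Complex.I * a + r)).re ≤ a ^ 2 / 2 + 2 * ‖r‖ := by
  have h1 := Complex.norm_exp_sub_one_le hr
  have e : Complex.exp (Complex.I * a + r) = Complex.exp (a * Complex.I) +
      Complex.exp (a * Complex.I) * (Complex.exp r - 1) := by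
    rw [Complex.exp_add, mul_comm Complex.I]
    ring
  have h2 : ‖Complex.exp (a * Complex.I) * (Complex.exp r - 1)‖ ≤ 2 * ‖r‖ := by
    rw [norm_mul, Complex.norm_exp_ofReal_mul_I, one_mul]
    exact h1
  have h3 := (abs_le.1 (Complex.abs_re_le_norm
    (Complex.exp (a * Complex.I) * (Complex.exp r - 1)))).1
  rw [e, Complex.add_re, Complex.exp_ofReal_mul_I_re]
  have := Real.one_sub_sq_div_two_le_cos (x := a)
  linarith

/-- A quadratic bound on the characteristic function near `0` gives a finite second moment
(Fatou's lemma applied to `2 (1 - cos (sY)) / s²`). -/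
lemma second_moment_of_charFun {Ω : Type*} [MeasurableSpace Ω] (P : Measure Ω)
    [IsProbabilityMeasure P] (Y : Ω → ℝ) (hY : Measurable Y) (B : ℝ) (hB : 0 ≤ B)
    (h : ∀ᶠ s : ℝ in 𝓝[>] 0,
      1 - (∫ ω, Complex.exp (Complex.I * (s * Y ω : ℝ)) ∂P).re ≤ B * s ^ 2 / 2) :
    Integrable (fun ω => Y ω ^ 2) P ∧ ∫ ω, Y ω ^ 2 ∂P ≤ B := by
  set u : ℕ → ℝ := fun n => 1 / ((n : ℝ) + 1) with hu
  have hu0 : ∀ n, 0 < u n := fun n => by positivity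
  have hut0 : Tendsto u atTop (𝓝 0) := tendsto_one_div_add_atTop_nhds_zero_nat
  have hut : Tendsto u atTop (𝓝[>] 0) :=
    tendsto_nhdsWithin_iff.2 ⟨hut0, Eventually.of_forall hu0⟩
  have hpt : ∀ y : ℝ, Tendsto (fun n => 2 * (1 - Real.cos (u n * y)) / (u n) ^ 2) atTop
      (𝓝 (y ^ 2)) := by
    intro y
    have hsq : Tendsto (fun n => y ^ 2 - 2 * (u n) ^ 2 * y ^ 4 * (5 / 96)) atTop (𝓝 (y ^ 2)) := by
      have := ((((hut0.pow 2).const_mul 2).mul_const (y ^ 4)).mul_const (5 / 96)).const_sub (y ^ 2)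
      simpa using this
    -- squeeze by `1 - x² / 2 ≤ cos x ≤ 1 - x² / 2 + (5 / 96) x⁴`
    refine tendsto_of_tendsto_of_tendsto_of_le_of_le' hsq tendsto_const_nhds ?_ ?_
    · have hsmall : ∀ᶠ n in atTop, |u n * y| ≤ 1 := by
        have : Tendsto (fun n => |u n * y|) atTop (𝓝 0) := by
          simpa using (hut0.mul_const y).abs
        exact this.eventually (ge_mem_nhds one_pos)
      filter_upwards [hsmall] with n hn
      have hb := (abs_le.1 (Real.cos_bound hn)).2
      rw [Even.pow_abs (by decide)] at hb
      have := hu0 n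
      rw [le_div_iff₀ (by positivity)]
      nlinarith
    · refine Eventually.of_forall fun n => ?_
      have := hu0 n
      have := Real.one_sub_sq_div_two_le_cos (x := u n * y)
      rw [div_le_iff₀ (by positivity)]
      nlinarith
  have hre : ∀ s : ℝ, (∫ ω, Complex.exp (Complex.I * (s * Y ω : ℝ)) ∂P).re =
      ∫ ω, Real.cos (s * Y ω) ∂P := by
    intro s
    have hi : Integrable (fun ω => Complex.exp (Complex.I * (s * Y ω : ℝ))) P :=
      Integrable.of_bound (by fun_prop) 1 (Eventually.of_forall fun ω => by
        rw [mul_comm, Complex.norm_exp_ofReal_mul_I])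
    have := integral_re hi
    simp only [RCLike.re_to_complex] at this
    rw [← this]
    refine integral_congr_ae (Eventually.of_forall fun ω => ?_)
    simp only
    rw [mul_comm, Complex.exp_ofReal_mul_I_re]
  have hfat : ∫⁻ ω, ENNReal.ofReal (Y ω ^ 2) ∂P ≤ ENNReal.ofReal B := by
    have h1 : ∀ ω, ENNReal.ofReal (Y ω ^ 2) =
        liminf (fun n => ENNReal.ofReal (2 * (1 - Real.cos (u n * Y ω)) / (u n) ^ 2)) atTop :=
      fun ω => ((ENNReal.continuous_ofReal.tendsto _).comp (hpt (Y ω))).liminf_eq.symm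
    simp_rw [h1]
    refine (lintegral_liminf_le fun n => by fun_prop).trans ?_
    refine liminf_le_of_frequently_le' (Eventually.frequently ?_)
    filter_upwards [hut.eventually h] with n hn
    have hci : Integrable (fun ω => Real.cos (u n * Y ω)) P :=
      Integrable.of_bound (by fun_prop) 1 (Eventually.of_forall fun ω => Real.abs_cos_le_one _)
    rw [← ofReal_integral_eq_lintegral_ofReal]
    · refine ENNReal.ofReal_le_ofReal ?_
      rw [integral_div, integral_const_mul, integral_sub (integrable_const _) hci, ← hre]
      have := hu0 n
      rw [div_le_iff₀ (by positivity)]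
      simp only [integral_const, probReal_univ, smul_eq_mul, mul_one]
      linarith
    · exact (((integrable_const _).sub hci).const_mul _).div_const _
    · refine Eventually.of_forall fun ω => ?_
      have := Real.cos_le_one (u n * Y ω)
      have := hu0 n
      simp only [Pi.zero_apply]
      apply div_nonneg _ (by positivity)
      linarith
  have hint : Integrable (fun ω => Y ω ^ 2) P := by
    refine ⟨by fun_prop, ?_⟩
    rw [hasFiniteIntegral_iff_ofReal (Eventually.of_forall fun ω => sq_nonneg _)]
    exact hfat.trans_lt ENNReal.ofReal_lt_top
  refine ⟨hint, ?_⟩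
  rw [← ofReal_integral_eq_lintegral_ofReal hint (Eventually.of_forall fun ω => sq_nonneg _)]
    at hfat
  exact (ENNReal.ofReal_le_ofReal_iff hB).1 hfat

lemma integrable_levyExponent_comp {Ω : Type*} [MeasurableSpace Ω] {P : Measure Ω}
    [IsProbabilityMeasure P] {σ : Measure ℝ} [IsFiniteMeasure σ] {R : ℝ}
    (hR : σ (Set.Icc (-R) R)ᶜ = 0) (γ : ℝ) {X : Ω → ℝ} (hX : Measurable X)
    (hX1 : Integrable X P) (hX2 : Integrable (fun ω => X ω ^ 2) P) :
    Integrable (fun ω => levyExponent γ σ (X ω)) P := by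
  refine Integrable.mono' (g := fun ω => |γ + ∫ t, t ∂σ| * |X ω| + kappa σ 0 / 2 * X ω ^ 2)
    ((hX1.abs.const_mul _).add (hX2.const_mul _))
    ((measurable_levyExponent γ σ).comp hX).aestronglyMeasurable
    (Eventually.of_forall fun ω => ?_)
  have h := levyExponent_rem hR γ 0 (X ω)
  simp only [Finset.range_zero, Finset.sum_empty, add_zero, zero_add, pow_zero, one_mul,
    sq_abs] at h
  have h2 := norm_le_norm_add_norm_sub' (levyExponent γ σ (X ω))
    (((γ + ∫ t, t ∂σ : ℝ) : ℂ) * (Complex.I * X ω))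
  rw [norm_mul, norm_mul, Complex.norm_I, Complex.norm_real, Complex.norm_real, one_mul,
    Real.norm_eq_abs, Real.norm_eq_abs] at h2
  rw [Nat.factorial_two, Nat.cast_ofNat] at h
  linarith

/-- If `Y` has the characteristic function `s ↦ exp (n E[Ψ (sQ/n)])`, its second moment is
controlled by the first two cumulants and the first two moments of `Q`. -/
lemma second_moment_of_law {Ω : Type*} [MeasurableSpace Ω] {P : Measure Ω}
    [IsProbabilityMeasure P] {σ : Measure ℝ} [IsFiniteMeasure σ] {R : ℝ}
    (hR : σ (Set.Icc (-R) R)ᶜ = 0) (hσ : σ ≠ 0) (γ : ℝ) {Q Y : Ω → ℝ} (hQ : Measurable Q)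
    (hQ1 : Integrable Q P) (hQ2 : Integrable (fun ω => Q ω ^ 2) P) (hY : Measurable Y)
    {n : ℝ} (hn : 0 < n)
    (h : ∀ s : ℝ, ∫ ω, Complex.exp (Complex.I * (s * Y ω : ℝ)) ∂P =
      Complex.exp ((n : ℂ) * ∫ ω, levyExponent γ σ (s * Q ω / n) ∂P)) :
    Integrable (fun ω => Y ω ^ 2) P ∧
      ∫ ω, Y ω ^ 2 ∂P ≤ ((γ + ∫ t, t ∂σ) * ∫ ω, Q ω ∂P) ^ 2 +
        2 * kappa σ 0 * (∫ ω, Q ω ^ 2 ∂P) / n := by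
  have hκ := kappa_zero_pos hR hσ
  set c := γ + ∫ t, t ∂σ with hc
  set a := ∫ ω, Q ω ∂P with ha
  set b := ∫ ω, Q ω ^ 2 ∂P with hb
  have hb0 : 0 ≤ b := integral_nonneg fun ω => sq_nonneg _
  -- near `0` the exponent is `i c s E[Q] + O(s²)`
  have hr : ∀ s : ℝ, ‖(n : ℂ) * (∫ ω, levyExponent γ σ (s * Q ω / n) ∂P) -
      Complex.I * (c * (s * a) : ℝ)‖ ≤ kappa σ 0 * b / (2 * n) * s ^ 2 := by
    intro s
    have hi := integrable_levyExponent_comp (X := fun ω => s * Q ω / n) (P := P) hR γ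
      (by fun_prop) ((hQ1.const_mul s).div_const n)
      (((hQ2.const_mul (s ^ 2)).div_const (n ^ 2)).congr
        (Eventually.of_forall fun ω => by simp only; ring))
    have hi2 : Integrable (fun ω => (c : ℂ) * (Complex.I * ((s * Q ω / n : ℝ) : ℂ))) P :=
      (((((hQ1.const_mul s).div_const n)).ofReal (𝕜 := ℂ)).const_mul Complex.I).const_mul _
    have e : (n : ℂ) * (∫ ω, levyExponent γ σ (s * Q ω / n) ∂P) -
      Complex.I * (c * (s * a) : ℝ) = n * ∫ ω, (levyExponent γ σ (s * Q ω / n) -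
        (c : ℂ) * (Complex.I * ((s * Q ω / n : ℝ) : ℂ))) ∂P := by
      rw [integral_sub hi hi2, integral_const_mul, integral_const_mul, integral_complex_ofReal,
        integral_div, integral_const_mul, ← ha]
      have : (n : ℂ) ≠ 0 := by exact_mod_cast hn.ne'
      push_cast
      field_simp
    rw [e, norm_mul, Complex.norm_real, Real.norm_eq_abs, abs_of_pos hn]
    have hle : ‖∫ ω, (levyExponent γ σ (s * Q ω / n) -
        (c : ℂ) * (Complex.I * ((s * Q ω / n : ℝ) : ℂ))) ∂P‖ ≤
        ∫ ω, kappa σ 0 * s ^ 2 / (2 * n ^ 2) * Q ω ^ 2 ∂P := by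
      refine norm_integral_le_of_norm_le (hQ2.const_mul _) (Eventually.of_forall fun ω => ?_)
      have h := levyExponent_rem hR γ 0 (s * Q ω / n)
      simp only [Finset.range_zero, Finset.sum_empty, add_zero, zero_add, pow_zero, one_mul,
        sq_abs, Nat.factorial_two] at h
      refine h.trans (le_of_eq ?_)
      push_cast
      field_simp
    rw [integral_const_mul, ← hb] at hle
    calc n * _ ≤ n * (kappa σ 0 * s ^ 2 / (2 * n ^ 2) * b) := by gcongr
      _ = _ := by field_simp
  refine second_moment_of_charFun P Y hY _ (by positivity) ?_
  have hsm : ∀ᶠ s : ℝ in 𝓝[>] 0, kappa σ 0 * b / (2 * n) * s ^ 2 ≤ 1 := by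
    have : Tendsto (fun s : ℝ => kappa σ 0 * b / (2 * n) * s ^ 2) (𝓝[>] 0) (𝓝 0) := by
      have h0 : Continuous fun s : ℝ => kappa σ 0 * b / (2 * n) * s ^ 2 := by fun_prop
      have := h0.tendsto 0
      simp only [ne_eq, OfNat.ofNat_ne_zero, not_false_eq_true, zero_pow, mul_zero] at this
      exact this.mono_left nhdsWithin_le_nhds
    exact this.eventually (ge_mem_nhds one_pos)
  filter_upwards [hsm] with s hs
  rw [h s]
  have h1 := one_sub_re_exp_le (c * (s * a)) _ ((hr s).trans hs)
  rw [add_sub_cancel] at h1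
  refine h1.trans ((add_le_add_right (mul_le_mul_of_nonneg_left (hr s) zero_le_two) _).trans
    (le_of_eq ?_))
  field_simp

/-! ### Convergence of the diagonal exponents -/

/-- The limiting cumulants of a diagonal entry divided by `k!`, where `c` is the first cumulant
of the Lévy pair and `G n` stands for `Γ(n)`. -/
def diagCoef (c : ℝ) (σ : Measure ℝ) (G : ℕ → ℝ) : ℕ → ℝ
  | 0 => 0
  | 1 => c * G 1
  | k + 2 => kappa σ k * G (k + 2) / (k + 2).factorial

lemma abs_diagCoef_le {σ : Measure ℝ} [IsFiniteMeasure σ] {R : ℝ} (hR0 : 0 ≤ R)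
    (hR : σ (Set.Icc (-R) R)ᶜ = 0) (c : ℝ) (G : ℕ → ℝ) (C : ℝ) (hC : 0 ≤ C)
    (hG : ∀ k, 1 ≤ k → |G k| ≤ C ^ k) (k : ℕ) :
    |diagCoef c σ G k| ≤ (|c| + kappa σ 0) * (((R + 1) * C) ^ k / k.factorial) := by
  have hκ : 0 ≤ kappa σ 0 := integral_nonneg fun t => by positivity
  match k with
  | 0 => simp only [diagCoef, abs_zero]; positivity
  | 1 =>
    simp only [diagCoef, abs_mul, pow_one, Nat.factorial_one, Nat.cast_one, div_one]
    have := hG 1 le_rfl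
    rw [pow_one] at this
    have h2 : C ≤ (R + 1) * C := by nlinarith
    exact mul_le_mul (by linarith) (this.trans h2) (abs_nonneg _) (by positivity)
  | k + 2 =>
    simp only [diagCoef]
    rw [abs_div, Nat.abs_cast, abs_mul, ← mul_div_assoc]
    refine div_le_div_of_nonneg_right ?_ (Nat.cast_nonneg _)
    have h1 := abs_kappa_le hR k
    have h2 := hG (k + 2) (by omega)
    have h3 : R ^ k ≤ (R + 1) ^ (k + 2) :=
      (pow_le_pow_left₀ hR0 (by linarith) k).trans (pow_le_pow_right₀ (by linarith) (by omega))
    calc |kappa σ k| * |G (k + 2)| ≤ ((R + 1) ^ (k + 2) * kappa σ 0) * C ^ (k + 2) := by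
          refine mul_le_mul (h1.trans ?_) h2 (abs_nonneg _) (by positivity)
          gcongr
      _ = kappa σ 0 * ((R + 1) * C) ^ (k + 2) := by rw [mul_pow]; ring
      _ ≤ (|c| + kappa σ 0) * ((R + 1) * C) ^ (k + 2) := by
          gcongr
          linarith [abs_nonneg c]

/-- Interchange of limits: `f` converges if it is approximated by convergent sequences `p m` with
errors whose limits in `N` vanish as `m → ∞`. -/
lemma tendsto_of_approx {f : ℕ → ℂ} {p : ℕ → ℕ → ℂ} {e : ℕ → ℕ → ℝ} {p' : ℕ → ℂ} {e' : ℕ → ℝ}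
    {L : ℂ} (h : ∀ m N, ‖f N - p m N‖ ≤ e m N) (hp : ∀ m, Tendsto (p m) atTop (𝓝 (p' m)))
    (he : ∀ m, Tendsto (e m) atTop (𝓝 (e' m))) (he' : Tendsto e' atTop (𝓝 0))
    (hp' : Tendsto p' atTop (𝓝 L)) : Tendsto f atTop (𝓝 L) := by
  rw [Metric.tendsto_atTop']
  intro ε hε
  have h1 := he'.eventually (gt_mem_nhds (show (0 : ℝ) < ε / 3 by positivity))
  have h2 := (Metric.tendsto_nhds.1 hp') (ε / 3) (by positivity)
  obtain ⟨m, hm1, hm2⟩ := (h1.and h2).exists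
  have h3 := (he m).eventually (gt_mem_nhds hm1)
  have h4 := (Metric.tendsto_nhds.1 (hp m)) (ε / 3) (by positivity)
  obtain ⟨N0, hN0⟩ := eventually_atTop.1 (h3.and h4)
  refine ⟨N0, fun N hN => ?_⟩
  obtain ⟨h5, h6⟩ := hN0 N hN.le
  have h7 := h m N
  rw [← dist_eq_norm] at h7
  have := dist_triangle4 (f N) (p m N) (p' m) L
  linarith

/-- The diagonal exponents converge: the rescaled moments of `X_N` turn the cumulants `cₖ` into
the cumulants `cₖ Γ(k)`. -/
lemma tendsto_exponent {Ω : Type*} [MeasurableSpace Ω] {P : Measure Ω}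
    [IsProbabilityMeasure P] {σ : Measure ℝ} [IsFiniteMeasure σ] {R : ℝ} (hR0 : 0 ≤ R)
    (hR : σ (Set.Icc (-R) R)ᶜ = 0) (γ : ℝ) (X : ℕ → Ω → ℝ)
    (hX : ∀ N, Measurable (X N)) (hX0 : ∀ N ω, 0 ≤ X N ω)
    (hXi : ∀ N k, Integrable (fun ω => X N ω ^ k) P) (n : ℕ → ℝ) (hn : ∀ N, 0 < n N)
    (G : ℕ → ℝ) (C : ℝ) (hC : 0 ≤ C) (hG : ∀ k, 1 ≤ k → |G k| ≤ C ^ k)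
    (hlim : ∀ k, Tendsto (fun N => (∫ ω, X N ω ^ (k + 1) ∂P) / n N ^ k) atTop (𝓝 (G (k + 1))))
    (s : ℝ) :
    Tendsto (fun N => (n N : ℂ) * ∫ ω, levyExponent γ σ (s * X N ω / n N) ∂P) atTop
      (𝓝 (∑' k, (diagCoef (γ + ∫ t, t ∂σ) σ G k : ℂ) * (Complex.I * s) ^ k)) := by
  set c := γ + ∫ t, t ∂σ with hc
  have hκ : 0 ≤ kappa σ 0 := integral_nonneg fun t => by positivity
  have hq := abs_diagCoef_le hR0 hR c G C hC hG
  have hX1 : ∀ N, Integrable (X N) P := fun N => by simpa using hXi N 1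
  -- compare with the Taylor polynomials of order `m + 1`, the remainder being controlled by the
  -- moment of order `m + 2`
  refine tendsto_of_approx
    (p := fun m N => (c : ℂ) * ((∫ ω, X N ω ^ (0 + 1) ∂P) / n N ^ 0 : ℝ) * (Complex.I * s) +
      ∑ k ∈ Finset.range m, (kappa σ k : ℂ) *
        ((∫ ω, X N ω ^ (k + 1 + 1) ∂P) / n N ^ (k + 1) : ℝ) /
        ((k + 2).factorial : ℂ) * (Complex.I * s) ^ (k + 2))
    (e := fun m N => |s| ^ (m + 2) / (m + 2).factorial * (R ^ m * kappa σ 0) *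
      ((∫ ω, X N ω ^ (m + 1 + 1) ∂P) / n N ^ (m + 1)))
    (p' := fun m => ∑ k ∈ Finset.range (m + 2), (diagCoef c σ G k : ℂ) * (Complex.I * s) ^ k)
    (e' := fun m => |s| ^ (m + 2) / (m + 2).factorial * (R ^ m * kappa σ 0) * G (m + 2))
    ?_ ?_ ?_ ?_ ?_
  · intro m N
    have hnN := hn N
    have hnc : (n N : ℂ) ≠ 0 := by exact_mod_cast hnN.ne'
    have hi := integrable_levyExponent_comp (X := fun ω => s * X N ω / n N) (P := P) hR γ
      (by have := hX N; fun_prop) (((hX1 N).const_mul s).div_const _)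
      ((((hXi N 2).const_mul (s ^ 2)).div_const (n N ^ 2)).congr
        (Eventually.of_forall fun ω => by simp only; ring))
    have hck : ∀ k : ℕ, Integrable (fun ω => (((s * X N ω / n N : ℝ) : ℂ)) ^ k) P := by
      intro k
      have := (((hXi N k).const_mul (s ^ k)).div_const (n N ^ k)).ofReal (𝕜 := ℂ)
      refine this.congr (Eventually.of_forall fun ω => ?_)
      simp only [Complex.coe_algebraMap]
      push_cast
      ring
    have hi1 : Integrable (fun ω => (c : ℂ) * (Complex.I * ((s * X N ω / n N : ℝ) : ℂ))) P := by
      have := (hck 1)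
      simp only [pow_one] at this
      exact (this.const_mul _).const_mul _
    have hi2 : ∀ k ∈ Finset.range m, Integrable (fun ω => (kappa σ k : ℂ) *
        (Complex.I * ((s * X N ω / n N : ℝ) : ℂ)) ^ (k + 2) / ((k + 2).factorial : ℂ)) P := by
      intro k _
      simp_rw [mul_pow]
      exact (((hck (k + 2)).const_mul _).const_mul _).div_const _
    have hmom : ∀ k : ℕ, ∫ ω, (((s * X N ω / n N : ℝ) : ℂ)) ^ k ∂P =
        (s : ℂ) ^ k * ((∫ ω, X N ω ^ k ∂P : ℝ) : ℂ) / (n N : ℂ) ^ k := by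
      intro k
      rw [← integral_complex_ofReal, ← integral_const_mul, ← integral_div]
      refine integral_congr_ae (Eventually.of_forall fun ω => ?_)
      simp only
      push_cast
      ring
    have e : ((n N : ℂ) * ∫ ω, levyExponent γ σ (s * X N ω / n N) ∂P) -
        ((c : ℂ) * ((∫ ω, X N ω ^ (0 + 1) ∂P) / n N ^ 0 : ℝ) * (Complex.I * s) +
      ∑ k ∈ Finset.range m, (kappa σ k : ℂ) *
        ((∫ ω, X N ω ^ (k + 1 + 1) ∂P) / n N ^ (k + 1) : ℝ) /
        ((k + 2).factorial : ℂ) * (Complex.I * s) ^ (k + 2)) =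
        n N * ∫ ω, (levyExponent γ σ (s * X N ω / n N) -
          ((c : ℂ) * (Complex.I * ((s * X N ω / n N : ℝ) : ℂ)) +
          ∑ k ∈ Finset.range m, (kappa σ k : ℂ) *
        (Complex.I * ((s * X N ω / n N : ℝ) : ℂ)) ^ (k + 2) / ((k + 2).factorial : ℂ))) ∂P := by
      rw [integral_sub hi (Integrable.fun_add hi1 (integrable_finsetSum _ hi2)),
        integral_add hi1 (integrable_finsetSum _ hi2), integral_finsetSum _ hi2, mul_sub, mul_add,
        Finset.mul_sum]
      congr 2
      · rw [integral_const_mul, integral_const_mul]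
        have := hmom 1
        simp only [pow_one] at this
        rw [this]
        simp only [zero_add, pow_one, pow_zero, div_one]
        field_simp
      · refine Finset.sum_congr rfl fun k _ => ?_
        simp_rw [mul_pow]
        rw [integral_div, integral_const_mul, integral_const_mul, hmom]
        push_cast
        field_simp
        ring
    rw [e, norm_mul, Complex.norm_real, Real.norm_eq_abs, abs_of_pos hnN]
    have hle : ‖∫ ω, (levyExponent γ σ (s * X N ω / n N) -
          ((c : ℂ) * (Complex.I * ((s * X N ω / n N : ℝ) : ℂ)) +
          ∑ k ∈ Finset.range m, (kappa σ k : ℂ) *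
        (Complex.I * ((s * X N ω / n N : ℝ) : ℂ)) ^ (k + 2) / ((k + 2).factorial : ℂ))) ∂P‖ ≤
        ∫ ω, |s| ^ (m + 2) / (m + 2).factorial * (R ^ m * kappa σ 0) / n N ^ (m + 2) *
          X N ω ^ (m + 2) ∂P := by
      refine norm_integral_le_of_norm_le ((hXi N _).const_mul _) (Eventually.of_forall fun ω => ?_)
      refine (levyExponent_rem hR γ m _).trans (le_of_eq ?_)
      rw [abs_div, abs_mul, abs_of_pos hnN, abs_of_nonneg (hX0 N ω), div_pow, mul_pow]
      field_simp
    rw [integral_const_mul] at hle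
    refine (mul_le_mul_of_nonneg_left hle hnN.le).trans (le_of_eq ?_)
    field_simp
    ring
  · intro m
    have e : ∑ k ∈ Finset.range (m + 2), (diagCoef c σ G k : ℂ) * (Complex.I * s) ^ k =
        (c : ℂ) * (G (0 + 1) : ℝ) * (Complex.I * s) +
      ∑ k ∈ Finset.range m, (kappa σ k : ℂ) * (G (k + 1 + 1) : ℝ) /
        ((k + 2).factorial : ℂ) * (Complex.I * s) ^ (k + 2) := by
      rw [Finset.sum_range_succ', Finset.sum_range_succ']
      simp [diagCoef]
      ring
    rw [e]
    have hc' : ∀ k, Tendsto (fun N => (((∫ ω, X N ω ^ (k + 1) ∂P) / n N ^ k : ℝ) : ℂ)) atTop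
        (𝓝 ((G (k + 1) : ℝ) : ℂ)) := fun k =>
      (Complex.continuous_ofReal.tendsto _).comp (hlim k)
    refine ((hc' 0).const_mul _ |>.mul_const _).add (tendsto_finsetSum _ fun k _ => ?_)
    exact (((hc' (k + 1)).const_mul _).div_const _).mul_const _
  · intro m
    exact (hlim (m + 1)).const_mul _
  · have hz := (Real.summable_pow_div_factorial (|s| * (R + 1) * C)).tendsto_atTop_zero
    have hz2 := ((tendsto_add_atTop_iff_nat 2).2 hz).const_mul (kappa σ 0)
    rw [mul_zero] at hz2
    refine squeeze_zero_norm (fun m => ?_) hz2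
    rw [norm_mul, Real.norm_eq_abs, Real.norm_eq_abs,
      abs_of_nonneg (show 0 ≤ |s| ^ (m + 2) / (m + 2).factorial * (R ^ m * kappa σ 0) by positivity)]
    have h3 : R ^ m ≤ (R + 1) ^ (m + 2) :=
      (pow_le_pow_left₀ hR0 (by linarith) m).trans (pow_le_pow_right₀ (by linarith) (by omega))
    calc _ ≤ |s| ^ (m + 2) / (m + 2).factorial * ((R + 1) ^ (m + 2) * kappa σ 0) * C ^ (m + 2) := by
          gcongr
          exact hG _ (by omega)
      _ = _ := by rw [mul_pow, mul_pow]; ring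
  · have hs : Summable fun k => (diagCoef c σ G k : ℂ) * (Complex.I * s) ^ k := by
      refine Summable.of_norm_bounded (g := fun k => (|c| + kappa σ 0) *
        (((R + 1) * C * |s|) ^ k / k.factorial))
        ((Real.summable_pow_div_factorial _).mul_left _) fun k => ?_
      rw [norm_mul, norm_pow, norm_mul, Complex.norm_I, one_mul, Complex.norm_real,
        Complex.norm_real, Real.norm_eq_abs, Real.norm_eq_abs, mul_pow _ |s|, mul_div_right_comm,
        ← mul_assoc]
      exact mul_le_mul_of_nonneg_right (hq k) (by positivity)
    exact (tendsto_add_atTop_iff_nat 2).2 hs.hasSum.tendsto_sum_nat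

/-! ### Spectral inequalities for Hermitian matrices -/

lemma trace_pow_eq {n : ℕ} {M : Matrix (Fin n) (Fin n) ℂ} (hM : M.IsHermitian) (p : ℕ) :
    (M ^ p).trace = ((∑ k, hM.eigenvalues k ^ p : ℝ) : ℂ) := by
  have h := hM.conjStarAlgAut_star_eigenvectorUnitary
  have h1 : (Unitary.conjStarAlgAut ℂ _ (star hM.eigenvectorUnitary)) (M ^ p) =
      diagonal (fun k => ((hM.eigenvalues k ^ p : ℝ) : ℂ)) := by
    rw [map_pow, h, diagonal_pow]
    congr 1
    ext k
    simp
  have h2 := congrArg Matrix.trace h1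
  rw [Unitary.conjStarAlgAut_star_apply, Matrix.trace_mul_cycle,
    Matrix.mem_unitaryGroup_iff.1 hM.eigenvectorUnitary.2, one_mul, trace_diagonal] at h2
  rw [h2]
  push_cast
  rfl

lemma diag_eq_sum {n : ℕ} {M : Matrix (Fin n) (Fin n) ℂ} (hM : M.IsHermitian) (i : Fin n) :
    (M i i).re = ∑ k, ‖(hM.eigenvectorUnitary : Matrix (Fin n) (Fin n) ℂ) i k‖ ^ 2 *
      hM.eigenvalues k := by
  have h := congrFun (congrFun hM.spectral_theorem i) i
  rw [Unitary.conjStarAlgAut_apply, mul_apply] at h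
  have h2 := congrArg Complex.re h
  rw [h2, Complex.re_sum]
  refine Finset.sum_congr rfl fun k _ => ?_
  rw [mul_diagonal, star_apply]
  have e : (hM.eigenvectorUnitary : Matrix (Fin n) (Fin n) ℂ) i k *
      (RCLike.ofReal ∘ hM.eigenvalues) k *
      star ((hM.eigenvectorUnitary : Matrix (Fin n) (Fin n) ℂ) i k) =
      ((‖(hM.eigenvectorUnitary : Matrix (Fin n) (Fin n) ℂ) i k‖ ^ 2 *
      hM.eigenvalues k : ℝ) : ℂ) := by
    rw [mul_right_comm]
    have := Complex.mul_conj' ((hM.eigenvectorUnitary : Matrix (Fin n) (Fin n) ℂ) i k)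
    rw [← starRingEnd_apply, this]
    simp
  rw [e, Complex.ofReal_re]

lemma row_sum {n : ℕ} (V : Matrix.unitaryGroup (Fin n) ℂ) (i : Fin n) :
    ∑ k, ‖(V : Matrix (Fin n) (Fin n) ℂ) i k‖ ^ 2 = 1 := by
  have h := congrFun (congrFun (Matrix.mem_unitaryGroup_iff.1 V.2) i) i
  rw [mul_apply, one_apply_eq] at h
  have h2 := congrArg Complex.re h
  rw [Complex.re_sum, Complex.one_re] at h2
  rw [← h2]
  refine Finset.sum_congr rfl fun k _ => ?_
  rw [star_apply, ← starRingEnd_apply, Complex.mul_conj', ← Complex.ofReal_pow, Complex.ofReal_re]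

lemma col_sum {n : ℕ} (V : Matrix.unitaryGroup (Fin n) ℂ) (k : Fin n) :
    ∑ i, ‖(V : Matrix (Fin n) (Fin n) ℂ) i k‖ ^ 2 = 1 := by
  have h := row_sum (star V) k
  simpa [star_apply] using h

lemma sum_eigenvalues_sq {n : ℕ} {M : Matrix (Fin n) (Fin n) ℂ} (hM : M.IsHermitian) :
    ∑ k, hM.eigenvalues k ^ 2 = ∑ i, ∑ j, ‖M i j‖ ^ 2 := by
  have h := trace_pow_eq hM 2
  rw [pow_two, Matrix.trace] at h
  have : ((∑ i, ∑ j, ‖M i j‖ ^ 2 : ℝ) : ℂ) = ((∑ k, hM.eigenvalues k ^ 2 : ℝ) : ℂ) := by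
    rw [← h]
    push_cast
    refine Finset.sum_congr rfl fun i _ => ?_
    rw [diag_apply, mul_apply]
    refine Finset.sum_congr rfl fun j _ => ?_
    rw [← hM.apply j i, ← Complex.mul_conj', starRingEnd_apply]
  exact_mod_cast this.symm

/-- A continuous cut-off, equal to `0` on `[-ρ, ρ]` and to `1` off `[-ρ-1, ρ+1]`. -/
def cutoff (ρ x : ℝ) : ℝ := min 1 (max (|x| - ρ) 0)

lemma excess_le (ρ x δ : ℝ) (hρ : 0 ≤ ρ) (hδ : 0 < δ) :
    max (|x| - (ρ + 1)) 0 ≤ δ * x ^ 2 + cutoff ρ x / δ := by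
  have h0 : 0 ≤ cutoff ρ x := le_min zero_le_one (le_max_right _ _)
  have hr : 0 ≤ δ * x ^ 2 + cutoff ρ x / δ := by positivity
  refine max_le ?_ hr
  by_cases h : |x| ≤ ρ + 1
  · linarith
  · push Not at h
    have : cutoff ρ x = 1 := min_eq_left (le_max_of_le_left (by linarith))
    rw [this]
    have h1 : |x| ≤ δ * x ^ 2 + 1 / δ := by
      rw [← sq_abs x, ← sub_nonneg]
      have : δ * |x| ^ 2 + 1 / δ - |x| = ((δ * |x| - 1) ^ 2 + δ * |x|) / δ := by
        field_simp
        ring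
      rw [this]
      positivity
    linarith

/-- The diagonal of a Hermitian matrix is an average of its eigenvalues by a doubly stochastic
matrix, so convexity compares the excess of the diagonal over `ρ + 1` with that of the spectrum;
the latter is split into a second moment and a bounded test function. -/
lemma sum_diag_excess_le {n : ℕ} {M : Matrix (Fin n) (Fin n) ℂ} (hM : M.IsHermitian)
    (ρ δ : ℝ) (hρ : 0 ≤ ρ) (hδ : 0 < δ) :
    ∑ i, max (|(M i i).re| - (ρ + 1)) 0 ≤
      δ * ∑ i, ∑ j, ‖M i j‖ ^ 2 + (∑ k, cutoff ρ (hM.eigenvalues k)) / δ := by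
  set V := hM.eigenvectorUnitary with hV
  have h1 : ∀ i, max (|(M i i).re| - (ρ + 1)) 0 ≤
      ∑ k, ‖(V : Matrix (Fin n) (Fin n) ℂ) i k‖ ^ 2 *
        max (|hM.eigenvalues k| - (ρ + 1)) 0 := by
    intro i
    refine max_le ?_ (Finset.sum_nonneg fun k _ => mul_nonneg (sq_nonneg _) (le_max_right _ _))
    rw [diag_eq_sum hM i, ← hV]
    calc _ ≤ (∑ k, ‖(V : Matrix (Fin n) (Fin n) ℂ) i k‖ ^ 2 * |hM.eigenvalues k|) -
          ∑ k, ‖(V : Matrix (Fin n) (Fin n) ℂ) i k‖ ^ 2 * (ρ + 1) := by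
          rw [← Finset.sum_mul, row_sum, one_mul]
          refine sub_le_sub_right ((Finset.abs_sum_le_sum_abs _ _).trans (le_of_eq ?_)) _
          refine Finset.sum_congr rfl fun k _ => ?_
          rw [abs_mul, abs_of_nonneg (sq_nonneg _)]
      _ = ∑ k, ‖(V : Matrix (Fin n) (Fin n) ℂ) i k‖ ^ 2 * (|hM.eigenvalues k| - (ρ + 1)) := by
          rw [← Finset.sum_sub_distrib]
          exact Finset.sum_congr rfl fun k _ => by ring
      _ ≤ _ := by
          gcongr with k _
          exact le_max_left _ _
  calc _ ≤ ∑ i, ∑ k, ‖(V : Matrix (Fin n) (Fin n) ℂ) i k‖ ^ 2 *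
        max (|hM.eigenvalues k| - (ρ + 1)) 0 := Finset.sum_le_sum fun i _ => h1 i
    _ = ∑ k, max (|hM.eigenvalues k| - (ρ + 1)) 0 := by
        rw [Finset.sum_comm]
        refine Finset.sum_congr rfl fun k _ => ?_
        rw [← Finset.sum_mul, col_sum, one_mul]
    _ ≤ ∑ k, (δ * hM.eigenvalues k ^ 2 + cutoff ρ (hM.eigenvalues k) / δ) :=
        Finset.sum_le_sum fun k _ => excess_le ρ _ δ hρ hδ
    _ = _ := by
        rw [Finset.sum_add_distrib, ← Finset.mul_sum, ← Finset.sum_div, sum_eigenvalues_sq]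

/-- Linear statistics of the eigenvalues are measurable: by Weierstrass approximation they are
pointwise limits of traces of polynomials in the matrix. -/
lemma measurable_sum_eigenvalues {Ω : Type*} [MeasurableSpace Ω] {n : ℕ}
    {M : Ω → Matrix (Fin n) (Fin n) ℂ} (hM : ∀ i j, Measurable fun ω => M ω i j)
    (hH : ∀ ω, (M ω).IsHermitian) (f : ℝ → ℝ) (hf : Continuous f) :
    Measurable fun ω => ∑ k, f ((hH ω).eigenvalues k) := by
  have hpow : ∀ p i j, Measurable fun ω => (M ω ^ p) i j := by
    intro p
    induction p with
    | zero => intro i j; simp only [pow_zero]; exact measurable_const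
    | succ p ih =>
      intro i j
      simp only [pow_succ, mul_apply]
      exact Finset.measurable_fun_sum _ fun k _ => (ih i k).mul (hM k j)
  have hps : ∀ p : ℕ, Measurable fun ω => ∑ k, (hH ω).eigenvalues k ^ p := by
    intro p
    have : (fun ω => ∑ k, (hH ω).eigenvalues k ^ p) = fun ω => (∑ i, (M ω ^ p) i i).re := by
      ext ω
      have := trace_pow_eq (hH ω) p
      rw [Matrix.trace] at this
      simp only [diag_apply] at this
      rw [this, Complex.ofReal_re]
    rw [this]
    exact Complex.measurable_re.comp (Finset.measurable_fun_sum _ fun i _ => hpow p i i)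
  have hpoly : ∀ q : Polynomial ℝ, Measurable fun ω => ∑ k, q.eval ((hH ω).eigenvalues k) := by
    intro q
    have : (fun ω => ∑ k, q.eval ((hH ω).eigenvalues k)) = fun ω =>
        ∑ p ∈ Finset.range (q.natDegree + 1), q.coeff p * ∑ k, (hH ω).eigenvalues k ^ p := by
      ext ω
      simp_rw [Polynomial.eval_eq_sum_range, Finset.mul_sum]
      rw [Finset.sum_comm]
    rw [this]
    exact Finset.measurable_fun_sum _ fun p _ => (hps p).const_mul _
  have happ : ∀ m : ℕ, ∃ q : Polynomial ℝ, ∀ x ∈ Set.Icc (-(m : ℝ)) m,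
      |q.eval x - f x| < 1 / ((m : ℝ) + 1) := fun m =>
    exists_polynomial_near_of_continuousOn _ _ f hf.continuousOn _ (by positivity)
  choose q hq using happ
  refine measurable_of_tendsto_metrizable (fun m => hpoly (q m)) ?_
  rw [tendsto_pi_nhds]
  intro ω
  refine tendsto_finsetSum _ fun k _ => ?_
  rw [tendsto_iff_dist_tendsto_zero]
  refine squeeze_zero' (Eventually.of_forall fun m => dist_nonneg) ?_
    (tendsto_one_div_add_atTop_nhds_zero_nat (𝕜 := ℝ))
  obtain ⟨m0, hm0⟩ := exists_nat_ge |(hH ω).eigenvalues k|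
  filter_upwards [eventually_ge_atTop m0] with m hm
  rw [Real.dist_eq]
  refine (hq m _ (abs_le.1 (hm0.trans ?_))).le
  exact_mod_cast hm

/-! ### Laws of the entries -/

/-- The Fourier transform of the real linear forms of a single matrix entry: the entry `M i j`
behaves like the jumps `U i * conj (U j)` of the underlying Lévy process. -/
lemma entry_law {Ω : Type*} [MeasurableSpace Ω] {P : Measure Ω} {γ : ℝ} {σ : Measure ℝ}
    {U : (N : ℕ) → Ω → Fin N → ℂ} {M : (N : ℕ) → Ω → Matrix (Fin N) (Fin N) ℂ}
    (hHerm : ∀ N ω, (M N ω).IsHermitian) (hlaw : HasMatrixLaw P γ σ U M)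
    {N : ℕ} (hN : 1 ≤ N) (i j : Fin N) (θ : ℂ) (s : ℝ) :
    ∫ ω, Complex.exp (Complex.I * (s * (2 * (star θ * M N ω i j).re) : ℝ)) ∂P =
      Complex.exp ((N : ℂ) * ∫ ω, levyExponent γ σ
        (s * (2 * (star θ * (U N ω i * star (U N ω j))).re) / N) ∂P) := by
  set A : Matrix (Fin N) (Fin N) ℂ := single i j (s * θ) + single j i (s * star θ) with hA
  have hAH : A.IsHermitian := by
    rw [Matrix.IsHermitian, hA, conjTranspose_add, conjTranspose_single, conjTranspose_single,
      add_comm]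
    simp
  have h := hlaw N hN A hAH
  have e1 : ∀ ω, (A * M N ω).trace = ((s * (2 * (star θ * M N ω i j).re) : ℝ) : ℂ) := by
    intro ω
    rw [hA, add_mul, trace_add, trace_single_mul, trace_single_mul, ← (hHerm N ω).apply j i]
    apply Complex.ext <;> simp <;> ring
  have e2 : ∀ ω, (star (U N ω) ⬝ᵥ A.mulVec (U N ω)).re =
      s * (2 * (star θ * (U N ω i * star (U N ω j))).re) := by
    intro ω
    rw [hA, add_mulVec, dotProduct_add, single_mulVec_eq, single_mulVec_eq, dotProduct_smul,
      dotProduct_smul, dotProduct_single_one, dotProduct_single_one]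
    simp
    ring
  simp_rw [e1, e2] at h
  exact h

lemma integrable_prod {Ω : Type*} [MeasurableSpace Ω] {P : Measure Ω}
    {U : (N : ℕ) → Ω → Fin N → ℂ} {Γ : (k : ℕ) → (Fin k → ℕ) → ℝ} (hU : HypGamma P U Γ)
    {N : ℕ} (i j : Fin N) :
    Integrable (fun ω => U N ω i * star (U N ω j)) P ∧
      Integrable (fun ω => ‖U N ω i‖ ^ 2 * ‖U N ω j‖ ^ 2) P := by
  have hm : ∀ i, Measurable fun ω => U N ω i := fun i => (measurable_pi_apply i).comp (hU.meas N)
  have h1 := hm i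
  have h2 := hm j
  constructor
  · refine ((hU.moments N i 2).add (hU.moments N j 2)).mono' (by fun_prop)
      (Eventually.of_forall fun ω => ?_)
    rw [norm_mul, norm_star, Pi.add_apply]
    nlinarith [sq_nonneg (‖U N ω i‖ - ‖U N ω j‖), sq_nonneg (‖U N ω i‖ + ‖U N ω j‖)]
  · refine ((hU.moments N i 4).add (hU.moments N j 4)).mono' (by fun_prop)
      (Eventually.of_forall fun ω => ?_)
    rw [Real.norm_of_nonneg (by positivity), Pi.add_apply]
    nlinarith [sq_nonneg (‖U N ω i‖ ^ 2 - ‖U N ω j‖ ^ 2),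
      sq_nonneg (‖U N ω i‖ ^ 2 + ‖U N ω j‖ ^ 2)]

/-- The second moment of the entry `M i j` is controlled by the mean and the second moment of
`U i * conj (U j)`. -/
lemma entry_sq {Ω : Type*} [MeasurableSpace Ω] {P : Measure Ω} [IsProbabilityMeasure P]
    {γ : ℝ} {σ : Measure ℝ} [IsFiniteMeasure σ] {R : ℝ}
    (hR : σ (Set.Icc (-R) R)ᶜ = 0) (hσ : σ ≠ 0)
    {U : (N : ℕ) → Ω → Fin N → ℂ} {Γ : (k : ℕ) → (Fin k → ℕ) → ℝ} (hU : HypGamma P U Γ)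
    {M : (N : ℕ) → Ω → Matrix (Fin N) (Fin N) ℂ} (hMmeas : ∀ N, Measurable (M N))
    (hHerm : ∀ N ω, (M N ω).IsHermitian) (hlaw : HasMatrixLaw P γ σ U M)
    {N : ℕ} (hN : 1 ≤ N) (i j : Fin N) :
    Integrable (fun ω => ‖M N ω i j‖ ^ 2) P ∧
      ∫ ω, ‖M N ω i j‖ ^ 2 ∂P ≤
        (γ + ∫ t, t ∂σ) ^ 2 * ‖∫ ω, U N ω i * star (U N ω j) ∂P‖ ^ 2 +
          2 * kappa σ 0 * (∫ ω, ‖U N ω i‖ ^ 2 * ‖U N ω j‖ ^ 2 ∂P) / N := by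
  have hm : ∀ i, Measurable fun ω => U N ω i := fun i => (measurable_pi_apply i).comp (hU.meas N)
  have hmi := hm i
  have hmj := hm j
  have hMm : Measurable fun ω => M N ω i j :=
    (measurable_pi_apply j).comp ((measurable_pi_apply i).comp (hMmeas N))
  obtain ⟨hW, hW2⟩ := integrable_prod hU i j
  set W : Ω → ℂ := fun ω => U N ω i * star (U N ω j) with hWdef
  have hWm : Measurable W := by fun_prop
  have hWn : ∀ ω, ‖U N ω i‖ ^ 2 * ‖U N ω j‖ ^ 2 = (W ω).re ^ 2 + (W ω).im ^ 2 := by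
    intro ω
    have := Complex.sq_norm (W ω)
    rw [Complex.normSq_apply] at this
    rw [← mul_pow]
    have e : ‖W ω‖ = ‖U N ω i‖ * ‖U N ω j‖ := by rw [hWdef]; simp
    rw [← e, this]
    ring
  simp_rw [hWn] at hW2 ⊢
  have hre2 : Integrable (fun ω => (W ω).re ^ 2) P :=
    hW2.mono' (by fun_prop) (Eventually.of_forall fun ω => by
      rw [Real.norm_of_nonneg (sq_nonneg _)]; nlinarith [sq_nonneg (W ω).im])
  have him2 : Integrable (fun ω => (W ω).im ^ 2) P :=
    hW2.mono' (by fun_prop) (Eventually.of_forall fun ω => by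
      rw [Real.norm_of_nonneg (sq_nonneg _)]; nlinarith [sq_nonneg (W ω).re])
  have hn : (0 : ℝ) < N := by exact_mod_cast hN
  have hre : Integrable (fun ω => (W ω).re) P := hW.re
  have him : Integrable (fun ω => (W ω).im) P := hW.im
  -- `‖M i j‖²` is recovered from the linear forms with `θ = 1` and `θ = I`
  have h1 := second_moment_of_law hR hσ γ (P := P) (Q := fun ω => 2 * (W ω).re)
    (Y := fun ω => 2 * (M N ω i j).re) (by fun_prop) (hre.const_mul 2)
    ((hre2.const_mul 4).congr (Eventually.of_forall fun ω => by simp only; ring))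
    (by fun_prop) hn (fun s => by
      have := entry_law hHerm hlaw hN i j 1 s
      rw [Complex.ofReal_natCast]
      simpa only [star_one, one_mul] using this)
  have h2 := second_moment_of_law hR hσ γ (P := P) (Q := fun ω => 2 * (W ω).im)
    (Y := fun ω => 2 * (M N ω i j).im) (by fun_prop) (him.const_mul 2)
    ((him2.const_mul 4).congr (Eventually.of_forall fun ω => by simp only; ring))
    (by fun_prop) hn (fun s => by
      have := entry_law hHerm hlaw hN i j Complex.I s
      have e : ∀ z : ℂ, (star Complex.I * z).re = z.im := fun z => by simp
      rw [Complex.ofReal_natCast]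
      simpa only [e] using this)
  have hMn : ∀ ω, ‖M N ω i j‖ ^ 2 =
      ((2 * (M N ω i j).re) ^ 2 + (2 * (M N ω i j).im) ^ 2) / 4 := by
    intro ω
    rw [Complex.sq_norm, Complex.normSq_apply]
    ring
  simp_rw [hMn]
  refine ⟨(h1.1.add h2.1).div_const 4, ?_⟩
  rw [integral_div, integral_add h1.1 h2.1, integral_add hre2 him2]
  have hEW : ‖∫ ω, W ω ∂P‖ ^ 2 = (∫ ω, (W ω).re ∂P) ^ 2 + (∫ ω, (W ω).im ∂P) ^ 2 := by
    have a1 : ∫ ω, (W ω).re ∂P = (∫ ω, W ω ∂P).re := integral_re hW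
    have a2 : ∫ ω, (W ω).im ∂P = (∫ ω, W ω ∂P).im := integral_im hW
    rw [a1, a2, Complex.sq_norm, Complex.normSq_apply]
    ring
  have h1' := h1.2
  have h2' := h2.2
  simp_rw [mul_pow, integral_const_mul] at h1' h2' ⊢
  rw [hEW]
  have := add_le_add h1' h2'
  calc _ ≤ _ := div_le_div_of_nonneg_right this (by norm_num : (0 : ℝ) ≤ 4)
    _ = _ := by ring

/-! ### Consequences of Hypothesis (Γ) -/

lemma integral_exch {Ω : Type*} [MeasurableSpace Ω] {P : Measure Ω}
    {U : (N : ℕ) → Ω → Fin N → ℂ} {Γ : (k : ℕ) → (Fin k → ℕ) → ℝ} (hU : HypGamma P U Γ)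
    {E : Type*} [NormedAddCommGroup E] [NormedSpace ℝ E]
    {N : ℕ} (e : Equiv.Perm (Fin N)) {F : (Fin N → ℂ) → E} (hF : StronglyMeasurable F) :
    ∫ ω, F (fun i => U N ω (e i)) ∂P = ∫ ω, F (U N ω) ∂P := by
  have h1 : Measurable fun ω => fun i => U N ω (e i) :=
    measurable_pi_lambda _ fun i => (measurable_pi_apply (e i)).comp (hU.meas N)
  rw [← integral_map h1.aemeasurable hF.aestronglyMeasurable, hU.exchangeable,
    integral_map (hU.meas N).aemeasurable hF.aestronglyMeasurable]

lemma integral_exch_one {Ω : Type*} [MeasurableSpace Ω] {P : Measure Ω}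
    {U : (N : ℕ) → Ω → Fin N → ℂ} {Γ : (k : ℕ) → (Fin k → ℕ) → ℝ} (hU : HypGamma P U Γ)
    {E : Type*} [NormedAddCommGroup E] [NormedSpace ℝ E]
    {N : ℕ} (i a : Fin N) {g : ℂ → E} (hg : StronglyMeasurable g) :
    ∫ ω, g (U N ω i) ∂P = ∫ ω, g (U N ω a) ∂P := by
  have := integral_exch hU (Equiv.swap a i) (F := fun u => g (u a))
    (hg.comp_measurable (measurable_pi_apply a))
  simpa using this

/-- Exchangeability for pairs of distinct entries. -/
lemma integral_exch_two {Ω : Type*} [MeasurableSpace Ω] {P : Measure Ω}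
    {U : (N : ℕ) → Ω → Fin N → ℂ} {Γ : (k : ℕ) → (Fin k → ℕ) → ℝ} (hU : HypGamma P U Γ)
    {E : Type*} [NormedAddCommGroup E] [NormedSpace ℝ E]
    {N : ℕ} {i j a b : Fin N} (hij : i ≠ j) (hab : a ≠ b) {g : ℂ × ℂ → E}
    (hg : StronglyMeasurable g) :
    ∫ ω, g (U N ω i, U N ω j) ∂P = ∫ ω, g (U N ω a, U N ω b) ∂P := by
  -- a permutation sending `a` to `i` and `b` to `j`
  have hb : i ≠ Equiv.swap a i b := by
    intro h
    have h2 := congrArg (Equiv.swap a i) h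
    rw [Equiv.swap_apply_right, Equiv.swap_apply_self] at h2
    exact hab h2
  have := integral_exch hU (Equiv.swap (Equiv.swap a i b) j * Equiv.swap a i)
    (F := fun u => g (u a, u b))
    (hg.comp_measurable ((measurable_pi_apply a).prodMk (measurable_pi_apply b)))
  simp only [Equiv.Perm.mul_apply, Equiv.swap_apply_left] at this
  rw [Equiv.swap_apply_of_ne_of_ne hb hij] at this
  exact this

/-- The defining limits of `Γ(k)`, along matrix sizes `N + 1`, for which the entry `0` exists. -/
lemma tendsto_moment {Ω : Type*} [MeasurableSpace Ω] {P : Measure Ω}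
    {U : (N : ℕ) → Ω → Fin N → ℂ} {Γ : (k : ℕ) → (Fin k → ℕ) → ℝ} (hU : HypGamma P U Γ) (k : ℕ) :
    Tendsto (fun N : ℕ => (∫ ω, (‖U (N + 1) ω 0‖ ^ 2) ^ (k + 1) ∂P) / ((N + 1 : ℕ) : ℝ) ^ k) atTop
      (𝓝 (Γ 1 fun _ => k + 1)) := by
  have h := (hU.gammaLim 1 le_rfl (fun _ => k + 1) (fun _ => by omega)).comp (tendsto_add_atTop_nat 1)
  refine h.congr fun N => ?_
  simp only [Function.comp_apply, Finset.univ_unique, Fin.default_eq_zero, Finset.prod_singleton,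
    Nat.add_sub_cancel]
  rw [integral_div]
  simp only [entry, Fin.val_zero, Nat.succ_pos, dif_pos, ← pow_mul]
  rfl

/-- The mean square of the entries is of order `1` on the diagonal and of order `1 / N` off the
diagonal. -/
lemma entry_bound {Ω : Type*} [MeasurableSpace Ω] {P : Measure Ω} [IsProbabilityMeasure P]
    {γ : ℝ} {σ : Measure ℝ} [IsFiniteMeasure σ] {R : ℝ}
    (hR : σ (Set.Icc (-R) R)ᶜ = 0) (hσ : σ ≠ 0)
    {U : (N : ℕ) → Ω → Fin N → ℂ} {Γ : (k : ℕ) → (Fin k → ℕ) → ℝ} (hU : HypGamma P U Γ)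
    {M : (N : ℕ) → Ω → Matrix (Fin N) (Fin N) ℂ} (hMmeas : ∀ N, Measurable (M N))
    (hHerm : ∀ N ω, (M N ω).IsHermitian) (hlaw : HasMatrixLaw P γ σ U M) :
    ∃ B : ℝ, 0 ≤ B ∧ ∀ᶠ N in atTop, ∀ i j : Fin (N + 1),
      ∫ ω, ‖M (N + 1) ω i j‖ ^ 2 ∂P ≤ if i = j then B else B / ((N + 1 : ℕ) : ℝ) := by
  have hκ := kappa_zero_pos hR hσ
  set c := γ + ∫ t, t ∂σ with hc
  have hL1 := (tendsto_moment hU 0).eventually (ge_mem_nhds (lt_add_one _))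
  have hL2 := (tendsto_moment hU 1).eventually (ge_mem_nhds (lt_add_one _))
  have hL3 := ((hU.gammaLim 2 one_le_two (fun _ => 1) (fun _ => le_rfl)).comp
    (tendsto_add_atTop_nat 1)).eventually (ge_mem_nhds (lt_add_one _))
  obtain ⟨C, hC⟩ := hU.momBound 1 le_rfl (fun _ => 0) (fun _ => 1)
  have hL4 := (tendsto_add_atTop_nat 1).eventually hC
  set L1 := Γ 1 (fun _ => 0 + 1) + 1
  set L2 := Γ 1 (fun _ => 1 + 1) + 1
  set L3 := Γ 2 (fun _ => 1) + 1
  have hB : 0 ≤ c ^ 2 * L1 ^ 2 + 2 * kappa σ 0 * |L2| + (c ^ 2 * C ^ 2 + 2 * kappa σ 0 * |L3|) := by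
    positivity
  refine ⟨_, hB, ?_⟩
  filter_upwards [hL1, hL2, hL3, hL4, eventually_ge_atTop 1] with N h1 h2 h3 h4 hN i j
  have hn : (1 : ℝ) ≤ ((N + 1 : ℕ) : ℝ) := by exact_mod_cast Nat.le_add_left 1 N
  have hn0 : (0 : ℝ) < ((N + 1 : ℕ) : ℝ) := by linarith
  refine (entry_sq hR hσ hU hMmeas hHerm hlaw (Nat.le_add_left 1 N) i j).2.trans ?_
  rw [← hc]
  split_ifs with hij
  · subst hij
    have e1 : ‖∫ ω, U (N + 1) ω i * star (U (N + 1) ω i) ∂P‖ =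
        ∫ ω, (‖U (N + 1) ω 0‖ ^ 2) ^ (0 + 1) ∂P := by
      have : ∀ z : ℂ, z * star z = ((‖z‖ ^ 2 : ℝ) : ℂ) := fun z => by
        rw [← starRingEnd_apply, Complex.mul_conj']; push_cast; rfl
      simp_rw [this]
      rw [integral_complex_ofReal, Complex.norm_real, Real.norm_of_nonneg
        (integral_nonneg fun ω => sq_nonneg _)]
      simp only [zero_add, pow_one]
      exact integral_exch_one hU i 0 (g := fun z : ℂ => ‖z‖ ^ 2)
        (by fun_prop : Continuous _).stronglyMeasurable
    have e2 : ∫ ω, ‖U (N + 1) ω i‖ ^ 2 * ‖U (N + 1) ω i‖ ^ 2 ∂P =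
        ∫ ω, (‖U (N + 1) ω 0‖ ^ 2) ^ (1 + 1) ∂P := by
      rw [integral_exch_one hU i 0 (g := fun z : ℂ => ‖z‖ ^ 2 * ‖z‖ ^ 2)
        (by fun_prop : Continuous _).stronglyMeasurable]
      simp only [← pow_two, one_add_one_eq_two]
    rw [e1, e2]
    have h0 : 0 ≤ ∫ ω, (‖U (N + 1) ω 0‖ ^ 2) ^ (0 + 1) ∂P :=
      integral_nonneg fun ω => by positivity
    rw [pow_zero, div_one] at h1
    rw [pow_one] at h2
    have a1 := mul_le_mul_of_nonneg_left (pow_le_pow_left₀ h0 h1 2) (sq_nonneg c)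
    have a2 := mul_le_mul_of_nonneg_left (h2.trans (le_abs_self _)) (by positivity : 0 ≤ 2 * kappa σ 0)
    rw [← mul_div_assoc] at a2
    have a3 : 0 ≤ c ^ 2 * C ^ 2 + 2 * kappa σ 0 * |L3| := by positivity
    linarith
  · have h01 : (⟨0, by omega⟩ : Fin (N + 1)) ≠ ⟨1, by omega⟩ := by
      intro h
      exact absurd (Fin.mk.inj_iff.1 h) (by norm_num)
    have p0 : 0 < N + 1 := by omega
    have p1 : 1 < N + 1 := by omega
    have e1 := integral_exch_two hU hij h01 (g := fun p : ℂ × ℂ => p.1 * star p.2)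
      (by fun_prop : Continuous _).stronglyMeasurable
    have e2 := integral_exch_two hU hij h01 (g := fun p : ℂ × ℂ => ‖p.1‖ ^ 2 * ‖p.2‖ ^ 2)
      (by fun_prop : Continuous _).stronglyMeasurable
    simp only at e1 e2
    rw [e1, e2]
    have h4' : ‖∫ ω, U (N + 1) ω ⟨0, by omega⟩ * star (U (N + 1) ω ⟨1, by omega⟩) ∂P‖ ≤
        C * ((N + 1 : ℕ) : ℝ)⁻¹ := by
      have hz : ((1 : ℕ) : ℤ) - ((Finset.univ.image (fun _ : Fin 1 => 0) ∪
        Finset.univ.image (fun _ : Fin 1 => 1) : Finset ℕ).card : ℤ) = -1 := by decide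
      rw [hz, _root_.zpow_neg_one] at h4
      simpa [entry, p0, p1] using h4
    have h3' : ∫ ω, ‖U (N + 1) ω ⟨0, by omega⟩‖ ^ 2 * ‖U (N + 1) ω ⟨1, by omega⟩‖ ^ 2 ∂P ≤ L3 := by
      simpa [entry, p0, p1, Fin.prod_univ_two] using h3
    have a1 := mul_le_mul_of_nonneg_left (pow_le_pow_left₀ (norm_nonneg _) h4' 2) (sq_nonneg c)
    have a2 := mul_le_mul_of_nonneg_left (h3'.trans (le_abs_self _))
      (by positivity : 0 ≤ 2 * kappa σ 0)
    have a2' := div_le_div_of_nonneg_right a2 hn0.le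
    have a4 : c ^ 2 * (C * ((N + 1 : ℕ) : ℝ)⁻¹) ^ 2 ≤ c ^ 2 * C ^ 2 / ((N + 1 : ℕ) : ℝ) := by
      rw [mul_pow, ← mul_assoc, div_eq_mul_inv, pow_two (_⁻¹)]
      refine mul_le_mul_of_nonneg_left ?_ (by positivity)
      exact mul_le_of_le_one_left (by positivity) (inv_le_one_of_one_le₀ hn)
    refine (add_le_add (a1.trans a4) a2').trans ?_
    rw [← add_div]
    refine div_le_div_of_nonneg_right ?_ hn0.le
    have a3 : 0 ≤ c ^ 2 * L1 ^ 2 + 2 * kappa σ 0 * |L2| := by positivity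
    linarith

/-! ### Confinement of the diagonal entries -/

lemma continuous_cutoff (ρ : ℝ) : Continuous (cutoff ρ) := by
  unfold cutoff
  fun_prop

lemma abs_cutoff_le (ρ x : ℝ) : |cutoff ρ x| ≤ 1 := by
  rw [abs_of_nonneg (le_min zero_le_one (le_max_right _ _))]
  exact min_le_left _ _

lemma integral_ESD {n : ℕ} {M : Matrix (Fin (n + 1)) (Fin (n + 1)) ℂ} (hM : M.IsHermitian)
    (f : ℝ → ℝ) :
    ∫ x, f x ∂(ESD hM) = (∑ k, f (hM.eigenvalues k)) / ((n + 1 : ℕ) : ℝ) := by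
  rw [ESD, integral_smul_measure, integral_finsetSum_measure fun k _ =>
    integrable_dirac (by simp)]
  rw [ENNReal.toReal_inv, ENNReal.toReal_natCast, div_eq_inv_mul, smul_eq_mul]
  simp only [integral_dirac]

/-- If the limiting spectral distribution lives on `[-ρ, ρ]`, then some diagonal entry of each
matrix has a vanishing mean excess over `ρ + 1`. -/
lemma exists_confined {Ω : Type*} [MeasurableSpace Ω] {P : Measure Ω} [IsProbabilityMeasure P]
    {M : (N : ℕ) → Ω → Matrix (Fin N) (Fin N) ℂ} (hMmeas : ∀ N, Measurable (M N))
    (hHerm : ∀ N ω, (M N ω).IsHermitian)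
    (hMi : ∀ N (i j : Fin (N + 1)), Integrable (fun ω => ‖M (N + 1) ω i j‖ ^ 2) P)
    {B : ℝ} (hB : 0 ≤ B)
    (hMB : ∀ᶠ N in atTop, ∀ i j : Fin (N + 1),
      ∫ ω, ‖M (N + 1) ω i j‖ ^ 2 ∂P ≤ if i = j then B else B / ((N + 1 : ℕ) : ℝ))
    (Λ : Measure ℝ)
    (hconv : ∀ f : BoundedContinuousFunction ℝ ℝ,
      Tendsto (fun N => ∫ ω, (∫ x, f x ∂(ESD (hHerm N ω))) ∂P) atTop
        (𝓝 (∫ x, f x ∂Λ)))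
    {ρ : ℝ} (hρ : 0 ≤ ρ) (hΛ : Λ (Set.Icc (-ρ) ρ)ᶜ = 0) :
    (∀ N (i : Fin (N + 1)), Integrable (fun ω => max (|(M (N + 1) ω i i).re| - (ρ + 1)) 0) P) ∧
    ∃ idx : (N : ℕ) → Fin (N + 1),
      Tendsto (fun N => ∫ ω, max (|(M (N + 1) ω (idx N) (idx N)).re| - (ρ + 1)) 0 ∂P)
        atTop (𝓝 0) := by
  have hMm : ∀ N (i j : Fin N), Measurable fun ω => M N ω i j := fun N i j =>
    (measurable_pi_apply j).comp ((measurable_pi_apply i).comp (hMmeas N))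
  have hEi : ∀ N (i : Fin (N + 1)),
      Integrable (fun ω => max (|(M (N + 1) ω i i).re| - (ρ + 1)) 0) P := by
    intro N i
    have hm := hMm (N + 1) i i
    refine ((hMi N i i).add (integrable_const 1)).mono' (by fun_prop)
      (Eventually.of_forall fun ω => ?_)
    rw [Real.norm_of_nonneg (le_max_right _ _), Pi.add_apply]
    refine max_le ?_ (by positivity)
    have := Complex.abs_re_le_norm (M (N + 1) ω i i)
    nlinarith [sq_nonneg (‖M (N + 1) ω i i‖ - 1), norm_nonneg (M (N + 1) ω i i)]
  refine ⟨hEi, ?_⟩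
  -- pick an index whose mean excess does not exceed the average over the diagonal
  have hidx : ∀ N : ℕ, ∃ i : Fin (N + 1),
      ∫ ω, max (|(M (N + 1) ω i i).re| - (ρ + 1)) 0 ∂P ≤
      (∑ i, ∫ ω, max (|(M (N + 1) ω i i).re| - (ρ + 1)) 0 ∂P) / ((N + 1 : ℕ) : ℝ) := by
    intro N
    obtain ⟨i, -, hi⟩ := Finset.exists_le_of_sum_le (s := (Finset.univ : Finset (Fin (N + 1))))
      (f := fun i => ∫ ω, max (|(M (N + 1) ω i i).re| - (ρ + 1)) 0 ∂P)
      (g := fun _ => (∑ i, ∫ ω, max (|(M (N + 1) ω i i).re| - (ρ + 1)) 0 ∂P) / ((N + 1 : ℕ) : ℝ))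
      Finset.univ_nonempty (by
        rw [Finset.sum_const, Finset.card_univ, Fintype.card_fin, nsmul_eq_mul]
        rw [mul_div_cancel₀ _ (by positivity)])
    exact ⟨i, hi⟩
  choose idx hidx using hidx
  -- `ε N` is the mean of the cut-off statistic of the spectrum
  refine ⟨idx, ?_⟩
  set ε : ℕ → ℝ := fun N => ∫ ω, (∑ k, cutoff ρ ((hHerm (N + 1) ω).eigenvalues k)) /
    ((N + 1 : ℕ) : ℝ) ∂P with hε
  have hci : ∀ N, Integrable (fun ω => (∑ k, cutoff ρ ((hHerm (N + 1) ω).eigenvalues k))) P := by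
    intro N
    refine Integrable.of_bound (C := ∑ _k : Fin (N + 1), 1)
      (measurable_sum_eigenvalues (hMm (N + 1)) (hHerm (N + 1)) _
        (continuous_cutoff ρ)).aestronglyMeasurable (Eventually.of_forall fun ω => ?_)
    exact (norm_sum_le _ _).trans (Finset.sum_le_sum fun k _ => abs_cutoff_le _ _)
  have hε0 : Tendsto ε atTop (𝓝 0) := by
    have h := (hconv (BoundedContinuousFunction.ofNormedAddCommGroup (cutoff ρ)
      (continuous_cutoff ρ) 1 (abs_cutoff_le ρ))).comp (tendsto_add_atTop_nat 1)
    have h0 : ∫ x, cutoff ρ x ∂Λ = 0 := by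
      rw [← integral_zero ℝ ℝ (μ := Λ)]
      refine integral_congr_ae ?_
      filter_upwards [show ∀ᵐ x ∂Λ, x ∈ Set.Icc (-ρ) ρ from hΛ] with x hx
      rw [cutoff, max_eq_right (by linarith [abs_le.2 hx]), min_eq_right zero_le_one]
    simp only [BoundedContinuousFunction.coe_ofNormedAddCommGroup, h0] at h
    refine h.congr fun N => ?_
    simp only [Function.comp_apply, hε, integral_ESD]
  have hkey : ∀ δ : ℝ, 0 < δ → ∀ᶠ N in atTop,
      ∫ ω, max (|(M (N + 1) ω (idx N) (idx N)).re| - (ρ + 1)) 0 ∂P ≤ δ * (2 * B) + ε N / δ := by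
    intro δ hδ
    filter_upwards [hMB] with N hN
    have hn0 : (0 : ℝ) < ((N + 1 : ℕ) : ℝ) := by positivity
    refine (hidx N).trans ?_
    have hsi : Integrable (fun ω => ∑ i, ∑ j, ‖M (N + 1) ω i j‖ ^ 2) P :=
      integrable_finsetSum _ fun i _ => integrable_finsetSum _ fun j _ => hMi N i j
    have h1 : ∑ i, ∫ ω, max (|(M (N + 1) ω i i).re| - (ρ + 1)) 0 ∂P ≤
        δ * (∑ i, ∑ j, ∫ ω, ‖M (N + 1) ω i j‖ ^ 2 ∂P) +
          (∫ ω, ∑ k, cutoff ρ ((hHerm (N + 1) ω).eigenvalues k) ∂P) / δ := by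
      rw [← integral_finsetSum _ fun i _ => hEi N i]
      have e : ∑ i, ∑ j, ∫ ω, ‖M (N + 1) ω i j‖ ^ 2 ∂P =
          ∫ ω, ∑ i, ∑ j, ‖M (N + 1) ω i j‖ ^ 2 ∂P := by
        rw [integral_finsetSum _ fun i _ => integrable_finsetSum _ fun j _ => hMi N i j]
        refine Finset.sum_congr rfl fun i _ => ?_
        rw [integral_finsetSum _ fun j _ => hMi N i j]
      rw [e, ← integral_const_mul, ← integral_div,
        ← integral_add (hsi.const_mul δ) ((hci N).div_const δ)]
      exact integral_mono (integrable_finsetSum _ fun i _ => hEi N i)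
        ((hsi.const_mul δ).add ((hci N).div_const δ))
        fun ω => sum_diag_excess_le (hHerm (N + 1) ω) ρ δ hρ hδ
    have h2 : ∑ i : Fin (N + 1), ∑ j : Fin (N + 1), ∫ ω, ‖M (N + 1) ω i j‖ ^ 2 ∂P ≤
        ((N + 1 : ℕ) : ℝ) * (2 * B) := by
      have h3 : ∀ i : Fin (N + 1), ∑ j : Fin (N + 1), ∫ ω, ‖M (N + 1) ω i j‖ ^ 2 ∂P ≤ 2 * B := by
        intro i
        calc _ ≤ ∑ j : Fin (N + 1), ((if i = j then B else 0) + B / ((N + 1 : ℕ) : ℝ)) := by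
              refine Finset.sum_le_sum fun j _ => (hN i j).trans ?_
              have : 0 ≤ B / ((N + 1 : ℕ) : ℝ) := by positivity
              split_ifs <;> linarith
          _ = 2 * B := by
              rw [Finset.sum_add_distrib, Finset.sum_ite_eq, if_pos (Finset.mem_univ _),
                Finset.sum_const, Finset.card_univ, Fintype.card_fin, nsmul_eq_mul,
                mul_div_cancel₀ _ hn0.ne']
              ring
      refine (Finset.sum_le_sum fun i _ => h3 i).trans (le_of_eq ?_)
      rw [Finset.sum_const, Finset.card_univ, Fintype.card_fin, nsmul_eq_mul]
    rw [div_le_iff₀ hn0]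
    refine h1.trans ?_
    have e : (δ * (2 * B) + ε N / δ) * ((N + 1 : ℕ) : ℝ) =
        δ * (((N + 1 : ℕ) : ℝ) * (2 * B)) +
        (∫ ω, ∑ k, cutoff ρ ((hHerm (N + 1) ω).eigenvalues k) ∂P) / δ := by
      simp only [hε, integral_div]
      field_simp
    rw [e]
    gcongr
  refine tendsto_order.2 ⟨fun a ha => Eventually.of_forall fun N =>
    ha.trans_le (integral_nonneg fun ω => le_max_right _ _), fun η hη => ?_⟩
  -- this `δ` makes the second moment term at most `η / 2`
  have hδ : 0 < η / (4 * B + 1) := by positivity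
  have h1 : η / (4 * B + 1) * (2 * B) < η / 2 + 0 := by
    rw [div_mul_eq_mul_div, div_lt_iff₀ (by positivity)]
    nlinarith
  have h2 := (tendsto_const_nhds.add (hε0.div_const (η / (4 * B + 1)))).eventually
    (gt_mem_nhds (show η / (4 * B + 1) * (2 * B) + 0 / (η / (4 * B + 1)) < η by
      rw [zero_div]; linarith))
  filter_upwards [hkey _ hδ, h2] with N a b
  exact a.trans_lt b

theorem stmt4
    {Ω : Type*} [MeasurableSpace Ω] (P : Measure Ω) [IsProbabilityMeasure P]
    (γ : ℝ) (σ : Measure ℝ) [IsFiniteMeasure σ]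
    -- σ has compact support and is nonzero:
    (hσc : ∃ R : ℝ, σ (Set.Icc (-R) R)ᶜ = 0) (hσ : σ ≠ 0)
    -- all cumulants of the Lévy pair (γ, σ) are nonnegative:
    (hc1 : 0 ≤ γ + ∫ t, t ∂σ)
    (hcn : ∀ n : ℕ, 2 ≤ n → 0 ≤ ∫ t, t ^ (n - 2) * (1 + t ^ 2) ∂σ)
    (Γ : (k : ℕ) → (Fin k → ℕ) → ℝ)
    -- inf_n Γ(n)^{1/n} > 0:
    (hΓpos : ∃ c : ℝ, 0 < c ∧ ∀ n : ℕ, 1 ≤ n → c ^ n ≤ Γ 1 (fun _ => n))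
    (U : (N : ℕ) → Ω → Fin N → ℂ) (hU : HypGamma P U Γ)
    (M : (N : ℕ) → Ω → Matrix (Fin N) (Fin N) ℂ)
    (hMmeas : ∀ N, Measurable (M N))
    (hHerm : ∀ N ω, (M N ω).IsHermitian)
    (hlaw : HasMatrixLaw P γ σ U M)
    -- Λ is the weak limit of the mean spectral distributions:
    (Λ : Measure ℝ) (hΛ : IsProbabilityMeasure Λ)
    (hconv : ∀ f : BoundedContinuousFunction ℝ ℝ,
      Tendsto (fun N => ∫ ω, (∫ x, f x ∂(ESD (hHerm N ω))) ∂P) atTop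
        (𝓝 (∫ x, f x ∂Λ))) :
    -- Λ has unbounded support:
    ∀ R : ℝ, Λ (Set.Icc (-R) R)ᶜ ≠ 0 := by
  intro R hΛR
  obtain ⟨S', hS'⟩ := hσc
  obtain ⟨S, hS0, hS⟩ : ∃ S : ℝ, 0 ≤ S ∧ σ (Set.Icc (-S) S)ᶜ = 0 :=
    ⟨max S' 0, le_max_right _ _, measure_mono_null (Set.compl_subset_compl.2
      (Set.Icc_subset_Icc (neg_le_neg (le_max_left _ _)) (le_max_left _ _))) hS'⟩
  obtain ⟨ρ, hρ, hΛρ⟩ : ∃ ρ : ℝ, 0 ≤ ρ ∧ Λ (Set.Icc (-ρ) ρ)ᶜ = 0 :=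
    ⟨max R 0, le_max_right _ _, measure_mono_null (Set.compl_subset_compl.2
      (Set.Icc_subset_Icc (neg_le_neg (le_max_left _ _)) (le_max_left _ _))) hΛR⟩
  set G : ℕ → ℝ := fun k => Γ 1 fun _ => k with hG
  obtain ⟨b, hb, hbG⟩ := hΓpos
  have hG0 : ∀ k, 1 ≤ k → 0 < G k := fun k hk => (pow_pos hb k).trans_le (hbG k hk)
  obtain ⟨C, hC⟩ := hU.gammaBound
  have hGC : ∀ k, 1 ≤ k → G k ≤ C ^ k := fun k hk => by
    simpa using hC 1 le_rfl (fun _ => k) (fun _ => hk)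
  have hC0 : 0 ≤ C := by
    have := (hG0 1 le_rfl).trans_le (hGC 1 le_rfl)
    rw [pow_one] at this
    exact this.le
  have hGabs : ∀ k, 1 ≤ k → |G k| ≤ C ^ k := fun k hk => by
    rw [abs_of_pos (hG0 k hk)]
    exact hGC k hk
  -- `kappa σ k` is the cumulant of order `k + 2`
  have hκ : ∀ k, 0 ≤ kappa σ k := fun k => by
    have := hcn (k + 2) (Nat.le_add_left 2 k)
    rwa [Nat.add_sub_cancel] at this
  have hκ0 := kappa_zero_pos hS hσ
  obtain ⟨B, hB, hMB⟩ := entry_bound hS hσ hU hMmeas hHerm hlaw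
  obtain ⟨hEi, idx, hidx⟩ := exists_confined hMmeas hHerm
    (fun N i j => (entry_sq hS hσ hU hMmeas hHerm hlaw (Nat.le_add_left 1 N) i j).1)
    hB hMB Λ hconv hρ hΛρ
  have hq := abs_diagCoef_le hS0 hS (γ + ∫ t, t ∂σ) G C hC0 hGabs
  refine not_confined P (fun N ω => (M (N + 1) ω (idx N) (idx N)).re) ?_ (ρ + 1) (by linarith)
    (fun N => hEi N (idx N)) hidx (diagCoef (γ + ∫ t, t ∂σ) σ G) ?_ ?_ _ _
    (fun k => (le_abs_self _).trans (hq k)) ?_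
  · intro N
    exact Complex.measurable_re.comp ((measurable_pi_apply _).comp
      ((measurable_pi_apply _).comp (hMmeas (N + 1))))
  · intro k
    match k with
    | 0 => exact le_rfl
    | 1 => exact mul_nonneg hc1 (hG0 1 le_rfl).le
    | k + 2 =>
      have := (hG0 (k + 2) (by omega)).le
      have := hκ k
      simp only [diagCoef]
      positivity
  · have := hG0 2 one_le_two
    simp only [diagCoef]
    positivity
  · intro s
    have hUm : ∀ N, Measurable fun ω => U (N + 1) ω 0 := fun N =>
      (measurable_pi_apply _).comp (hU.meas (N + 1))
    have h := tendsto_exponent hS0 hS γ (P := P) (fun N ω => ‖U (N + 1) ω 0‖ ^ 2)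
      (fun N => by have := hUm N; fun_prop) (fun N ω => sq_nonneg _)
      (fun N k => by simp_rw [← pow_mul]; exact hU.moments (N + 1) 0 (2 * k))
      (fun N => ((N + 1 : ℕ) : ℝ)) (fun N => by positivity) G C hC0 hGabs
      (fun k => tendsto_moment hU k) s
    refine ((Complex.continuous_exp.tendsto _).comp h).congr fun N => ?_
    -- the diagonal entry is the linear form with `θ = 1 / 2`
    have e := entry_law hHerm hlaw (Nat.le_add_left 1 N) (idx N) (idx N) (1 / 2) s
    have e1 : ∀ z : ℂ, 2 * (star (1 / 2 : ℂ) * z).re = z.re := fun z => by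
      simp [Complex.mul_re]
    have e2 : ∀ z : ℂ, (z * star z).re = ‖z‖ ^ 2 := fun z => by
      rw [← starRingEnd_apply, Complex.mul_conj', ← Complex.ofReal_pow, Complex.ofReal_re]
    simp_rw [e1, e2] at e
    rw [e, Function.comp_apply, Complex.ofReal_natCast]
    congr 2
    exact integral_exch_one hU 0 (idx N)
      (g := fun z : ℂ => levyExponent γ σ (s * ‖z‖ ^ 2 / ((N + 1 : ℕ) : ℝ)))
      ((measurable_levyExponent γ σ).comp (by fun_prop)).stronglyMeasurable

end
end

section
/- Let (μ_N)_{N≥1} be a sequence of probability measures on ℝ. Suppose that for every ε > 0 there exist probability measures (μ_N^ε)_{N≥1} and a probability measure μ^ε on ℝ such that μ_N^ε converges weakly to μ^ε as N → ∞, and there is N₀ such that for all N ≥ N₀ and all z in the upper half-plane, |G_{μ_N}(z) − G_{μ_N^ε}(z)| ≤ ε / Im(z). Then there exists a probability measure μ on ℝ such that μ_N converges weakly to μ as N → ∞. -/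
/-!
The proof is the classical continuity argument for Cauchy transforms.

* The approximation bound at a fixed `z` makes `G_{μ_N}(z)` a Cauchy sequence, so it has a limit.
* The identity `1 + y * Im G_ν(iy) = ∫ t² / (t² + y²) dν(t)` bounds the mass of `{|t| > y}` by
  twice its left-hand side. Since the error `ε / y` at `z = iy` is compensated by the factor `y`,
  tails of `μ_N` are controlled by those of the limit of the approximating sequence up to `O(ε)`,
  uniformly in `y`; this gives tightness (`isTight`).
* By Prokhorov's theorem the sequence stays in a compact set of probability measures. Every cluster
  point has the limit of `G_{μ_N}` as its Cauchy transform, and the Cauchy transform determines the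
  measure (`measure_eq_of_cauchyTransform_eq`, Stieltjes inversion), so the cluster point is unique
  and the whole sequence converges to it.
-/

open MeasureTheory Filter Topology

noncomputable section

/-- The Cauchy transform of a measure on `ℝ`, evaluated at `z` in the upper half-plane. -/
def cauchyTransform (ν : Measure ℝ) (z : ℂ) : ℂ :=
  ∫ t, (z - (t : ℂ))⁻¹ ∂ν

/-! ### The Cauchy kernel -/

lemma sub_ofReal_ne_zero {z : ℂ} (hz : 0 < z.im) (t : ℝ) : z - (t : ℂ) ≠ 0 := fun h => by
  have := congrArg Complex.im h
  simp at this
  exact hz.ne' this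

/-- The Cauchy kernel `t ↦ (z - t)⁻¹`, for `z` in the upper half-plane, as a bounded continuous
function; its norm is at most `1 / Im z`. -/
def cauchyKernel (z : ℂ) (hz : 0 < z.im) : BoundedContinuousFunction ℝ ℂ :=
  BoundedContinuousFunction.ofNormedAddCommGroup (fun t : ℝ => (z - (t : ℂ))⁻¹)
    ((continuous_const.sub Complex.continuous_ofReal).inv₀ (sub_ofReal_ne_zero hz)) (z.im)⁻¹
    (fun t => by
      rw [norm_inv]
      refine inv_anti₀ hz ?_
      have := Complex.abs_im_le_norm (z - (t : ℂ))
      simpa [abs_of_pos hz] using this)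

lemma cauchyKernel_apply {z : ℂ} (hz : 0 < z.im) (t : ℝ) :
    cauchyKernel z hz t = (z - (t : ℂ))⁻¹ := rfl

lemma integrable_cauchy (ν : Measure ℝ) [IsProbabilityMeasure ν] {z : ℂ} (hz : 0 < z.im) :
    Integrable (fun t : ℝ => (z - (t : ℂ))⁻¹) ν :=
  (cauchyKernel z hz).integrable ν

lemma im_cauchy (x y t : ℝ) :
    (((x : ℂ) + y * Complex.I - (t : ℂ))⁻¹).im = -(y / ((x - t) ^ 2 + y ^ 2)) := by
  rw [Complex.inv_im, Complex.normSq_apply]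
  simp
  ring

lemma im_cauchyTransform (ν : Measure ℝ) [IsProbabilityMeasure ν] (x : ℝ) {y : ℝ} (hy : 0 < y) :
    (cauchyTransform ν (x + y * Complex.I)).im = -∫ t, y / ((x - t) ^ 2 + y ^ 2) ∂ν := by
  have hz : 0 < ((x : ℂ) + y * Complex.I).im := by simpa using hy
  have h := integral_im (integrable_cauchy ν hz)
  simp only [RCLike.im_to_complex, im_cauchy] at h
  rw [integral_neg] at h
  exact h.symm

lemma tendsto_cauchyTransform {ι : Type*} {l : Filter ι} {ν : ι → ProbabilityMeasure ℝ}
    {ν₀ : ProbabilityMeasure ℝ} (h : Tendsto ν l (𝓝 ν₀)) {z : ℂ} (hz : 0 < z.im) :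
    Tendsto (fun i => cauchyTransform (ν i) z) l (𝓝 (cauchyTransform ν₀ z)) :=
  (ProbabilityMeasure.tendsto_iff_forall_integral_rclike_tendsto ℂ).1 h (cauchyKernel z hz)

lemma tendstoWeakly_iff {ν : ℕ → ProbabilityMeasure ℝ} {ν₀ : ProbabilityMeasure ℝ} :
    TendstoWeakly (fun n => (ν n : Measure ℝ)) ν₀ ↔ Tendsto ν atTop (𝓝 ν₀) :=
  ProbabilityMeasure.tendsto_iff_forall_integral_tendsto.symm

lemma TendstoWeakly.cauchyTransform {ν : ℕ → Measure ℝ} {ν₀ : Measure ℝ}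
    (hν : ∀ N, IsProbabilityMeasure (ν N)) (hν₀ : IsProbabilityMeasure ν₀)
    (h : TendstoWeakly ν ν₀) {z : ℂ} (hz : 0 < z.im) :
    Tendsto (fun n => cauchyTransform (ν n) z) atTop (𝓝 (cauchyTransform ν₀ z)) :=
  tendsto_cauchyTransform (ν := fun n => ⟨ν n, hν n⟩) (ν₀ := ⟨ν₀, hν₀⟩)
    (tendstoWeakly_iff.1 h) hz

/-! ### Stieltjes inversion -/

/-- Smoothing a compactly supported `f` at scale `y` by the Poisson kernel and integrating against
`ν` only involves `Im G_ν` on the line `Im z = y`. This is Fubini after the substitution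
`x = t + y * s`. -/
lemma integral_poisson_eq (ν : Measure ℝ) [IsProbabilityMeasure ν]
    (f : CompactlySupportedContinuousMap ℝ ℝ) {y : ℝ} (hy : 0 < y) :
    ∫ t, (∫ s, f (t + y * s) * (1 + s ^ 2)⁻¹) ∂ν =
      ∫ x, f x * -(cauchyTransform ν (x + y * Complex.I)).im := by
  have hf : Integrable (fun x => f x) (volume : Measure ℝ) := f.integrable
  have hsub (t : ℝ) : ∫ s, f (t + y * s) * (1 + s ^ 2)⁻¹ =
      ∫ x, f x * (y / ((x - t) ^ 2 + y ^ 2)) := by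
    rw [← integral_add_left_eq_self (fun x => f x * (y / ((x - t) ^ 2 + y ^ 2))) t]
    have h := Measure.integral_comp_mul_left
      (fun u => f (t + u) * (y / ((t + u - t) ^ 2 + y ^ 2))) y
    rw [abs_of_pos (inv_pos.2 hy), smul_eq_mul, eq_comm, inv_mul_eq_iff_eq_mul₀ hy.ne'] at h
    rw [h, ← integral_const_mul]
    refine integral_congr_ae (.of_forall fun s => ?_)
    have : 1 + s ^ 2 ≠ 0 := by positivity
    have : (y * s) ^ 2 + y ^ 2 ≠ 0 := by positivity
    simp only [add_sub_cancel_left]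
    field_simp
    ring
  have hint : Integrable (Function.uncurry fun t x => f x * (y / ((x - t) ^ 2 + y ^ 2)))
      (ν.prod volume) := by
    refine ((hf.comp_snd ν).norm.mul_const y⁻¹).mono' ?_ (.of_forall fun p => ?_)
    · refine Continuous.aestronglyMeasurable ?_
      have h (p : ℝ × ℝ) : (p.2 - p.1) ^ 2 + y ^ 2 ≠ 0 := by positivity
      exact (f.continuous.comp continuous_snd).mul
        (continuous_const.div (by fun_prop) h)
    · simp only [Function.uncurry, norm_mul]
      gcongr
      rw [Real.norm_of_nonneg (by positivity), div_le_iff₀ (by positivity), inv_mul_eq_div,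
        le_div_iff₀ hy]
      nlinarith [sq_nonneg (p.2 - p.1)]
  simp_rw [hsub]
  rw [integral_integral_swap hint]
  simp_rw [im_cauchyTransform ν _ hy, neg_neg, integral_const_mul]

lemma tendsto_integral_poisson (ν : Measure ℝ) [IsProbabilityMeasure ν]
    (f : CompactlySupportedContinuousMap ℝ ℝ) :
    Tendsto (fun y : ℝ => ∫ t, (∫ s, f (t + y * s) * (1 + s ^ 2)⁻¹) ∂ν) (𝓝[>] 0)
      (𝓝 ((∫ t, f t ∂ν) * Real.pi)) := by
  obtain ⟨C, hC⟩ : ∃ C, ∀ x, ‖f x‖ ≤ C :=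
    f.continuous.bounded_above_of_compact_support f.hasCompactSupport
  have hk : Continuous fun s : ℝ => (1 + s ^ 2)⁻¹ :=
    Continuous.inv₀ (by fun_prop) fun s => by positivity
  have hcont (y : ℝ) : Continuous fun p : ℝ × ℝ => f (p.1 + y * p.2) * (1 + p.2 ^ 2)⁻¹ :=
    (f.continuous.comp (by fun_prop)).mul (hk.comp continuous_snd)
  have hdom : Integrable (fun p : ℝ × ℝ => C * (1 + p.2 ^ 2)⁻¹) (ν.prod volume) :=
    (integrable_inv_one_add_sq.comp_snd ν).const_mul C
  have hbound (y : ℝ) (p : ℝ × ℝ) :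
      ‖f (p.1 + y * p.2) * (1 + p.2 ^ 2)⁻¹‖ ≤ C * (1 + p.2 ^ 2)⁻¹ := by
    rw [norm_mul, Real.norm_of_nonneg (r := (1 + p.2 ^ 2)⁻¹) (by positivity)]
    exact mul_le_mul_of_nonneg_right (hC _) (by positivity)
  have hprod (y : ℝ) : ∫ t, (∫ s, f (t + y * s) * (1 + s ^ 2)⁻¹) ∂ν =
      ∫ p : ℝ × ℝ, f (p.1 + y * p.2) * (1 + p.2 ^ 2)⁻¹ ∂(ν.prod volume) :=
    integral_integral (f := fun t s => f (t + y * s) * (1 + s ^ 2)⁻¹)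
      (hdom.mono' (hcont y).aestronglyMeasurable (.of_forall (hbound y)))
  have hlim : ∫ p : ℝ × ℝ, f p.1 * (1 + p.2 ^ 2)⁻¹ ∂(ν.prod volume) =
      (∫ t, f t ∂ν) * Real.pi := by
    rw [integral_prod_mul (fun t => f t) (fun s : ℝ => (1 + s ^ 2)⁻¹),
      integral_univ_inv_one_add_sq]
  simp_rw [hprod, ← hlim]
  refine tendsto_integral_filter_of_dominated_convergence _
    (.of_forall fun y => (hcont y).aestronglyMeasurable)
    (.of_forall fun y => .of_forall (hbound y)) hdom (.of_forall fun p => ?_)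
  refine Tendsto.mono_left ?_ nhdsWithin_le_nhds
  have : Continuous fun y : ℝ => f (p.1 + y * p.2) * (1 + p.2 ^ 2)⁻¹ :=
    (f.continuous.comp (by fun_prop)).mul continuous_const
  simpa using this.tendsto 0

/-- Stieltjes inversion: the Cauchy transform on the upper half-plane determines the measure, since
the Poisson smoothings it encodes converge to the measure as the scale tends to `0`. -/
theorem measure_eq_of_cauchyTransform_eq (μ ν : Measure ℝ) [IsProbabilityMeasure μ]
    [IsProbabilityMeasure ν]
    (h : ∀ z : ℂ, 0 < z.im → cauchyTransform μ z = cauchyTransform ν z) : μ = ν := by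
  refine Measure.ext_of_integral_eq_on_compactlySupported fun f => ?_
  have hν := tendsto_integral_poisson ν f
  refine mul_right_cancel₀ Real.pi_ne_zero
    (tendsto_nhds_unique (tendsto_integral_poisson μ f) (hν.congr' ?_))
  filter_upwards [self_mem_nhdsWithin] with y (hy : 0 < y)
  rw [integral_poisson_eq ν f hy, integral_poisson_eq μ f hy]
  refine integral_congr_ae (.of_forall fun x => ?_)
  simp only
  rw [h _ (by simpa using hy)]

/-! ### Tails -/

/-- The quantity `1 + y * Im G_ν(iy)`. For `y > 0` it is the integral of `t² / (t² + y²)`, and half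
the mass of `ν` outside `[-y, y]` is at most this. -/
def tail (ν : Measure ℝ) (y : ℝ) : ℝ := 1 + y * (cauchyTransform ν (y * Complex.I)).im

lemma tail_aux_le_one (y t : ℝ) : ‖t ^ 2 / (t ^ 2 + y ^ 2)‖ ≤ 1 := by
  rw [Real.norm_of_nonneg (by positivity)]
  exact div_le_one_of_le₀ (by nlinarith [sq_nonneg y]) (by positivity)

lemma tail_aux_integrable (ν : Measure ℝ) [IsProbabilityMeasure ν] (y : ℝ) :
    Integrable (fun t : ℝ => t ^ 2 / (t ^ 2 + y ^ 2)) ν :=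
  Integrable.of_bound (Measurable.aestronglyMeasurable (by fun_prop)) 1
    (.of_forall (tail_aux_le_one y))

lemma tail_eq (ν : Measure ℝ) [IsProbabilityMeasure ν] {y : ℝ} (hy : 0 < y) :
    tail ν y = ∫ t, t ^ 2 / (t ^ 2 + y ^ 2) ∂ν := by
  have h := im_cauchyTransform ν 0 hy
  simp only [Complex.ofReal_zero, zero_add, zero_sub, neg_sq] at h
  have h2 : ∀ t : ℝ, y * (y / (t ^ 2 + y ^ 2)) = 1 - t ^ 2 / (t ^ 2 + y ^ 2) := fun t => by
    have : t ^ 2 + y ^ 2 ≠ 0 := by positivity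
    field_simp
    ring
  rw [tail, h, mul_neg, ← integral_const_mul]
  simp_rw [h2]
  rw [integral_sub (integrable_const _) (tail_aux_integrable ν y)]
  simp

lemma measureReal_le_tail (ν : Measure ℝ) [IsProbabilityMeasure ν] {y : ℝ} (hy : 0 < y) :
    ν.real {t | y < ‖t‖} ≤ 2 * tail ν y := by
  have hsub : {t : ℝ | y < ‖t‖} ⊆ {t | (1 / 2 : ℝ) ≤ t ^ 2 / (t ^ 2 + y ^ 2)} := fun t ht => by
    simp only [Set.mem_ofPred_eq, Real.norm_eq_abs] at ht ⊢
    rw [div_le_div_iff₀ (by norm_num) (by positivity)]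
    nlinarith [sq_abs t]
  have hM := mul_meas_ge_le_integral_of_nonneg (μ := ν)
    (.of_forall fun t : ℝ => by positivity) (tail_aux_integrable ν y) (1 / 2)
  rw [← tail_eq ν hy] at hM
  have := measureReal_mono (μ := ν) hsub
  linarith

lemma tendsto_tail (ν : Measure ℝ) [IsProbabilityMeasure ν] :
    Tendsto (tail ν) atTop (𝓝 0) := by
  have : Tendsto (fun y : ℝ => ∫ t, t ^ 2 / (t ^ 2 + y ^ 2) ∂ν) atTop (𝓝 (∫ _, (0 : ℝ) ∂ν)) := by
    refine tendsto_integral_filter_of_dominated_convergence (fun _ => 1)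
      (.of_forall fun y => (tail_aux_integrable ν y).aestronglyMeasurable)
      (.of_forall fun y => .of_forall (tail_aux_le_one y)) (integrable_const _)
      (.of_forall fun t => ?_)
    exact Tendsto.const_div_atTop
      (tendsto_atTop_add_const_left _ _ (tendsto_pow_atTop two_ne_zero)) _
  rw [integral_zero] at this
  refine this.congr' ?_
  filter_upwards [eventually_gt_atTop 0] with y hy using (tail_eq ν hy).symm

/-- The factor `y` in the tail functional cancels the factor `1 / Im z` of the approximation
bound. -/
lemma tail_le_of_norm_sub_le {μ ν : Measure ℝ} {ε y : ℝ} (hy : 0 < y)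
    (h : ‖cauchyTransform μ (y * Complex.I) - cauchyTransform ν (y * Complex.I)‖ ≤ ε / y) :
    tail μ y ≤ tail ν y + ε := by
  have h1 := (le_abs_self _).trans ((Complex.abs_im_le_norm _).trans h)
  rw [le_div_iff₀ hy, Complex.sub_im] at h1
  unfold tail
  linarith

/-! ### Convergence -/

/-- The approximation property assumed of `μs`: up to every error `ε / Im z`, the Cauchy transforms
are eventually those of a weakly convergent sequence of probability measures. -/
def Approx (μs : ℕ → Measure ℝ) : Prop :=
  ∀ ε : ℝ, 0 < ε →
    ∃ (μs' : ℕ → Measure ℝ) (μ' : Measure ℝ),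
      (∀ N, IsProbabilityMeasure (μs' N)) ∧ IsProbabilityMeasure μ' ∧
      TendstoWeakly μs' μ' ∧
      ∃ N₀ : ℕ, ∀ N, N₀ ≤ N → ∀ z : ℂ, 0 < z.im →
        ‖cauchyTransform (μs N) z - cauchyTransform (μs' N) z‖ ≤ ε / z.im

lemma Approx.exists_limit {μs : ℕ → Measure ℝ} (h : Approx μs) {z : ℂ} (hz : 0 < z.im) :
    ∃ g, Tendsto (fun N => cauchyTransform (μs N) z) atTop (𝓝 g) := by
  refine cauchySeq_tendsto_of_complete (Metric.cauchySeq_iff'.2 fun δ hδ => ?_)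
  obtain ⟨νs, ν, hνs, hν, hlim, N₀, hN₀⟩ := h (δ / 4 * z.im) (by positivity)
  obtain ⟨N₁, hN₁⟩ := Metric.cauchySeq_iff'.1
    (hlim.cauchyTransform hνs hν hz).cauchySeq (δ / 4) (by positivity)
  have key (N) (hN : N₀ ≤ N) :
      dist (cauchyTransform (μs N) z) (cauchyTransform (νs N) z) ≤ δ / 4 := by
    have := hN₀ N hN z hz
    rwa [mul_div_cancel_right₀ _ hz.ne', ← dist_eq_norm] at this
  have hν₂ (N) (hN : N₁ ≤ N) :
      dist (cauchyTransform (νs N) z) (cauchyTransform (νs (max N₀ N₁)) z) < δ / 2 := by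
    have h1 := hN₁ N hN
    have h2 := hN₁ (max N₀ N₁) (le_max_right _ _)
    have h3 := dist_triangle_right (cauchyTransform (νs N) z)
      (cauchyTransform (νs (max N₀ N₁)) z) (cauchyTransform (νs N₁) z)
    linarith
  refine ⟨max N₀ N₁, fun N hN => ?_⟩
  have h1 := key N ((le_max_left _ _).trans hN)
  have h2 := key (max N₀ N₁) (le_max_left _ _)
  have h3 := hν₂ N ((le_max_right _ _).trans hN)
  have h4 := dist_triangle4_right (cauchyTransform (μs N) z)
    (cauchyTransform (μs (max N₀ N₁)) z) (cauchyTransform (νs N) z)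
    (cauchyTransform (νs (max N₀ N₁)) z)
  linarith

lemma Approx.isTight {μs : ℕ → Measure ℝ} (h : Approx μs)
    (hμs : ∀ N, IsProbabilityMeasure (μs N)) : IsTightMeasureSet (Set.range μs) := by
  refine isTightMeasureSet_range_of_tendsto_limsup_measure_norm_gt
    (ENNReal.tendsto_nhds_zero.2 fun δ hδ => ?_)
  obtain ⟨η, hη, hηδ⟩ : ∃ η : ℝ, 0 < η ∧ ENNReal.ofReal η ≤ δ := by
    obtain ⟨c, hc0, hc⟩ := ENNReal.lt_iff_exists_nnreal_btwn.1 hδ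
    exact ⟨c, by exact_mod_cast hc0, by simpa using hc.le⟩
  obtain ⟨νs, ν, hνs, hν, hlim, N₀, hN₀⟩ := h (η / 4) (by positivity)
  filter_upwards [(tendsto_tail ν).eventually (gt_mem_nhds (show 0 < η / 4 by positivity)),
    eventually_gt_atTop 0] with y hy hy0
  have hz : 0 < ((y : ℂ) * Complex.I).im := by simpa using hy0
  have htail : Tendsto (fun N => tail (νs N) y) atTop (𝓝 (tail ν y)) :=
    tendsto_const_nhds.add (tendsto_const_nhds.mul
      ((Complex.continuous_im.tendsto _).comp (hlim.cauchyTransform hνs hν hz)))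
  refine (limsup_le_of_le (by isBoundedDefault) ?_).trans hηδ
  filter_upwards [htail.eventually (gt_mem_nhds hy), eventually_ge_atTop N₀] with N h1 h2
  have h3 := tail_le_of_norm_sub_le hy0 (ε := η / 4) (by simpa using hN₀ N h2 _ hz)
  have h4 := measureReal_le_tail (μs N) hy0
  rw [← ofReal_measureReal]
  exact ENNReal.ofReal_le_ofReal (by linarith)

theorem stmt8
    (μs : ℕ → Measure ℝ) (hμs : ∀ N, IsProbabilityMeasure (μs N))
    (happrox : ∀ ε : ℝ, 0 < ε →
      ∃ (μs' : ℕ → Measure ℝ) (μ' : Measure ℝ),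
        (∀ N, IsProbabilityMeasure (μs' N)) ∧ IsProbabilityMeasure μ' ∧
        TendstoWeakly μs' μ' ∧
        ∃ N₀ : ℕ, ∀ N, N₀ ≤ N → ∀ z : ℂ, 0 < z.im →
          ‖cauchyTransform (μs N) z - cauchyTransform (μs' N) z‖ ≤ ε / z.im) :
    ∃ μ : Measure ℝ, IsProbabilityMeasure μ ∧ TendstoWeakly μs μ := by
  have happ : Approx μs := happrox
  let u : ℕ → ProbabilityMeasure ℝ := fun N => ⟨μs N, hμs N⟩
  have hK : IsCompact (closure (Set.range u)) := by
    refine isCompact_closure_of_isTightMeasureSet ((happ.isTight hμs).subset ?_)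
    rintro _ ⟨_, ⟨N, rfl⟩, rfl⟩
    exact ⟨N, rfl⟩
  have hmem : ∀ N, u N ∈ closure (Set.range u) := fun N => subset_closure ⟨N, rfl⟩
  have hcluster {ν : ProbabilityMeasure ℝ} (hν : MapClusterPt ν atTop u) {z g : ℂ}
      (hz : 0 < z.im) (hg : Tendsto (fun N => cauchyTransform (μs N) z) atTop (𝓝 g)) :
      cauchyTransform ν z = g := by
    have h1 : MapClusterPt (cauchyTransform ν z) atTop (fun N => cauchyTransform (μs N) z) :=
      hν.tendsto_comp (f := fun ν : ProbabilityMeasure ℝ => cauchyTransform ν z)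
        (tendsto_cauchyTransform tendsto_id hz)
    have : (𝓝 (cauchyTransform ν z) ⊓ 𝓝 g).NeBot := NeBot.mono h1 (inf_le_inf_left _ hg)
    exact eq_of_nhds_neBot this
  obtain ⟨μ, -, hμ⟩ := hK.exists_mapClusterPt_of_frequently (l := atTop)
    (Frequently.of_forall hmem)
  refine ⟨μ, μ.2, (tendstoWeakly_iff (ν := u)).2 ?_⟩
  refine hK.le_nhds_of_unique_clusterPt (mem_map.2 (Eventually.of_forall hmem)) fun ν _ hν => ?_
  refine Subtype.ext (measure_eq_of_cauchyTransform_eq (ν : Measure ℝ) (μ : Measure ℝ) fun z hz => ?_)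
  obtain ⟨g, hg⟩ := happ.exists_limit hz
  exact (hcluster hν hz hg).trans (hcluster hμ hz hg).symm

end
end

section
/- For each N ≥ 1 let M_N be an N×N complex Hermitian matrix. Suppose that for every ε > 0 there exist N×N Hermitian matrices M_N^ε and a probability measure μ^ε on ℝ such that the empirical spectral distribution of M_N^ε converges weakly to μ^ε as N → ∞ and, for all N large enough, rank(M_N − M_N^ε) ≤ N·ε. Then there exists a probability measure μ on ℝ such that the empirical spectral distribution of M_N converges weakly to μ as N → ∞. -/
/-!
The empirical spectral distribution is stable, in Kolmogorov distance, under low-rank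
perturbations: if `A` and `B` are Hermitian of size `N`, their eigenvalue counting functions
differ by at most `rank (A - B)` (`card_eigenvalues_le`). Indeed, were there more than
`#{λ(B) ≤ x} + rank (A - B)` eigenvalues of `A` in `(-∞, x]`, some nonzero combination `v` of the
corresponding eigenvectors would satisfy `A v = B v` and be orthogonal to all eigenvectors of `B`
with eigenvalue at most `x`; then `⟪v, A v⟫ ≤ x ‖v‖²` while `⟪v, B v⟫ > x ‖v‖²`.

It remains to see that a sequence of probability measures on `ℝ` which, for every `ε`, is eventually
`ε`-close in Kolmogorov distance to some weakly convergent sequence is itself weakly convergent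
(`exists_tendsto_of_cdf_approx`). Such a sequence is tight, because the convergent approximations
are, so by Prokhorov's theorem it stays in a compact set and only uniqueness of cluster points is
at stake. A continuous decreasing ramp with values in `[0, 1]` is an average of indicators of
half-lines `(-∞, y]`, so its integral varies by at most the Kolmogorov distance. Its integrals
against any two cluster points are therefore both within `ε` of its integral against the limit of
the approximating sequence, for every `ε`; hence they are equal, and ramps determine a probability
measure.
-/

open MeasureTheory Matrix Filter Topology
open scoped ENNReal

noncomputable section

open scoped InnerProductSpace

/-- The quadratic form of a Hermitian matrix in eigenvector coordinates. -/
lemma re_inner_eq_sum {N : ℕ} {A : Matrix (Fin N) (Fin N) ℂ} (hA : A.IsHermitian)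
    (v : EuclideanSpace ℂ (Fin N)) :
    (⟪v, A.toEuclideanLin v⟫_ℂ).re
      = ∑ i, hA.eigenvalues i * ‖⟪hA.eigenvectorBasis i, v⟫_ℂ‖ ^ 2 := by
  have h1 : ∀ i, ⟪hA.eigenvectorBasis i, A.toEuclideanLin v⟫_ℂ
      = (hA.eigenvalues i : ℂ) * ⟪hA.eigenvectorBasis i, v⟫_ℂ := by
    intro i
    have hb : A.toEuclideanLin (hA.eigenvectorBasis i)
        = (hA.eigenvalues i : ℂ) • hA.eigenvectorBasis i := by
      ext k
      have := congrFun (hA.mulVec_eigenvectorBasis i) k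
      simpa using this
    rw [← (isSymmetric_toEuclideanLin_iff.mpr hA) (hA.eigenvectorBasis i) v, hb, inner_smul_left]
    simp
  rw [← hA.eigenvectorBasis.sum_inner_mul_inner v (A.toEuclideanLin v), Complex.re_sum]
  refine Finset.sum_congr rfl fun i _ => ?_
  rw [h1, ← inner_conj_symm v, mul_left_comm, Complex.conj_mul', Complex.re_ofReal_mul]
  norm_cast

/-- Eigenvalue counting functions of two Hermitian matrices differ by at most the rank of the
difference (stated one-sidedly). -/
lemma card_eigenvalues_le {N : ℕ} {A B : Matrix (Fin N) (Fin N) ℂ} (hA : A.IsHermitian)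
    (hB : B.IsHermitian) (x : ℝ) :
    Fintype.card {i // hA.eigenvalues i ≤ x}
      ≤ Fintype.card {i // hB.eigenvalues i ≤ x} + (A - B).rank := by
  -- `V` maps coefficients to a combination of low eigenvectors of `A`; `C` records the components
  -- along low eigenvectors of `B`. Injectivity of `(C, A - B) ∘ V` gives the dimension count.
  let V : ({i // hA.eigenvalues i ≤ x} → ℂ) →ₗ[ℂ] EuclideanSpace ℂ (Fin N) :=
    Fintype.linearCombination ℂ fun i => hA.eigenvectorBasis i
  let C : EuclideanSpace ℂ (Fin N) →ₗ[ℂ] ({j // hB.eigenvalues j ≤ x} → ℂ) :=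
    LinearMap.pi fun j => innerₛₗ ℂ (hB.eigenvectorBasis j)
  let D : EuclideanSpace ℂ (Fin N) →ₗ[ℂ] EuclideanSpace ℂ (Fin N) := (A - B).toEuclideanLin
  have hrank : Module.finrank ℂ (LinearMap.range D) = (A - B).rank :=
    (Matrix.rank_eq_finrank_range_toLin (A - B) (EuclideanSpace.basisFun (Fin N) ℂ).toBasis
      (EuclideanSpace.basisFun (Fin N) ℂ).toBasis).symm
  have hinj : Function.Injective ((C.prod D.rangeRestrict) ∘ₗ V) := by
    rw [← LinearMap.ker_eq_bot, LinearMap.ker_eq_bot']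
    intro c hc
    have hC : ∀ j, hB.eigenvalues j ≤ x → ⟪hB.eigenvectorBasis j, V c⟫_ℂ = 0 := fun j hj =>
      congrFun (congrArg Prod.fst hc) ⟨j, hj⟩
    have hD : A.toEuclideanLin (V c) = B.toEuclideanLin (V c) := by
      have : D (V c) = 0 := congrArg Subtype.val (congrArg Prod.snd hc)
      simpa [D, sub_eq_zero] using this
    have hV : V c = ∑ i, c i • hA.eigenvectorBasis i := rfl
    have hVout : ∀ k, ¬ hA.eigenvalues k ≤ x → ⟪hA.eigenvectorBasis k, V c⟫_ℂ = 0 := by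
      intro k hk
      rw [hV, inner_sum]
      refine Finset.sum_eq_zero fun i _ => ?_
      rw [inner_smul_right, hA.eigenvectorBasis.orthonormal.2 (fun h : k = (i : Fin N) => hk (by rw [h]; exact i.2)), mul_zero]
    -- Compare the two quadratic forms at `V c`, where they agree.
    have hle : (⟪V c, A.toEuclideanLin (V c)⟫_ℂ).re ≤ x * ‖V c‖ ^ 2 := by
      rw [re_inner_eq_sum hA, ← hA.eigenvectorBasis.sum_sq_norm_inner_right, Finset.mul_sum]
      refine Finset.sum_le_sum fun i _ => ?_
      by_cases hi : hA.eigenvalues i ≤ x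
      · gcongr
      · simp [hVout i hi]
    have hall : ∀ j, ⟪hB.eigenvectorBasis j, V c⟫_ℂ = 0 := by
      have hnn : ∀ j ∈ Finset.univ,
          0 ≤ (hB.eigenvalues j - x) * ‖⟪hB.eigenvectorBasis j, V c⟫_ℂ‖ ^ 2 := by
        intro j _
        by_cases hj : hB.eigenvalues j ≤ x
        · simp [hC j hj]
        · exact mul_nonneg (by linarith) (by positivity)
      have hsum : ∑ j, (hB.eigenvalues j - x) * ‖⟪hB.eigenvectorBasis j, V c⟫_ℂ‖ ^ 2 = 0 := by
        refine le_antisymm ?_ (Finset.sum_nonneg hnn)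
        simp_rw [sub_mul]
        rw [Finset.sum_sub_distrib, ← Finset.mul_sum, ← re_inner_eq_sum hB,
          hB.eigenvectorBasis.sum_sq_norm_inner_right, ← hD]
        linarith
      intro j
      by_cases hj : hB.eigenvalues j ≤ x
      · exact hC j hj
      · have := (Finset.sum_eq_zero_iff_of_nonneg hnn).1 hsum j (Finset.mem_univ j)
        rcases mul_eq_zero.1 this with h | h
        · linarith
        · simpa using h
    have hV0 : V c = 0 := by
      rw [← hB.eigenvectorBasis.sum_repr' (V c)]
      simp [hall]
    have hli : LinearIndependent ℂ
        fun i : {i // hA.eigenvalues i ≤ x} => hA.eigenvectorBasis i :=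
      (hA.eigenvectorBasis.orthonormal.comp _ Subtype.val_injective).linearIndependent
    exact funext (Fintype.linearIndependent_iff.1 hli c hV0)
  have := LinearMap.finrank_le_finrank_of_injective hinj
  rwa [Module.finrank_prod, hrank, Module.finrank_pi, Module.finrank_pi] at this

lemma ESD_real_Iic {N : ℕ} {A : Matrix (Fin N) (Fin N) ℂ} (hA : A.IsHermitian) (x : ℝ) :
    (ESD hA).real (Set.Iic x) = (N : ℝ)⁻¹ * Fintype.card {i // hA.eigenvalues i ≤ x} := by
  simp [ESD, Measure.real, Set.indicator_apply, Fintype.card_subtype]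

lemma isProbabilityMeasure_ESD {N : ℕ} {A : Matrix (Fin N) (Fin N) ℂ} (hA : A.IsHermitian)
    (hN : N ≠ 0) : IsProbabilityMeasure (ESD hA) := by
  constructor
  simp [ESD, ENNReal.inv_mul_cancel, hN]

lemma ESD_real_Iic_le {N : ℕ} {A B : Matrix (Fin N) (Fin N) ℂ} (hA : A.IsHermitian)
    (hB : B.IsHermitian) {ε : ℝ} (hN : N ≠ 0) (h : ((A - B).rank : ℝ) ≤ N * ε) (x : ℝ) :
    (ESD hA).real (Set.Iic x) ≤ (ESD hB).real (Set.Iic x) + ε := by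
  have hc : (Fintype.card {i // hA.eigenvalues i ≤ x} : ℝ)
      ≤ Fintype.card {i // hB.eigenvalues i ≤ x} + N * ε :=
    calc (Fintype.card {i // hA.eigenvalues i ≤ x} : ℝ)
        ≤ Fintype.card {i // hB.eigenvalues i ≤ x} + (A - B).rank := by
          exact_mod_cast card_eigenvalues_le hA hB x
      _ ≤ _ := by gcongr
  have hN' : (0 : ℝ) < N := by positivity
  rw [ESD_real_Iic, ESD_real_Iic]
  calc _ ≤ (N : ℝ)⁻¹ * (Fintype.card {i // hB.eigenvalues i ≤ x} + N * ε) := by gcongr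
    _ = _ := by field_simp

/-- The empirical spectral distributions of a sequence of Hermitian matrices, as probability
measures. The index is shifted by one because the spectral distribution of the `0 × 0` matrix is
the zero measure. -/
def shiftedESD {M : (N : ℕ) → Matrix (Fin N) (Fin N) ℂ} (hM : ∀ N, (M N).IsHermitian) (n : ℕ) :
    ProbabilityMeasure ℝ :=
  ⟨ESD (hM (n + 1)), isProbabilityMeasure_ESD _ n.succ_ne_zero⟩

lemma tendsto_shiftedESD_iff {M : (N : ℕ) → Matrix (Fin N) (Fin N) ℂ}
    (hM : ∀ N, (M N).IsHermitian) (μ : ProbabilityMeasure ℝ) :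
    Tendsto (shiftedESD hM) atTop (𝓝 μ) ↔ TendstoWeakly (fun N => ESD (hM N)) μ := by
  rw [ProbabilityMeasure.tendsto_iff_forall_integral_tendsto]
  exact forall_congr' fun f => tendsto_add_atTop_iff_nat (f := fun N => ∫ x, f x ∂(ESD (hM N))) 1

/-- The continuous decreasing function equal to `1` on `(-∞, a]`, to `0` on `[a + 1 / d, ∞)`, and
affine in between (for `d > 0`). -/
def ramp (a d : ℝ) : BoundedContinuousFunction ℝ ℝ :=
  BoundedContinuousFunction.ofNormedAddCommGroup (fun x => max 0 (min 1 (1 - d * (x - a))))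
    (by fun_prop) 1 (fun x => by
      rw [Real.norm_eq_abs, abs_of_nonneg (le_max_left _ _)]
      exact max_le zero_le_one (min_le_left _ _))

lemma ramp_apply (a d x : ℝ) : ramp a d x = max 0 (min 1 (1 - d * (x - a))) := rfl

/-- Layer-cake formula: the integral of a ramp is an average of values of the distribution
function. -/
lemma integral_ramp (P : Measure ℝ) [IsProbabilityMeasure P] (a : ℝ) {d : ℝ} (hd : 0 < d) :
    ∫ x, ramp a d x ∂P = ∫ t in Set.Ioc (0 : ℝ) 1, P.real (Set.Iic (a + (1 - t) / d)) := by
  rw [Integrable.integral_eq_integral_Ioc_meas_le (M := 1) ((ramp a d).integrable P)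
    (ae_of_all _ fun x => le_max_left _ _)
    (ae_of_all _ fun x => max_le zero_le_one (min_le_left _ _))]
  refine setIntegral_congr_fun measurableSet_Ioc fun t ht => ?_
  congr 1
  ext x
  simp only [ramp_apply, Set.mem_ofPred_eq, Set.mem_Iic, le_max_iff, le_min_iff, not_le.2 ht.1,
    ht.2, false_or, true_and]
  rw [← sub_le_iff_le_add', le_div_iff₀ hd]
  constructor <;> intro h <;> linarith

lemma integral_ramp_le {P Q : Measure ℝ} [IsProbabilityMeasure P] [IsProbabilityMeasure Q]
    {ε : ℝ} (h : ∀ x, P.real (Set.Iic x) ≤ Q.real (Set.Iic x) + ε) (a : ℝ) {d : ℝ} (hd : 0 < d) :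
    ∫ x, ramp a d x ∂P ≤ ∫ x, ramp a d x ∂Q + ε := by
  have hint : ∀ R : Measure ℝ, IsProbabilityMeasure R →
      IntegrableOn (fun t : ℝ => R.real (Set.Iic (a + (1 - t) / d))) (Set.Ioc 0 1) := by
    intro R _
    refine (AntitoneOn.integrableOn_isCompact isCompact_Icc fun s _ t _ hst => ?_).mono_set
      Set.Ioc_subset_Icc_self
    exact measureReal_mono (Set.Iic_subset_Iic.2 (by gcongr))
  rw [integral_ramp P a hd, integral_ramp Q a hd]
  calc _ ≤ ∫ t in Set.Ioc (0 : ℝ) 1, (Q.real (Set.Iic (a + (1 - t) / d)) + ε) :=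
        integral_mono (hint P inferInstance) ((hint Q inferInstance).add (by simp))
          fun t => h _
    _ = _ := by rw [integral_add (hint Q inferInstance) (by simp)]; simp

/-- Ramps of slope tending to infinity converge pointwise to the indicator of `(-∞, a]`, so their
integrals determine a probability measure. -/
lemma eq_of_integral_ramp_eq {μ ν : ProbabilityMeasure ℝ}
    (h : ∀ a d : ℝ, 0 < d → ∫ x, ramp a d x ∂(μ : Measure ℝ) = ∫ x, ramp a d x ∂(ν : Measure ℝ)) :
    μ = ν := by
  have hlim : ∀ (κ : ProbabilityMeasure ℝ) (a : ℝ),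
      Tendsto (fun n : ℕ => ∫ x, ramp a (n + 1) x ∂(κ : Measure ℝ)) atTop
        (𝓝 ((κ : Measure ℝ).real (Set.Iic a))) := by
    intro κ a
    rw [← integral_indicator_one measurableSet_Iic]
    refine tendsto_integral_of_dominated_convergence (fun _ => 1)
      (fun n => (ramp a _).continuous.aestronglyMeasurable) (integrable_const _)
      (fun n => ae_of_all _ fun x => ?_) (ae_of_all _ fun x => ?_)
    · rw [ramp_apply, Real.norm_eq_abs, abs_of_nonneg (le_max_left _ _)]
      exact max_le zero_le_one (min_le_left _ _)
    · refine tendsto_const_nhds.congr' ?_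
      by_cases hx : x ≤ a
      · refine Eventually.of_forall fun n => ?_
        have : 0 ≤ ((n : ℝ) + 1) * (a - x) := mul_nonneg (by positivity) (by linarith)
        beta_reduce
        rw [ramp_apply, Set.indicator_of_mem (Set.mem_Iic.2 hx), min_eq_left (by linarith)]
        simp
      · push Not at hx
        obtain ⟨m, hm⟩ := exists_nat_gt (1 / (x - a))
        filter_upwards [eventually_ge_atTop m] with n hn
        have hxa : 0 < x - a := by linarith
        have h1 : 1 < (m : ℝ) * (x - a) := (div_lt_iff₀ hxa).1 hm
        have h2 : (m : ℝ) * (x - a) ≤ ((n : ℝ) + 1) * (x - a) := by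
          gcongr
          have : (m : ℝ) ≤ n := by exact_mod_cast hn
          linarith
        rw [ramp_apply, Set.indicator_of_notMem (by simpa using hx), max_eq_left]
        exact (min_le_right _ _).trans (by linarith)
  refine ProbabilityMeasure.toMeasure_injective (Measure.ext_of_Iic _ _ fun a => ?_)
  have := tendsto_nhds_unique (hlim μ a)
    ((hlim ν a).congr fun n => (h a _ (by positivity)).symm)
  rwa [measureReal_eq_measureReal_iff] at this

/-- A sequence of probability measures on `ℝ` that can be approximated, up to any `ε` in Kolmogorov
distance, by weakly convergent sequences is weakly convergent. -/
theorem exists_tendsto_of_cdf_approx (P : ℕ → ProbabilityMeasure ℝ)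
    (hP : ∀ ε : ℝ, 0 < ε → ∃ (Q : ℕ → ProbabilityMeasure ℝ) (μ' : ProbabilityMeasure ℝ),
      Tendsto Q atTop (𝓝 μ') ∧ ∀ᶠ n in atTop, ∀ x,
        |(P n : Measure ℝ).real (Set.Iic x) - (Q n : Measure ℝ).real (Set.Iic x)| ≤ ε) :
    ∃ μ, Tendsto P atTop (𝓝 μ) := by
  have htight : IsTightMeasureSet (Set.range fun n => (P n : Measure ℝ)) := by
    refine isTightMeasureSet_range_of_tendsto_limsup_measure_norm_gt ?_
    rw [ENNReal.tendsto_nhds_zero]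
    intro η hη
    obtain ⟨e, he0, heη⟩ : ∃ e : ℝ, 0 < e ∧ ENNReal.ofReal e ≤ η := by
      obtain ⟨e, he, heη⟩ := ENNReal.lt_iff_exists_nnreal_btwn.1 hη
      exact ⟨e, by exact_mod_cast he, by simpa using heη.le⟩
    obtain ⟨Q, μ', hQ, hPQ⟩ := hP (e / 4) (by positivity)
    have hQt := isTightMeasureSet_of_isCompact_closure (S := Set.range Q)
      (hQ.isCompact_insert_range.closure_of_subset (Set.subset_insert _ _))
    have hQt' := tendsto_measure_norm_gt_of_isTightMeasureSet hQt
    rw [ENNReal.tendsto_nhds_zero] at hQt'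
    have hQe := hQt' (ENNReal.ofReal (e / 4)) (by simpa using he0)
    filter_upwards [(tendsto_atTop_add_const_right _ (-1 : ℝ) tendsto_id).eventually hQe]
      with r hr
    refine limsup_le_of_le (by isBoundedDefault) ?_
    filter_upwards [hPQ] with n hn
    refine le_trans ?_ heη
    rw [← ofReal_measureReal]
    refine ENNReal.ofReal_le_ofReal ?_
    -- Radius `r - 1` for `Q n` absorbs the endpoint `-r` of the closed half-line `(-∞, -r]`.
    have hQn : (Q n : Measure ℝ).real {x : ℝ | r - 1 < ‖x‖} ≤ e / 4 := by
      refine ENNReal.toReal_le_of_le_ofReal (by positivity) (le_trans ?_ hr)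
      exact le_iSup₂_of_le (Q n : Measure ℝ) ⟨Q n, ⟨n, rfl⟩, rfl⟩ (by simp [sub_eq_add_neg])
    have hcompl : ∀ R : ProbabilityMeasure ℝ,
        (R : Measure ℝ).real (Set.Ioi r) = 1 - (R : Measure ℝ).real (Set.Iic r) := fun R => by
      rw [← Set.compl_Iic, probReal_compl_eq_one_sub measurableSet_Iic]
    have hsub : {x : ℝ | r < ‖x‖} ⊆ Set.Iic (-r) ∪ Set.Ioi r := by
      intro x hx
      rcases lt_abs.1 (show r < |x| from hx) with h | h
      · exact Or.inr h
      · exact Or.inl (by simp; linarith)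
    have h1 : (Q n : Measure ℝ).real (Set.Iic (-r)) ≤ e / 4 := by
      refine (measureReal_mono fun x hx => ?_).trans hQn
      have : x ≤ -r := hx
      have := neg_abs_le x
      simp only [Set.mem_ofPred_eq, Real.norm_eq_abs]
      linarith
    have h2 : (Q n : Measure ℝ).real (Set.Ioi r) ≤ e / 4 := by
      refine (measureReal_mono fun x hx => ?_).trans hQn
      have : r < x := hx
      have := le_abs_self x
      simp only [Set.mem_ofPred_eq, Real.norm_eq_abs]
      linarith
    have h3 := abs_le.1 (hn (-r))
    have h4 := abs_le.1 (hn r)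
    have h5 := (measureReal_mono (μ := (P n : Measure ℝ)) hsub).trans (measureReal_union_le _ _)
    have h6 := hcompl (P n)
    have h7 := hcompl (Q n)
    linarith [h3.2, h4.1]
  have hcomp : IsCompact (closure (Set.range P)) := by
    refine isCompact_closure_of_isTightMeasureSet (htight.subset ?_)
    rintro _ ⟨_, ⟨n, rfl⟩, rfl⟩
    exact ⟨n, rfl⟩
  have hmem : ∀ n, P n ∈ closure (Set.range P) := fun n => subset_closure ⟨n, rfl⟩
  obtain ⟨μ, -, hμ⟩ := hcomp.exists_mapClusterPt (f := atTop) (u := P)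
    (by simpa using ⟨0, fun n _ => hmem n⟩)
  refine ⟨μ, hcomp.tendsto_nhds_of_unique_mapClusterPt (Eventually.of_forall hmem) ?_⟩
  intro ν _ hν
  refine eq_of_integral_ramp_eq fun a d hd => ?_
  -- `L` is the integral against the limit of an `ε`-approximating sequence, the same for all
  -- cluster points.
  have key : ∀ ε : ℝ, 0 < ε → ∃ L : ℝ, ∀ κ : ProbabilityMeasure ℝ, MapClusterPt κ atTop P →
      |∫ x, ramp a d x ∂(κ : Measure ℝ) - L| ≤ ε := by
    intro ε hε
    obtain ⟨Q, μ', hQ, hPQ⟩ := hP ε hε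
    refine ⟨∫ x, ramp a d x ∂(μ' : Measure ℝ), fun κ hκ => ?_⟩
    obtain ⟨U, hU, hUκ⟩ := mapClusterPt_iff_ultrafilter.1 hκ
    have t1 := ProbabilityMeasure.tendsto_iff_forall_integral_tendsto.1 hUκ (ramp a d)
    have t2 := ProbabilityMeasure.tendsto_iff_forall_integral_tendsto.1 (hQ.mono_left hU) (ramp a d)
    refine le_of_tendsto (t1.sub t2).abs ?_
    filter_upwards [hU hPQ] with n hn
    have u1 := integral_ramp_le (P := (P n : Measure ℝ)) (Q := (Q n : Measure ℝ)) (ε := ε)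
      (fun x => by linarith [(abs_le.1 (hn x)).2]) a hd
    have u2 := integral_ramp_le (P := (Q n : Measure ℝ)) (Q := (P n : Measure ℝ)) (ε := ε)
      (fun x => by linarith [(abs_le.1 (hn x)).1]) a hd
    rw [abs_le]
    constructor <;> linarith
  refine eq_of_forall_dist_le fun ε hε => ?_
  obtain ⟨L, hL⟩ := key (ε / 2) (by positivity)
  have := abs_le.1 (hL μ hμ)
  have := abs_le.1 (hL ν hν)
  rw [Real.dist_eq, abs_le]
  constructor <;> linarith

theorem stmt9
    (M : (N : ℕ) → Matrix (Fin N) (Fin N) ℂ)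
    (hHerm : ∀ N, (M N).IsHermitian)
    (happrox : ∀ ε : ℝ, 0 < ε →
      ∃ (M' : (N : ℕ) → Matrix (Fin N) (Fin N) ℂ) (hHerm' : ∀ N, (M' N).IsHermitian)
        (μ' : Measure ℝ), IsProbabilityMeasure μ' ∧
        TendstoWeakly (fun N => ESD (hHerm' N)) μ' ∧
        ∀ᶠ N in atTop, ((M N - M' N).rank : ℝ) ≤ N * ε) :
    ∃ μ : Measure ℝ, IsProbabilityMeasure μ ∧ TendstoWeakly (fun N => ESD (hHerm N)) μ := by
  obtain ⟨μ, hμ⟩ := exists_tendsto_of_cdf_approx (shiftedESD hHerm) fun ε hε => by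
    obtain ⟨M', hM', μ', hμ', hw, hr⟩ := happrox ε hε
    refine ⟨shiftedESD hM', ⟨μ', hμ'⟩, (tendsto_shiftedESD_iff hM' _).2 hw, ?_⟩
    filter_upwards [(tendsto_add_atTop_nat 1).eventually hr] with n hn x
    have hn' : ((M' (n + 1) - M (n + 1)).rank : ℝ) ≤ (n + 1 : ℕ) * ε := by
      rwa [← neg_sub, ← neg_one_smul ℂ (M (n + 1) - M' (n + 1)),
        Matrix.rank_smul_of_mem_nonZeroDivisors _ (by simp)]
    have h1 := ESD_real_Iic_le (hHerm (n + 1)) (hM' (n + 1)) n.succ_ne_zero hn x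
    have h2 := ESD_real_Iic_le (hM' (n + 1)) (hHerm (n + 1)) n.succ_ne_zero hn' x
    simp only [shiftedESD, ProbabilityMeasure.coe_mk]
    rw [abs_le]
    constructor <;> linarith
  exact ⟨μ, inferInstance, (tendsto_shiftedESD_iff hHerm μ).1 hμ⟩

end
end

section
/- Let A be an N×N complex Hermitian matrix, B an N×N Hermitian positive definite matrix, V ∈ ℂ^N a column vector, c ∈ ℝ and t > 0. Then for every x ∈ ℝ the matrix A + iB − c·x·V V* is invertible, the matrix A + iB + i·t·|c|·V V* is invertible, and ∫_ℝ (A + iB − c·x·V V*)^{-1} · ( t / (π·(t² + x²)) ) dx = (A + iB + i·t·|c|·V V*)^{-1}, the integral being the entrywise (Bochner) integral of the matrix-valued function of x against Lebesgue measure; here x ↦ t/(π(t²+x²)) is the density of the Cauchy law with parameter t. -/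
/-!
The rank-one perturbation enters the resolvent through the scalar `g = V* M⁻¹ V`, `M = A + iB`:
by the Sherman–Morrison formula (`inv_sub_smul_vecMulVec`)
`(M - z V V*)⁻¹ = M⁻¹ + z / (1 - z g) • M⁻¹ V V* M⁻¹`.
Since `M` has positive definite imaginary part, `M⁻¹` has negative definite imaginary part, so
`Im g < 0` when `V ≠ 0` (`im_dotProduct_inv_mulVec_neg`). The theorem thus reduces to the scalar
identity `integral_cauchy_mobius`: averaging `z / (1 - z g)` at `z = c x` against the Cauchy
density amounts to evaluating it at `z = -i t |c|`.

For the scalar identity, put `p = i t |c| / c` and `q = 1 / (c g)`. The value at `c x` minus the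
value at `-c p = -i t |c|` carries a factor `x + p`, which cancels one of the two factors of
`t² + x² = (x - p) (x + p)`. What is left is a multiple of `1 / ((x - p) (x - q))`, whose two poles
`p` and `q` lie in the same open half-plane, so its integral over the real line vanishes
(`integral_inv_mul_inv_eq_zero`), as an explicit antiderivative shows.

Invertibility is the remark that a matrix with Hermitian real part and positive definite imaginary
part has trivial kernel; the real perturbation changes only the real part, and the imaginary one
adds a positive semidefinite matrix to the imaginary part.
-/

open Matrix MeasureTheory
open scoped ComplexOrder

noncomputable section

/-! ### Integrals of products of two simple poles -/

lemma sub_ofReal_ne {p : ℂ} (hp : p.im ≠ 0) (x : ℝ) : (x : ℂ) - p ≠ 0 := by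
  intro h
  apply hp
  have := congrArg Complex.im h
  simpa using this

lemma integrable_inv_normSq {p : ℂ} (hp : p.im ≠ 0) :
    Integrable (fun x : ℝ => (‖(x : ℂ) - p‖ ^ 2)⁻¹) := by
  have h := (ProbabilityTheory.integrable_cauchyPDFReal p.re (γ := ‖p.im‖₊)).const_mul
    (Real.pi * |p.im|⁻¹)
  refine h.congr (Filter.Eventually.of_forall fun x => ?_)
  have h1 : ‖(x : ℂ) - p‖ ^ 2 = (x - p.re) ^ 2 + p.im ^ 2 := by
    rw [← Complex.normSq_eq_norm_sq, Complex.normSq_apply]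
    simp
    ring
  have h2 : |p.im| ≠ 0 := abs_ne_zero.mpr hp
  simp only [ProbabilityTheory.cauchyPDFReal_def, h1, coe_nnnorm, Real.norm_eq_abs, sq_abs]
  field_simp

lemma integrable_inv_mul_inv {p q : ℂ} (hp : p.im ≠ 0) (hq : q.im ≠ 0) :
    Integrable (fun x : ℝ => ((x : ℂ) - p)⁻¹ * ((x : ℂ) - q)⁻¹) := by
  refine ((integrable_inv_normSq hp).add (integrable_inv_normSq hq)).mono' ?_ ?_
  · refine Continuous.aestronglyMeasurable ?_
    exact ((Complex.continuous_ofReal.sub continuous_const).inv₀ (sub_ofReal_ne hp)).mul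
      ((Complex.continuous_ofReal.sub continuous_const).inv₀ (sub_ofReal_ne hq))
  · refine Filter.Eventually.of_forall fun x => ?_
    simp only [norm_mul, norm_inv, Pi.add_apply, ← inv_pow]
    nlinarith [sq_nonneg (‖(x : ℂ) - p‖⁻¹ - ‖(x : ℂ) - q‖⁻¹), sq_nonneg ‖(x : ℂ) - p‖⁻¹,
      sq_nonneg ‖(x : ℂ) - q‖⁻¹]

lemma tendsto_inv_sub_zero (p : ℂ) {l : Filter ℝ}
    (hl : Filter.Tendsto (fun x : ℝ => |x|) l Filter.atTop) :
    Filter.Tendsto (fun x : ℝ => ((x : ℂ) - p)⁻¹) l (nhds 0) := by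
  refine Filter.tendsto_inv₀_cobounded.comp ?_
  rw [← tendsto_norm_atTop_iff_cobounded]
  refine Filter.tendsto_atTop_mono (fun x => ?_) (Filter.tendsto_atTop_add_const_right l (-‖p‖) hl)
  have := norm_sub_norm_le (x : ℂ) p
  rw [Complex.norm_real, Real.norm_eq_abs] at this
  linarith

/-- Two simple poles on the same side of the real axis contribute nothing. For distinct poles the
antiderivative is `(p - q)⁻¹ * log ((x - p) / (x - q))`; the quotient avoids `(-∞, 0]` because the
segment from `p` to `q` does not meet the real axis, and it tends to `1` at both ends. -/
lemma integral_inv_mul_inv_eq_zero {p q : ℂ} (hpq : 0 < p.im * q.im) :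
    ∫ x : ℝ, ((x : ℂ) - p)⁻¹ * ((x : ℂ) - q)⁻¹ = 0 := by
  have hp : p.im ≠ 0 := left_ne_zero_of_mul hpq.ne'
  have hq : q.im ≠ 0 := right_ne_zero_of_mul hpq.ne'
  have hsub (r : ℂ) (x : ℝ) : HasDerivAt (fun x : ℝ => (x : ℂ) - r) 1 x :=
    Complex.ofRealCLM.hasDerivAt.sub_const r
  by_cases hne : p = q
  · subst hne
    have hlim {l : Filter ℝ} (hl : Filter.Tendsto (fun x : ℝ => |x|) l Filter.atTop) :
        Filter.Tendsto (fun x : ℝ => -((x : ℂ) - p)⁻¹) l (nhds 0) := by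
      simpa using (tendsto_inv_sub_zero p hl).neg
    rw [integral_of_hasDerivAt_of_tendsto (f := fun x : ℝ => -((x : ℂ) - p)⁻¹) (fun x => ?_)
      (integrable_inv_mul_inv hp hp) (hlim Filter.tendsto_abs_atBot_atTop)
      (hlim Filter.tendsto_abs_atTop_atTop), sub_zero]
    have hx := sub_ofReal_ne hp x
    refine ((hsub p x).fun_inv hx).fun_neg.congr_deriv ?_
    field_simp
  · have hd : p - q ≠ 0 := sub_ne_zero.mpr hne
    have hlim {l : Filter ℝ} (hl : Filter.Tendsto (fun x : ℝ => |x|) l Filter.atTop) :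
        Filter.Tendsto (fun x : ℝ => (p - q)⁻¹ * Complex.log (((x : ℂ) - p) / ((x : ℂ) - q)))
          l (nhds 0) := by
      have h1 : Filter.Tendsto (fun x : ℝ => ((x : ℂ) - p) / ((x : ℂ) - q)) l (nhds 1) := by
        have h2 : Filter.Tendsto (fun x : ℝ => 1 + (q - p) * ((x : ℂ) - q)⁻¹) l (nhds 1) := by
          simpa using ((tendsto_inv_sub_zero q hl).const_mul (q - p)).const_add 1
        refine h2.congr fun x => ?_
        have hx := sub_ofReal_ne hq x
        field_simp
        ring
      simpa using (h1.clog Complex.one_mem_slitPlane).const_mul (p - q)⁻¹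
    rw [integral_of_hasDerivAt_of_tendsto
      (f := fun x : ℝ => (p - q)⁻¹ * Complex.log (((x : ℂ) - p) / ((x : ℂ) - q))) (fun x => ?_)
      (integrable_inv_mul_inv hp hq) (hlim Filter.tendsto_abs_atBot_atTop)
      (hlim Filter.tendsto_abs_atTop_atTop), sub_zero]
    have hxp := sub_ofReal_ne hp x
    have hxq := sub_ofReal_ne hq x
    have hslit : ((x : ℂ) - p) / ((x : ℂ) - q) ∈ Complex.slitPlane := by
      rw [Complex.mem_slitPlane_iff_not_le_zero]
      intro hle
      obtain ⟨hre, him⟩ := Complex.le_def.mp hle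
      have hr : ((x : ℂ) - p) / ((x : ℂ) - q)
          = (((((x : ℂ) - p) / ((x : ℂ) - q)).re : ℝ) : ℂ) :=
        Complex.ext (by simp) (by simpa using him)
      generalize (((x : ℂ) - p) / ((x : ℂ) - q)).re = r at hr hre
      rw [div_eq_iff hxq] at hr
      have h3 := congrArg Complex.im hr
      simp at h3
      simp at hre
      rw [h3] at hpq
      nlinarith [mul_self_nonneg q.im]
    refine ((((hsub p x).fun_div (hsub q x) hxq).clog_real hslit).const_mul (p - q)⁻¹).congr_deriv ?_
    field_simp
    ring

/-! ### Cauchy averages of scalar Möbius functions -/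

lemma cauchy_density_eq {t : ℝ} (ht : 0 < t) (x : ℝ) :
    t / (Real.pi * (t ^ 2 + x ^ 2)) = ProbabilityTheory.cauchyPDFReal 0 t.toNNReal x := by
  rw [ProbabilityTheory.cauchyPDFReal_def]
  have : 0 < t ^ 2 + x ^ 2 := by positivity
  rw [Real.coe_toNNReal t ht.le, sub_zero]
  rw [add_comm (x ^ 2)]
  field_simp

lemma integrable_cauchy_s11 {t : ℝ} (ht : 0 < t) :
    Integrable (fun x : ℝ => t / (Real.pi * (t ^ 2 + x ^ 2))) := by
  simp only [cauchy_density_eq ht]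
  exact ProbabilityTheory.integrable_cauchyPDFReal 0

lemma integral_cauchy {t : ℝ} (ht : 0 < t) :
    ∫ x : ℝ, t / (Real.pi * (t ^ 2 + x ^ 2)) = 1 := by
  simp only [cauchy_density_eq ht]
  refine ProbabilityTheory.integral_cauchyPDFReal_eq_one 0 ?_
  exact (Real.toNNReal_pos.mpr ht).ne'

/-- The Cauchy average of the Möbius function `z / (1 - z g)`, whose pole `1 / g` lies in the upper
half-plane, along the line `z = c x` is its value at the point `-i t |c|` of the lower
half-plane. -/
lemma integral_cauchy_mobius {g : ℂ} (hg : g.im < 0) {c t : ℝ} (hc : c ≠ 0) (ht : 0 < t) :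
    Integrable (fun x : ℝ => (t / (Real.pi * (t ^ 2 + x ^ 2))) •
      (((c * x : ℝ) : ℂ) / (1 - ((c * x : ℝ) : ℂ) * g))) ∧
    ∫ x : ℝ, (t / (Real.pi * (t ^ 2 + x ^ 2))) •
      (((c * x : ℝ) : ℂ) / (1 - ((c * x : ℝ) : ℂ) * g))
      = -(Complex.I * t * |c|) / (1 - -(Complex.I * t * |c|) * g) := by
  have hg0 : g ≠ 0 := by rintro rfl; simp at hg
  have hcC : (c : ℂ) ≠ 0 := by exact_mod_cast hc
  have htC : (t : ℂ) ≠ 0 := by exact_mod_cast ht.ne'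
  have hpi : (Real.pi : ℂ) ≠ 0 := by exact_mod_cast Real.pi_ne_zero
  set p : ℂ := Complex.I * (t * |c| / c : ℝ) with hp
  set q : ℂ := ((c : ℂ) * g)⁻¹ with hq
  have hpim : p.im = t * |c| / c := by simp [hp]
  have hqim : q.im = -g.im / (c * Complex.normSq g) := by
    rw [hq, mul_inv, ← Complex.ofReal_inv, Complex.im_ofReal_mul, Complex.inv_im]
    field_simp
  have hng : 0 < Complex.normSq g := Complex.normSq_pos.mpr hg0
  have hpq : 0 < p.im * q.im := by
    rw [hpim, hqim]
    have : t * |c| / c * (-g.im / (c * Complex.normSq g))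
      = t * |c| * (-g.im) / (c ^ 2 * Complex.normSq g) := by field_simp
    rw [this]
    have : 0 < |c| := abs_pos.mpr hc
    have : 0 < -g.im := by linarith
    positivity
  have hp0 : p.im ≠ 0 := left_ne_zero_of_mul hpq.ne'
  have hq0 : q.im ≠ 0 := right_ne_zero_of_mul hpq.ne'
  have hz0 : Complex.I * t * |c| = c * p := by
    rw [hp]; push_cast; field_simp
  have hp2 : p ^ 2 = -(t : ℂ) ^ 2 := by
    rw [hp, mul_pow, Complex.I_sq, ← Complex.ofReal_pow, div_pow, mul_pow, sq_abs]
    push_cast; field_simp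
  -- a zero of this denominator would force `q = -p`, across the real axis from `p`
  have hD : 1 - -((c : ℂ) * p) * g ≠ 0 := by
    intro h
    have h1 : (((0 : ℝ) : ℂ) - (p + q)) = 0 := by
      have h2 : p + q = 0 := by
        rw [hq]; field_simp; linear_combination h
      simp [h2]
    refine sub_ofReal_ne (p := p + q) ?_ 0 h1
    rw [Complex.add_im]
    rcases mul_pos_iff.mp hpq with h | h
    · linarith [h.1, h.2]
    · exact ne_of_lt (by linarith [h.1, h.2])
  rw [hz0]
  -- the value at `-c p` splits off; the remainder has poles only at `p` and `q`
  have key : ∀ x : ℝ, (t / (Real.pi * (t ^ 2 + x ^ 2))) •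
      (((c * x : ℝ) : ℂ) / (1 - ((c * x : ℝ) : ℂ) * g))
      = (t / (Real.pi * (t ^ 2 + x ^ 2))) • (-((c : ℂ) * p) / (1 - -((c : ℂ) * p) * g))
        + (-(t / (Real.pi * g * (1 - -((c : ℂ) * p) * g)))) *
          (((x : ℂ) - p)⁻¹ * ((x : ℂ) - q)⁻¹) := by
    intro x
    have hxp := sub_ofReal_ne hp0 x
    have hxq := sub_ofReal_ne hq0 x
    have hxp' : (x : ℂ) + p ≠ 0 := by
      have := sub_ofReal_ne (p := -p) (by simpa using hp0) x
      simpa using this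
    have hfac : (t : ℂ) ^ 2 + (x : ℂ) ^ 2 = (x - p) * (x + p) := by
      linear_combination hp2
    have hE : 1 - (c : ℂ) * x * g = -(c * g) * (x - q) := by
      rw [hq]; field_simp; ring
    rw [Complex.real_smul, Complex.real_smul]
    push_cast
    rw [hfac, hE]
    have hqg : (c : ℂ) * g * q = 1 := by rw [hq]; field_simp
    clear_value p q
    generalize hDD : 1 - -((c : ℂ) * p) * g = D at hD ⊢
    field_simp
    linear_combination -p * hqg + (x : ℂ) * hDD
  have hint := (integrable_inv_mul_inv hp0 hq0).const_mul
    (-(t / (Real.pi * g * (1 - -((c : ℂ) * p) * g))))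
  have hint0 := (integrable_cauchy_s11 ht).smul_const (-((c : ℂ) * p) / (1 - -((c : ℂ) * p) * g))
  simp only [key]
  refine ⟨hint0.add hint, ?_⟩
  rw [integral_add hint0 hint, integral_const_mul, integral_inv_mul_inv_eq_zero hpq,
    integral_smul_const, integral_cauchy ht]
  simp

/-! ### Matrices with positive definite imaginary part -/

section Matrix

variable {N : ℕ} {A B : Matrix (Fin N) (Fin N) ℂ}

lemma im_dotProduct_mulVec (hA : A.IsHermitian) (u : Fin N → ℂ) :
    (star u ⬝ᵥ (A + Complex.I • B) *ᵥ u).im = (star u ⬝ᵥ B *ᵥ u).re := by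
  have h := hA.im_star_dotProduct_mulVec_self u
  simp only [RCLike.im_to_complex] at h
  rw [add_mulVec, smul_mulVec, dotProduct_add, dotProduct_smul]
  simp [h]

lemma isUnit_add_I_smul (hA : A.IsHermitian) (hB : B.PosDef) :
    IsUnit (A + Complex.I • B) := by
  rw [← mulVec_injective_iff_isUnit, ← coe_mulVecLin, ← LinearMap.ker_eq_bot,
    LinearMap.ker_eq_bot']
  intro u hu
  by_contra hne
  have h := im_dotProduct_mulVec (B := B) hA u
  rw [mulVecLin_apply] at hu
  rw [hu] at h
  have := (Complex.lt_def.mp (hB.dotProduct_mulVec_pos hne)).1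
  simp at h this
  linarith

/-- With `u = M⁻¹ V` one has `V* M⁻¹ V = u* M* u`, the conjugate of `u* M u`. -/
lemma im_dotProduct_inv_mulVec_neg (hA : A.IsHermitian) (hB : B.PosDef) {V : Fin N → ℂ}
    (hV : V ≠ 0) : (star V ⬝ᵥ (A + Complex.I • B)⁻¹ *ᵥ V).im < 0 := by
  have hM := isUnit_add_I_smul hA hB
  set M := A + Complex.I • B with hMdef
  have hMu : M *ᵥ (M⁻¹ *ᵥ V) = V := by
    rw [mulVec_mulVec, mul_nonsing_inv _ ((isUnit_iff_isUnit_det _).mp hM), one_mulVec]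
  set u := M⁻¹ *ᵥ V with hu
  have hu0 : u ≠ 0 := by
    intro h
    rw [h, mulVec_zero] at hMu
    exact hV hMu.symm
  have h1 : star V ⬝ᵥ u = star (star u ⬝ᵥ M *ᵥ u) := by
    rw [hMu, star_dotProduct]
  have h2 := im_dotProduct_mulVec (B := B) hA u
  have h3 := (Complex.lt_def.mp (hB.dotProduct_mulVec_pos hu0)).1
  rw [h1, Complex.star_def, Complex.conj_im, h2]
  simpa using h3

/-- The Sherman–Morrison formula. -/
lemma inv_sub_smul_vecMulVec {M : Matrix (Fin N) (Fin N) ℂ} (hM : IsUnit M) (V W : Fin N → ℂ)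
    {z : ℂ} (hz : 1 - z * (W ⬝ᵥ M⁻¹ *ᵥ V) ≠ 0) :
    (M - z • vecMulVec V W)⁻¹
      = M⁻¹ + (z / (1 - z * (W ⬝ᵥ M⁻¹ *ᵥ V))) • (M⁻¹ * vecMulVec V W * M⁻¹) := by
  have hMM : M * M⁻¹ = 1 := mul_nonsing_inv _ ((isUnit_iff_isUnit_det _).mp hM)
  apply inv_eq_right_inv
  have h1 : vecMulVec V W * M⁻¹ * vecMulVec V W = (W ⬝ᵥ M⁻¹ *ᵥ V) • vecMulVec V W := by
    rw [Matrix.mul_assoc, mul_vecMulVec, vecMulVec_mul_vecMulVec]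
    ext i j
    simp [vecMulVec_apply]
    ring
  have h2 : vecMulVec V W * (M⁻¹ * vecMulVec V W * M⁻¹)
      = (W ⬝ᵥ M⁻¹ *ᵥ V) • (vecMulVec V W * M⁻¹) := by
    rw [← Matrix.mul_assoc, ← Matrix.mul_assoc, h1, smul_mul]
  have h3 : M * (M⁻¹ * vecMulVec V W * M⁻¹) = vecMulVec V W * M⁻¹ := by
    rw [← Matrix.mul_assoc, ← Matrix.mul_assoc, hMM, Matrix.one_mul]
  rw [sub_mul, mul_add, mul_add, hMM, Matrix.mul_smul, h3, Matrix.smul_mul, Matrix.smul_mul,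
    Matrix.mul_smul, h2]
  generalize W ⬝ᵥ M⁻¹ *ᵥ V = g at hz ⊢
  ext i j
  simp
  field_simp
  ring

end Matrix

theorem stmt11 {N : ℕ} (A B : Matrix (Fin N) (Fin N) ℂ)
    (hA : A.IsHermitian) (hB : B.PosDef) (V : Fin N → ℂ) (c : ℝ) (t : ℝ) (ht : 0 < t) :
    (∀ x : ℝ, IsUnit (A + Complex.I • B - ((c * x : ℝ) : ℂ) • vecMulVec V (star V))) ∧
    IsUnit (A + Complex.I • B + (Complex.I * t * |c|) • vecMulVec V (star V)) ∧
    ∀ a b : Fin N,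
      Integrable (fun x : ℝ => (t / (Real.pi * (t ^ 2 + x ^ 2))) •
        ((A + Complex.I • B - ((c * x : ℝ) : ℂ) • vecMulVec V (star V))⁻¹ a b)) ∧
      ∫ x : ℝ, (t / (Real.pi * (t ^ 2 + x ^ 2))) •
          ((A + Complex.I • B - ((c * x : ℝ) : ℂ) • vecMulVec V (star V))⁻¹ a b)
        = (A + Complex.I • B + (Complex.I * t * |c|) • vecMulVec V (star V))⁻¹ a b := by
  have hP : (vecMulVec V (star V)).PosSemidef := posSemidef_vecMulVec_self_star V
  refine ⟨fun x => ?_, ?_, fun a b => ?_⟩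
  · have hA' : (A - ((c * x : ℝ) : ℂ) • vecMulVec V (star V)).IsHermitian := by
      refine hA.sub ?_
      rw [IsHermitian, conjTranspose_smul, hP.isHermitian.eq, Complex.star_def,
        Complex.conj_ofReal]
    convert isUnit_add_I_smul hA' hB using 1
    abel
  · have h0 : (0 : ℂ) ≤ ((t * |c| : ℝ) : ℂ) := by
      exact_mod_cast mul_nonneg ht.le (abs_nonneg c)
    have hB' : (B + ((t * |c| : ℝ) : ℂ) • vecMulVec V (star V)).PosDef :=
      hB.add_posSemidef (hP.smul h0)
    convert isUnit_add_I_smul hA hB' using 1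
    rw [smul_add, smul_smul, ← add_assoc]
    push_cast
    rw [mul_assoc]
  -- if the perturbation vanishes the integrand is a constant times the density; this case is
  -- separate because `V = 0` gives `g = 0`, and `c x` is not integrable against the density
  · by_cases hdeg : V = 0 ∨ c = 0
    · have hconst : ∀ x : ℝ, ((c * x : ℝ) : ℂ) • vecMulVec V (star V) = 0 := by
        rcases hdeg with rfl | rfl <;> simp
      have hconst' : (Complex.I * t * |c|) • vecMulVec V (star V) = 0 := by
        rcases hdeg with rfl | rfl <;> simp
      simp only [hconst, hconst', sub_zero, add_zero]
      refine ⟨(integrable_cauchy_s11 ht).smul_const _, ?_⟩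
      rw [integral_smul_const, integral_cauchy ht, one_smul]
    · obtain ⟨hV, hc⟩ := not_or.mp hdeg
      have hg := im_dotProduct_inv_mulVec_neg hA hB hV
      have hM := isUnit_add_I_smul hA hB
      set M := A + Complex.I • B
      have hx : ∀ x : ℝ, 1 - ((c * x : ℝ) : ℂ) * (star V ⬝ᵥ M⁻¹ *ᵥ V) ≠ 0 := by
        intro x h
        have hre := congrArg Complex.re h
        have him := congrArg Complex.im h
        rw [Complex.sub_im, Complex.im_ofReal_mul] at him
        rw [Complex.sub_re, Complex.re_ofReal_mul] at hre
        simp only [Complex.one_im, Complex.one_re, Complex.zero_im, Complex.zero_re, zero_sub,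
          neg_eq_zero] at him hre
        rcases mul_eq_zero.mp him with h0 | h0
        · rw [h0] at hre
          simp at hre
        · exact hg.ne h0
      have hy : 1 - -(Complex.I * t * |c|) * (star V ⬝ᵥ M⁻¹ *ᵥ V) ≠ 0 := by
        intro h
        have hre := congrArg Complex.re h
        simp at hre
        nlinarith [mul_nonneg ht.le (abs_nonneg c)]
      obtain ⟨hi, he⟩ := integral_cauchy_mobius hg hc ht
      have hplus : M + (Complex.I * t * |c|) • vecMulVec V (star V)
          = M - (-(Complex.I * t * |c|)) • vecMulVec V (star V) := by
        rw [neg_smul, sub_neg_eq_add]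
      rw [hplus, inv_sub_smul_vecMulVec hM V (star V) hy]
      simp only [inv_sub_smul_vecMulVec hM V (star V) (hx _), Matrix.add_apply, Matrix.smul_apply,
        smul_eq_mul, smul_add]
      simp only [← smul_mul_assoc (_ : ℝ) (_ : ℂ) (_ : ℂ)]
      have hi0 := (integrable_cauchy_s11 ht).smul_const (M⁻¹ a b)
      have hi1 := hi.mul_const ((M⁻¹ * vecMulVec V (star V) * M⁻¹) a b)
      refine ⟨hi0.add hi1, ?_⟩
      rw [integral_add hi0 hi1, integral_mul_const, he, integral_smul_const, integral_cauchy ht,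
        one_smul]

end
end

section
/- Let k ≥ 1 and let π be a partition of {1,…,k}; for ℓ ∈ {1,…,k+1} let B(ℓ) denote the block of π containing ℓ, with B(k+1) := B(1). The quotient of the directed circuit on {1,…,k} by π is the directed multigraph G/π with vertex set π and, for each edge index ℓ ∈ {1,…,k}, an edge from B(ℓ) to B(ℓ+1). Let τ be a partition of the edge-index set {1,…,k} such that the hypergraph H(π,τ) has no cycle. Then there is a partition of {1,…,k} into nonempty sets S_1,…,S_r such that for each j: (a) S_j is contained in a single block of τ, and (b) the edges indexed by S_j form a cycle of G/π, i.e. S_j can be enumerated as ℓ_1,…,ℓ_m with B(ℓ_i + 1) = B(ℓ_{i+1}) for i = 1,…,m (cyclically, with ℓ_{m+1} := ℓ_1) and with the vertices B(ℓ_1),…,B(ℓ_m) pairwise distinct. Consequently τ is admissible: there exists a map c : {1,…,k} → ℕ whose level sets are exactly the blocks of τ and such that for every block J of π and every i ∈ ℕ, #{ ℓ : B(ℓ) = J and c(ℓ) = i } = #{ ℓ : B(ℓ+1) = J and c(ℓ) = i }. -/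
/-!
The idea is to read the circuit `ℓ ↦ ℓ + 1` as an Eulerian circuit of `G/π` and to combine two
facts.

* A finite directed multigraph in which every vertex has equal in- and out-degree is an
  edge-disjoint union of simple cycles (`EdgeBalanced.exists_decomposition`): following successors
  from any edge eventually revisits a vertex, a shortest such return is a simple cycle
  (`EdgeBalanced.exists_simpleCycle`), and deleting it keeps the graph balanced.
* If the hypergraph has no cycle, every simple cycle of `G/π` is `τ`-monochromatic
  (`eq_of_closed_of_not_hasCycle`). For a closed sequence of distinct vertices, a color occurring
  at two steps `i < j` lets the sequence be short-circuited in two ways, through the steps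
  `i+1, …, j` or through the complementary ones; any second color survives in one of the two. By
  descent a non-monochromatic sequence yields one with pairwise distinct colors, that is, a cycle
  of the hypergraph.

Admissibility follows because each simple cycle has as many edges leaving a vertex as entering it,
and, being monochromatic, contributes to a single color only.
-/

noncomputable section

/-- The edge of the hypergraph `H(π,τ)` corresponding to a block `W` of `τ`: the set of
blocks `J` of `π` such that some edge of the quotient graph `G/π` with index in `W`
starts or ends at `J`.  (The quotient of the directed circuit on `{0,…,k-1}` by `π` has
one edge, indexed by `ℓ`, from the block of `ℓ` to the block of `ℓ+1`, cyclically.) -/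
def hedge {k : ℕ} [NeZero k] (s τ : Setoid (Fin k)) (W : Quotient τ) :
    Set (Quotient s) :=
  {J | ∃ ℓ : Fin k, Quotient.mk τ ℓ = W ∧
      (J = Quotient.mk s ℓ ∨ J = Quotient.mk s (ℓ + 1))}

/-- The hypergraph `H(π,τ)` has a cycle: there are `m ≥ 2`, pairwise distinct vertices
`v 0, …, v (m-1)` with `v m = v 0`, and pairwise distinct edges `e 0, …, e (m-1)` such
that `v j, v (j+1) ∈ E (e j)` for all `j < m`. -/
def HypergraphHasCycle {k : ℕ} [NeZero k] (s τ : Setoid (Fin k)) : Prop :=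
  ∃ m : ℕ, 2 ≤ m ∧ ∃ (v : ℕ → Quotient s) (e : ℕ → Quotient τ),
    (∀ i j, i < m → j < m → v i = v j → i = j) ∧ v m = v 0 ∧
    (∀ i j, i < m → j < m → e i = e j → i = j) ∧
    ∀ j, j < m → v j ∈ hedge s τ (e j) ∧ v (j + 1) ∈ hedge s τ (e j)

/-! ### Decomposition of balanced multigraphs into simple cycles -/

/-- Every vertex has as many edges of `T` leaving it as entering it, in the multigraph with source
and target maps `src` and `tgt`. This is expressed by testing against all weights `f` on the
vertices; indicator functions give back the degrees. -/
def EdgeBalanced {E V : Type*} (src tgt : E → V) (T : Finset E) : Prop :=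
  ∀ f : V → ℕ, ∑ x ∈ T, f (src x) = ∑ x ∈ T, f (tgt x)

/-- The edges `seq 0, …, seq (m - 1)` are the elements of `S` and form a directed cycle through
pairwise distinct vertices. Only the source of `seq m` matters, not the edge itself: it records
that the last edge returns to the starting vertex. -/
structure IsSimpleCycle {E V : Type*} [DecidableEq E] (src tgt : E → V) (S : Finset E) (m : ℕ)
    (seq : ℕ → E) : Prop where
  pos : 0 < m
  image : S = (Finset.range m).image seq
  inj : ∀ i j, i < m → j < m → src (seq i) = src (seq j) → i = j
  step : ∀ i, i < m → tgt (seq i) = src (seq (i + 1))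
  closed : src (seq m) = src (seq 0)

section Decomposition

variable {E V : Type*} {src tgt : E → V}

lemma EdgeBalanced.exists_next {T : Finset E} (hT : EdgeBalanced src tgt T) {x : E} (hx : x ∈ T) :
    ∃ y ∈ T, tgt x = src y := by
  classical
  by_contra! hcon
  have h := hT fun w => if w = tgt x then 1 else 0
  have h0 : ∑ y ∈ T, (if src y = tgt x then 1 else 0) = 0 :=
    Finset.sum_eq_zero fun y hy => if_neg fun e => hcon y hy e.symm
  have h1 := Finset.single_le_sum (f := fun y => if tgt y = tgt x then 1 else 0)
    (fun _ _ => Nat.zero_le _) hx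
  simp only [if_true] at h1
  omega

variable [DecidableEq E]

lemma IsSimpleCycle.injOn {S : Finset E} {m : ℕ} {seq : ℕ → E}
    (h : IsSimpleCycle src tgt S m seq) : Set.InjOn seq (Finset.range m) := by
  intro i hi j hj hij
  simp only [Finset.coe_range, Set.mem_Iio] at hi hj
  exact h.inj i j hi hj (by rw [hij])

lemma IsSimpleCycle.mem {S : Finset E} {m : ℕ} {seq : ℕ → E}
    (h : IsSimpleCycle src tgt S m seq) {i : ℕ} (hi : i < m) : seq i ∈ S := by
  rw [h.image]
  exact Finset.mem_image_of_mem _ (Finset.mem_range.2 hi)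

lemma IsSimpleCycle.nonempty {S : Finset E} {m : ℕ} {seq : ℕ → E}
    (h : IsSimpleCycle src tgt S m seq) : S.Nonempty := ⟨seq 0, h.mem h.pos⟩

lemma IsSimpleCycle.balanced {S : Finset E} {m : ℕ} {seq : ℕ → E}
    (h : IsSimpleCycle src tgt S m seq) : EdgeBalanced src tgt S := by
  intro f
  rw [h.image, Finset.sum_image h.injOn, Finset.sum_image h.injOn]
  have h1 : ∑ i ∈ Finset.range m, f (tgt (seq i)) = ∑ i ∈ Finset.range m, f (src (seq (i + 1))) :=
    Finset.sum_congr rfl fun i hi => by rw [h.step i (Finset.mem_range.1 hi)]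
  have h2 := Finset.sum_range_succ (fun i => f (src (seq i))) m
  have h3 := Finset.sum_range_succ' (fun i => f (src (seq i))) m
  have h4 := h.closed
  simp only [h4] at h2 h3
  omega

lemma EdgeBalanced.sdiff {S T : Finset E} (hT : EdgeBalanced src tgt T) (hS : EdgeBalanced src tgt S)
    (hST : S ⊆ T) : EdgeBalanced src tgt (T \ S) := by
  intro f
  have h1 := Finset.sum_sdiff hST (f := fun x => f (src x))
  have h2 := Finset.sum_sdiff hST (f := fun x => f (tgt x))
  have h3 := hT f
  have h4 := hS f
  omega

lemma EdgeBalanced.exists_simpleCycle {T : Finset E} (hT : EdgeBalanced src tgt T) (hne : T.Nonempty) :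
    ∃ S m seq, S ⊆ T ∧ IsSimpleCycle src tgt S m seq := by
  classical
  choose! g hgT hg using fun x (hx : x ∈ T) => hT.exists_next hx
  obtain ⟨x₀, hx₀⟩ := hne
  set x : ℕ → E := fun n => g^[n] x₀ with hxdef
  have hxs : ∀ n, x (n + 1) = g (x n) := fun n => Function.iterate_succ_apply' g n x₀
  have hxT : ∀ n, x n ∈ T := by
    intro n
    induction n with
    | zero => exact hx₀
    | succ n ih => rw [hxs]; exact hgT _ ih
  have hret : ∃ m, 0 < m ∧ ∃ a, src (x (a + m)) = src (x a) := by
    obtain ⟨a, b, hab, he⟩ := Finite.exists_ne_map_eq_of_infinite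
      (fun n => (⟨x n, hxT n⟩ : T))
    have he' : x a = x b := congrArg Subtype.val he
    rcases lt_or_gt_of_ne hab with h | h
    · exact ⟨b - a, by omega, a, by rw [Nat.add_sub_cancel' h.le, he']⟩
    · exact ⟨a - b, by omega, b, by rw [Nat.add_sub_cancel' h.le, he']⟩
  -- The shortest return time makes the vertices visited in between pairwise distinct.
  obtain ⟨hpos, a, ha⟩ := Nat.find_spec hret
  have hmin := fun n (hn : n < Nat.find hret) => Nat.find_min hret hn
  set m := Nat.find hret
  have key : ∀ i j, i < j → j < m → src (x (a + i)) ≠ src (x (a + j)) := by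
    intro i j hij hj he
    refine hmin (j - i) (by omega) ⟨by omega, a + i, ?_⟩
    rw [he]
    congr 2
    omega
  refine ⟨(Finset.range m).image fun i => x (a + i), m, fun i => x (a + i), ?_, hpos, rfl, ?_, ?_, ha⟩
  · intro y hy
    obtain ⟨i, -, rfl⟩ := Finset.mem_image.1 hy
    exact hxT _
  · intro i j hi hj he
    rcases lt_trichotomy i j with h | h | h
    · exact absurd he (key i j h hj)
    · exact h
    · exact absurd he.symm (key j i h hi)
  · intro i _
    change tgt (x (a + i)) = src (x (a + i + 1))
    rw [hxs]
    exact hg _ (hxT _)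

lemma EdgeBalanced.exists_decomposition (T : Finset E) (hT : EdgeBalanced src tgt T) :
    ∃ P : Finset (Finset E), (∀ S ∈ P, ∃ m seq, IsSimpleCycle src tgt S m seq) ∧
      (P : Set (Finset E)).PairwiseDisjoint id ∧ P.biUnion id = T := by
  induction T using Finset.strongInduction with
  | H T ih =>
    rcases T.eq_empty_or_nonempty with rfl | hne
    · exact ⟨∅, by simp, by simp, by simp⟩
    obtain ⟨S, m, seq, hST, hS⟩ := hT.exists_simpleCycle hne
    obtain ⟨P, hP, hdisj, hU⟩ :=
      ih (T \ S) (Finset.sdiff_ssubset hST hS.nonempty) (hT.sdiff hS.balanced hST)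
    refine ⟨insert S P, ?_, ?_, ?_⟩
    · intro S' hS'
      rcases Finset.mem_insert.1 hS' with rfl | h
      · exact ⟨m, seq, hS⟩
      · exact hP S' h
    · rw [Finset.coe_insert]
      refine hdisj.insert fun S' hS' _ => ?_
      have h1 : S' ⊆ T \ S := by
        rw [← hU]
        exact Finset.subset_biUnion_of_mem id hS'
      exact (Finset.disjoint_of_subset_left h1 Finset.sdiff_disjoint).symm
    · rw [Finset.biUnion_insert, hU]
      exact Finset.union_sdiff_of_subset hST

end Decomposition

/-! ### Monochromaticity from the absence of hypergraph cycles -/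

/-- In a hypergraph without cycles, a closed sequence of distinct vertices uses only one hyperedge:
here the hyperedges `e j` are allowed to repeat, and the conclusion is that they all agree. -/
lemma eq_of_closed_of_not_hasCycle {k : ℕ} [NeZero k] {s τ : Setoid (Fin k)}
    (hno : ¬ HypergraphHasCycle s τ) (m : ℕ) :
    ∀ (v : ℕ → Quotient s) (e : ℕ → Quotient τ),
      (∀ i j, i < m → j < m → v i = v j → i = j) → v m = v 0 →
      (∀ j, j < m → v j ∈ hedge s τ (e j) ∧ v (j + 1) ∈ hedge s τ (e j)) →
      ∀ p q, p < m → q < m → e p = e q := by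
  induction m using Nat.strong_induction_on with
  | _ m ih =>
    intro v e hv hclosed hmem p q hp hq
    by_contra hpq
    have hrep : ∃ i j, i < j ∧ j < m ∧ e i = e j := by
      by_contra! hcon
      refine hno ⟨m, ?_, v, e, hv, hclosed, ?_, hmem⟩
      · have : p ≠ q := fun h => hpq (by rw [h])
        omega
      · intro i j hi hj he
        rcases lt_trichotomy i j with h | h | h
        · exact absurd he (hcon i j h hj)
        · exact h
        · exact absurd he.symm (hcon j i h hi)
    obtain ⟨i, j, hij, hj, he⟩ := hrep
    obtain ⟨l, hl, hle⟩ : ∃ l, l < m ∧ e l ≠ e i := by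
      by_cases h : e p = e i
      · exact ⟨q, hq, fun h' => hpq (h.trans h'.symm)⟩
      · exact ⟨p, hp, h⟩
    have hli : l ≠ i := fun h => hle (by rw [h])
    have hlj : l ≠ j := fun h => hle (by rw [h, he])
    by_cases hin : i < l ∧ l < j
    -- The sequence `v (i+1), …, v j`, closed up inside the hyperedge `e j = e i`.
    · have h := ih (j - i) (by omega)
        (fun t => if t = j - i then v (i + 1) else v (i + 1 + t)) (fun t => e (i + 1 + t))
        ?_ ?_ ?_ (l - i - 1) (j - i - 1) (by omega) (by omega)
      · have h1 : i + 1 + (l - i - 1) = l := by omega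
        have h2 : i + 1 + (j - i - 1) = j := by omega
        simp only [h1, h2] at h
        exact hle (h.trans he.symm)
      · intro a b ha hb hab
        simp only [ha.ne, hb.ne, if_false] at hab
        have := hv _ _ (by omega) (by omega) hab
        omega
      · have : (0 : ℕ) ≠ j - i := by omega
        simp [this]
      · intro t ht
        simp only [ht.ne, if_false]
        refine ⟨(hmem _ (by omega)).1, ?_⟩
        split_ifs with h
        · have h1 : i + 1 + t = j := by omega
          rw [h1, ← he]
          exact (hmem i (by omega)).2
        · exact (hmem (i + 1 + t) (by omega)).2
    -- The sequence `v 0, …, v i, v (j+1), …, v m`, with `v i` and `v (j+1)` joined by `e i = e j`.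
    · have h := ih (m - (j - i)) (by omega)
        (fun t => if t ≤ i then v t else v (t + (j - i)))
        (fun t => if t ≤ i then e t else e (t + (j - i)))
        ?_ ?_ ?_ (if l < i then l else l - (j - i)) i (by split_ifs <;> omega) (by omega)
      · simp only [le_refl, if_true] at h
        by_cases hl' : l < i
        · simp only [hl', hl'.le, if_true] at h
          exact hle h
        · have h1 : ¬ l - (j - i) ≤ i := by omega
          have h2 : l - (j - i) + (j - i) = l := by omega
          simp only [hl', h1, h2, if_false] at h
          exact hle h
      · intro a b ha hb hab
        split_ifs at hab <;>
        · have := hv _ _ (by omega) (by omega) hab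
          omega
      · have h1 : ¬ m - (j - i) ≤ i := by omega
        have h2 : m - (j - i) + (j - i) = m := by omega
        simp [h1, h2, hclosed]
      · intro t ht
        rcases lt_trichotomy t i with h | h | h
        · have h1 : t + 1 ≤ i := h
          simp only [h.le, h1, if_true]
          exact hmem t (by omega)
        · subst h
          have h1 : t + 1 + (j - t) = j + 1 := by omega
          simp only [le_refl, if_true, Nat.not_succ_le_self, if_false, h1]
          refine ⟨(hmem t (by omega)).1, ?_⟩
          rw [he]
          exact (hmem j hj).2
        · have h1 : ¬ t ≤ i := by omega
          have h2 : ¬ t + 1 ≤ i := by omega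
          have h3 : t + 1 + (j - i) = t + (j - i) + 1 := by omega
          simp only [h1, h2, if_false, h3]
          exact hmem _ (by omega)

/-! ### Monochromatic cycles and admissibility -/

theorem stmt16 (k : ℕ) [NeZero k] (hk : 1 ≤ k) (s τ : Setoid (Fin k))
    (hnocycle : ¬ HypergraphHasCycle s τ) :
    -- G/π is a disjoint union of τ-monochromatic cycles:
    (∃ (r : ℕ) (S : Fin r → Finset (Fin k)),
      (∀ j, (S j).Nonempty) ∧
      (∀ j₁ j₂, j₁ ≠ j₂ → Disjoint (S j₁) (S j₂)) ∧
      (∀ ℓ : Fin k, ∃ j, ℓ ∈ S j) ∧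
      ∀ j, (∀ ℓ ∈ S j, ∀ ℓ' ∈ S j, τ.r ℓ ℓ') ∧
        ∃ (m : ℕ) (seq : ℕ → Fin k), 0 < m ∧ (S j).card = m ∧
          (∀ i, i < m → seq i ∈ S j) ∧
          -- the vertices (blocks of π) visited are pairwise distinct:
          (∀ i i', i < m → i' < m →
            Quotient.mk s (seq i) = Quotient.mk s (seq i') → i = i') ∧
          -- the edges form a cycle of G/π:
          ∀ i, i < m →
            Quotient.mk s (seq i + 1) = Quotient.mk s (seq ((i + 1) % m))) ∧
    -- consequently τ is admissible:
    ∃ c : Fin k → ℕ, (∀ ℓ ℓ', c ℓ = c ℓ' ↔ τ.r ℓ ℓ') ∧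
      ∀ (J : Quotient s) (i : ℕ),
        Nat.card {ℓ : Fin k // Quotient.mk s ℓ = J ∧ c ℓ = i} =
          Nat.card {ℓ : Fin k // Quotient.mk s (ℓ + 1) = J ∧ c ℓ = i} := by
  classical
  set src : Fin k → Quotient s := fun ℓ => Quotient.mk s ℓ with hsrc
  set tgt : Fin k → Quotient s := fun ℓ => Quotient.mk s (ℓ + 1) with htgt
  have hbal : EdgeBalanced src tgt Finset.univ := fun f =>
    (Equiv.sum_comp (Equiv.addRight (1 : Fin k)) fun ℓ => f (src ℓ)).symm
  obtain ⟨P, hP, hdisj, hU⟩ := hbal.exists_decomposition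
  have hmono : ∀ S ∈ P, ∀ ℓ ∈ S, ∀ ℓ' ∈ S, Quotient.mk τ ℓ = Quotient.mk τ ℓ' := by
    intro S hS ℓ hℓ ℓ' hℓ'
    obtain ⟨m, seq, hc⟩ := hP S hS
    rw [hc.image] at hℓ hℓ'
    obtain ⟨p, hp, rfl⟩ := Finset.mem_image.1 hℓ
    obtain ⟨q, hq, rfl⟩ := Finset.mem_image.1 hℓ'
    refine eq_of_closed_of_not_hasCycle hnocycle m (fun i => src (seq i))
      (fun i => Quotient.mk τ (seq i)) hc.inj hc.closed (fun i hi => ⟨?_, ?_⟩) p q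
      (Finset.mem_range.1 hp) (Finset.mem_range.1 hq)
    · exact ⟨seq i, rfl, Or.inl rfl⟩
    · exact ⟨seq i, rfl, Or.inr (hc.step i hi).symm⟩
  refine ⟨⟨P.card, fun j => (P.equivFin.symm j : Finset (Fin k)), ?_, ?_, ?_, ?_⟩, ?_⟩
  · intro j
    obtain ⟨m, seq, hc⟩ := hP _ (P.equivFin.symm j).2
    exact hc.nonempty
  · intro j₁ j₂ hj
    refine hdisj (P.equivFin.symm j₁).2 (P.equivFin.symm j₂).2 fun h => hj ?_
    exact P.equivFin.symm.injective (Subtype.ext h)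
  · intro ℓ
    have h : ℓ ∈ P.biUnion id := hU ▸ Finset.mem_univ ℓ
    obtain ⟨S, hS, hℓ⟩ := Finset.mem_biUnion.1 h
    exact ⟨P.equivFin ⟨S, hS⟩, by simpa using hℓ⟩
  · intro j
    have hS := (P.equivFin.symm j).2
    refine ⟨fun ℓ hℓ ℓ' hℓ' => Quotient.exact (hmono _ hS ℓ hℓ ℓ' hℓ'), ?_⟩
    obtain ⟨m, seq, hc⟩ := hP _ hS
    refine ⟨m, seq, hc.pos, ?_, fun i hi => hc.mem hi, hc.inj, ?_⟩
    · change (P.equivFin.symm j : Finset (Fin k)).card = m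
      rw [hc.image, Finset.card_image_of_injOn hc.injOn, Finset.card_range]
    · intro i hi
      rcases Nat.lt_or_ge (i + 1) m with h | h
      · rw [Nat.mod_eq_of_lt h]
        exact hc.step i hi
      · have h1 : i + 1 = m := by omega
        rw [h1, Nat.mod_self]
        have h2 := hc.step i hi
        rw [h1] at h2
        exact h2.trans hc.closed
  · refine ⟨fun ℓ => (Fintype.equivFin (Quotient τ) (Quotient.mk τ ℓ) : ℕ), ?_, ?_⟩
    · intro ℓ ℓ'
      rw [Fin.val_inj, (Fintype.equivFin (Quotient τ)).apply_eq_iff_eq]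
      exact Quotient.eq
    · intro J i
      set c : Fin k → ℕ := fun ℓ => (Fintype.equivFin (Quotient τ) (Quotient.mk τ ℓ) : ℕ)
      have hcount : ∀ u : Fin k → Quotient s, Nat.card {ℓ : Fin k // u ℓ = J ∧ c ℓ = i} =
          ∑ S ∈ P, ∑ ℓ ∈ S, if u ℓ = J ∧ c ℓ = i then 1 else 0 := by
        intro u
        have h := Finset.sum_biUnion (f := fun ℓ => if u ℓ = J ∧ c ℓ = i then 1 else 0) hdisj
        simp only [id] at h
        rw [← h]
        rw [hU, Nat.card_eq_fintype_card, Fintype.card_subtype, Finset.card_filter]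
      refine (hcount src).trans (Eq.trans ?_ (hcount tgt).symm)
      refine Finset.sum_congr rfl fun S hS => ?_
      obtain ⟨m, seq, hc⟩ := hP S hS
      obtain ⟨ℓ₀, hℓ₀⟩ := hc.nonempty
      have hcol : ∀ ℓ ∈ S, c ℓ = c ℓ₀ := fun ℓ hℓ => by
        simp only [c, hmono S hS ℓ hℓ ℓ₀ hℓ₀]
      -- The color is constant on `S`, so the condition on it can be made a weight on vertices.
      have hw := hc.balanced fun w => if w = J ∧ c ℓ₀ = i then 1 else 0
      refine Eq.trans (Finset.sum_congr rfl fun ℓ hℓ => ?_)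
        (hw.trans (Finset.sum_congr rfl fun ℓ hℓ => ?_))
      · rw [hcol ℓ hℓ]
      · rw [hcol ℓ hℓ]


end
end
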